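/- arXiv:1504.01225 — 5 statements merged into one kernel-verified Lean document; each statement's English description precedes it below -/
import Mathlib

section
/- For every formal weight x = cβ + n (c, n ∈ ℤ) and every k ∈ ℕ: ∑_{ℓ=0}^{k} (−q)^ℓ·[x−ℓ choose k]·[k choose ℓ] = q^{−kx + k²}, where q^{−kx+k²} = Q^{−kc}·q^{−kn+k²}. -/
noncomputable section

variable {F : Type*}

/-- `q^x` for the formal weight `x = c·β + n`, where `Q` plays the role of `q^β`. -/
def qpow [Field F] (q Q : F) (c n : ℤ) : F := Q ^ c * q ^ n

/-- The quantum number `[x]` for the formal weight `x = c·β + n`. -/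
def qnum [Field F] (q Q : F) (c n : ℤ) : F :=
  (qpow q Q c n - qpow q Q (-c) (-n)) / (q - q⁻¹)

/-- The quantum binomial `[x choose k]` for the formal weight `x = c·β + n`. -/
def qbinom [Field F] (q Q : F) (c n : ℤ) (k : ℕ) : F :=
  (∏ i ∈ Finset.range k, qnum q Q c (n - (i : ℤ))) /
    ∏ i ∈ Finset.range k, qnum q Q 0 ((i : ℤ) + 1)

/-- `[i+1] ≠ 0` since `q` is not a root of unity. -/
theorem qnum_ne [Field F] (q Q : F) (hq : q ≠ 0)
    (hroot : ∀ k : ℕ, k ≠ 0 → q ^ k ≠ 1) (i : ℕ) : qnum q Q 0 ((i : ℤ) + 1) ≠ 0 := by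
  have key : ∀ m : ℕ, q ^ (m + 1) - (q ^ (m + 1))⁻¹ ≠ 0 := by
    intro m h
    have h0 : q ^ (m + 1) ≠ 0 := pow_ne_zero _ hq
    have h1 : q ^ (m + 1) * q ^ (m + 1) = 1 := by
      have h2 := sub_eq_zero.mp h
      nth_rewrite 2 [h2]
      exact mul_inv_cancel₀ h0
    rw [← pow_add] at h1
    exact hroot _ (by omega) h1
  unfold qnum qpow
  have h1 := key 0
  have h2 := key i
  simp only [zero_add, pow_one] at h1
  refine div_ne_zero ?_ h1
  rw [neg_zero, zpow_zero, one_mul, one_mul, zpow_neg]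
  exact_mod_cast h2

/-- The denominators `q - q⁻¹` are nonzero. -/
theorem qsub_ne [Field F] (q : F) (hq : q ≠ 0)
    (hroot : ∀ k : ℕ, k ≠ 0 → q ^ k ≠ 1) : q - q⁻¹ ≠ 0 := by
  intro h
  have := qnum_ne q 1 hq hroot 0
  unfold qnum at this
  rw [h, div_zero] at this
  exact this rfl

theorem qnum_split [Field F] (q Q : F) (hq : q ≠ 0) (hQ : Q ≠ 0) (c n m : ℤ) :
    qnum q Q c n = q ^ m * qnum q Q c (n - m) + qpow q Q (-c) (m - n) * qnum q Q 0 m := by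
  unfold qnum qpow
  simp only [zpow_sub₀ hq, zpow_neg, neg_sub, neg_zero, zpow_zero]
  have h1 : Q ^ c ≠ 0 := zpow_ne_zero _ hQ
  have h2 : q ^ n ≠ 0 := zpow_ne_zero _ hq
  have h3 : q ^ m ≠ 0 := zpow_ne_zero _ hq
  rw [← mul_div_assoc (c := q - q⁻¹), ← mul_div_assoc (c := q - q⁻¹), ← add_div]
  congr 1
  generalize Q ^ c = A at *
  generalize q ^ n = B at *
  generalize q ^ m = C at *
  field_simp
  ring

theorem qnum_split' [Field F] (q Q : F) (hq : q ≠ 0) (hQ : Q ≠ 0) (c n m : ℤ) :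
    qnum q Q c n = q ^ (-m) * qnum q Q c (n - m) + qpow q Q c (n - m) * qnum q Q 0 m := by
  unfold qnum qpow
  simp only [zpow_sub₀ hq, zpow_neg, neg_sub, neg_zero, zpow_zero]
  have h1 : Q ^ c ≠ 0 := zpow_ne_zero _ hQ
  have h2 : q ^ n ≠ 0 := zpow_ne_zero _ hq
  have h3 : q ^ m ≠ 0 := zpow_ne_zero _ hq
  rw [← mul_div_assoc (c := q - q⁻¹), ← mul_div_assoc (c := q - q⁻¹), ← add_div]
  congr 1
  generalize Q ^ c = A at *
  generalize q ^ n = B at *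
  generalize q ^ m = C at *
  field_simp
  ring

/-- Any splitting of the quantum number gives a Pascal rule. -/
theorem qbinom_of_split [Field F] (q Q : F) (hq : q ≠ 0)
    (hroot : ∀ k : ℕ, k ≠ 0 → q ^ k ≠ 1) (c n : ℤ) (k : ℕ) (a b : F)
    (h : qnum q Q c n = a * qnum q Q c (n - ((k : ℤ) + 1)) + b * qnum q Q 0 ((k : ℤ) + 1)) :
    qbinom q Q c n (k + 1) = a * qbinom q Q c (n - 1) (k + 1) + b * qbinom q Q c (n - 1) k := by
  unfold qbinom
  have hP : (∏ i ∈ Finset.range k, qnum q Q 0 ((i : ℤ) + 1)) ≠ 0 :=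
    Finset.prod_ne_zero_iff.mpr fun i _ => qnum_ne q Q hq hroot i
  have hk := qnum_ne q Q hq hroot k
  rw [Finset.prod_range_succ (fun i : ℕ => qnum q Q 0 ((i : ℤ) + 1)),
    Finset.prod_range_succ' (fun i : ℕ => qnum q Q c (n - (i : ℤ))),
    Finset.prod_range_succ (fun i : ℕ => qnum q Q c (n - 1 - (i : ℤ)))]
  have e1 : ∀ i : ℕ, n - ((i + 1 : ℕ) : ℤ) = n - 1 - i := fun i => by push_cast; ring
  have e2 : n - 1 - (k : ℤ) = n - ((k : ℤ) + 1) := by ring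
  have e3 : n - ((0 : ℕ) : ℤ) = n := by simp
  simp only [e1, e3]
  rw [h, e2]
  field_simp

theorem qbinom_self_succ [Field F] (q Q : F) (k : ℕ) : qbinom q Q 0 (k : ℤ) (k + 1) = 0 := by
  unfold qbinom
  rw [Finset.prod_range_succ]
  simp [qnum]

theorem qbinom_zero [Field F] (q Q : F) (c n : ℤ) : qbinom q Q c n 0 = 1 := by
  simp [qbinom]

/-- The recursion for `S(k, z, f) = ∑ z^l [k choose l] f(l)`. -/
theorem sum_rec [Field F] (q Q : F) (hq : q ≠ 0) (hQ : Q ≠ 0)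
    (hroot : ∀ k : ℕ, k ≠ 0 → q ^ k ≠ 1) (k : ℕ) (f : ℕ → F) :
    ∑ l ∈ Finset.range (k + 2), (-q) ^ l * f l * qbinom q Q 0 ((k + 1 : ℕ) : ℤ) l =
      ∑ l ∈ Finset.range (k + 1),
        (-1) ^ l * (f l - q ^ (k + 1) * f (l + 1)) * qbinom q Q 0 (k : ℤ) l := by
  have hp : ∀ l : ℕ, (-q) ^ (l + 1) * f (l + 1) * qbinom q Q 0 ((k + 1 : ℕ) : ℤ) (l + 1) =
      (-1) ^ (l + 1) * f (l + 1) * qbinom q Q 0 (k : ℤ) (l + 1) +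
      (-1) ^ l * (- (q ^ (k + 1) * f (l + 1))) * qbinom q Q 0 (k : ℤ) l := by
    intro l
    rw [qbinom_of_split q Q hq hroot 0 ((k + 1 : ℕ) : ℤ) l _ _ (qnum_split' q Q hq hQ _ _ _)]
    have e : ((k + 1 : ℕ) : ℤ) - 1 = k := by push_cast; ring
    have e2 : q ^ (-((l : ℤ) + 1)) = (q ^ (l + 1))⁻¹ := by
      rw [zpow_neg]; norm_cast
    have e3 : qpow q Q 0 (((k + 1 : ℕ) : ℤ) - ((l : ℤ) + 1)) = q ^ (k + 1) * (q ^ (l + 1))⁻¹ := by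
      unfold qpow
      rw [zpow_sub₀ hq, zpow_zero, one_mul, div_eq_mul_inv]
      norm_cast
    rw [e, e2, e3, neg_pow q]
    have h0 : q ^ (l + 1) ≠ 0 := pow_ne_zero _ hq
    generalize q ^ (l + 1) = A at *
    field_simp
    ring
  rw [Finset.sum_range_succ']
  simp only [hp]
  rw [Finset.sum_add_distrib, add_right_comm]
  have h0 : (-q) ^ 0 * f 0 * qbinom q Q 0 ((k + 1 : ℕ) : ℤ) 0 =
      (-1) ^ 0 * f 0 * qbinom q Q 0 (k : ℤ) 0 := by
    simp [qbinom_zero]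
  rw [h0, ← Finset.sum_range_succ' (fun l : ℕ => (-1) ^ l * f l * qbinom q Q 0 (k : ℤ) l),
    Finset.sum_range_succ, qbinom_self_succ, mul_zero, add_zero, ← Finset.sum_add_distrib]
  refine Finset.sum_congr rfl fun l _ => ?_
  ring

/-- Equation (2.7): `∑_{ℓ=0}^{k} (−q)^ℓ·[x−ℓ choose k]·[k choose ℓ] = q^{−kx + k²}` for a
formal weight `x = c·β + n` and `k ∈ ℕ`. -/
theorem stmt4 [Field F] (q Q : F) (hq : q ≠ 0) (hQ : Q ≠ 0)
    (hroot : ∀ k : ℕ, k ≠ 0 → q ^ k ≠ 1) (c n : ℤ) (k : ℕ) :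
    ∑ l ∈ Finset.range (k + 1),
        (-q) ^ l * qbinom q Q c (n - (l : ℤ)) k * qbinom q Q 0 (k : ℤ) l =
      qpow q Q (-(k : ℤ) * c) (-(k : ℤ) * n + (k : ℤ) ^ 2) := by
  induction k generalizing n with
  | zero => simp [qbinom_zero, qpow]
  | succ k ih =>
    rw [sum_rec q Q hq hQ hroot k (fun l => qbinom q Q c (n - (l : ℤ)) (k + 1))]
    have hl : ∀ l : ℕ, (-1) ^ l * (qbinom q Q c (n - (l : ℤ)) (k + 1) -
        q ^ (k + 1) * qbinom q Q c (n - ((l + 1 : ℕ) : ℤ)) (k + 1)) * qbinom q Q 0 (k : ℤ) l =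
        qpow q Q (-c) ((k : ℤ) + 1 - n) *
          ((-q) ^ l * qbinom q Q c (n - 1 - (l : ℤ)) k * qbinom q Q 0 (k : ℤ) l) := by
      intro l
      rw [qbinom_of_split q Q hq hroot c (n - (l : ℤ)) k _ _ (qnum_split q Q hq hQ _ _ _)]
      have e1 : n - ((l + 1 : ℕ) : ℤ) = n - 1 - l := by push_cast; ring
      have e2 : n - (l : ℤ) - 1 = n - 1 - l := by ring
      have e3 : q ^ ((k : ℤ) + 1) = q ^ (k + 1) := by norm_cast
      have e4 : qpow q Q (-c) ((k : ℤ) + 1 - (n - (l : ℤ))) =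
          qpow q Q (-c) ((k : ℤ) + 1 - n) * q ^ l := by
        unfold qpow
        rw [mul_assoc, ← zpow_natCast q l, ← zpow_add₀ hq]
        congr 2
        ring
      rw [e1, e2, e3, e4, neg_pow q]
      ring
    simp only [hl]
    rw [← Finset.mul_sum, ih (n - 1)]
    unfold qpow
    rw [mul_mul_mul_comm, ← zpow_add₀ hQ, ← zpow_add₀ hq]
    congr 2 <;> push_cast <;> ring
end
end

section
/- The operator 𝓡 satisfies the braid relation on (V₁⊗V₂) ⊗ (V₁⊗V₂) ⊗ (V₁⊗V₂): (𝓡 ⊗ id) ∘ (id ⊗ 𝓡) ∘ (𝓡 ⊗ id) = (id ⊗ 𝓡) ∘ (𝓡 ⊗ id) ∘ (id ⊗ 𝓡). -/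
noncomputable section

/-- The matrix (in the standard basis of `W ⊗ W`, `W` having basis `u_1, …, u_N` indexed by
`Fin N` with parity `0` for the first `t` indices and `1` for the rest) of the braiding `Ř`
of the vector representation of `U_q(gl(t|N−t))`. -/
def Rmat (F : Type*) [Field F] (q : F) (t N : ℕ) :
    Matrix (Fin N × Fin N) (Fin N × Fin N) F :=
  Matrix.of fun out inp =>
    if inp.1 = inp.2 then
      (if (inp.1 : ℕ) < t then q⁻¹ else -q) * (if out = inp then 1 else 0)
    else
      (if t ≤ (inp.1 : ℕ) ∧ t ≤ (inp.2 : ℕ) then (-1 : F) else 1) *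
          (if out = (inp.2, inp.1) then 1 else 0) +
        (if inp.2 < inp.1 then (q⁻¹ - q) * (if out = inp then 1 else 0) else 0)

/-- The sign `(−1)^{|a|·|b|}` for an index `a` of `V₁` (parity `1` iff `m ≤ a`) and an
index `b` of `V₂` (parity `1` iff `k ≤ b`). -/
def sgn12 (F : Type*) [Field F] (m k : ℕ) {N₁ N₂ : ℕ} (a : Fin N₁) (b : Fin N₂) : F :=
  if m ≤ (a : ℕ) ∧ k ≤ (b : ℕ) then -1 else 1

/-- The matrix of the operator `𝓡 = σ₂₃ ∘ (Ř₁ ⊗ Ř₂) ∘ σ₂₃⁻¹` on `(V₁⊗V₂) ⊗ (V₁⊗V₂)`,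
where `V₁ = ℂ_q^{m|n}` has dimension `N₁ = m+n`, `V₂ = ℂ_q^{k|l}` has dimension
`N₂ = k+l`, and `σ₂₃(x_a ⊗ x_{a'} ⊗ y_b ⊗ y_{b'}) = (−1)^{|a'||b|}·x_a ⊗ y_b ⊗ x_{a'} ⊗
y_{b'}` is the superpermutation of the middle factors.  Basis vectors of
`(V₁⊗V₂) ⊗ (V₁⊗V₂)` are indexed by `((a,b),(a',b'))`. -/
def Rcal (F : Type*) [Field F] (q : F) (m N₁ k N₂ : ℕ) :
    Matrix ((Fin N₁ × Fin N₂) × (Fin N₁ × Fin N₂)) ((Fin N₁ × Fin N₂) × (Fin N₁ × Fin N₂))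
      F :=
  Matrix.of fun out inp =>
    sgn12 F m k inp.2.1 inp.1.2 * sgn12 F m k out.2.1 out.1.2 *
      (Rmat F q m N₁ (out.1.1, out.2.1) (inp.1.1, inp.2.1) *
        Rmat F q k N₂ (out.1.2, out.2.2) (inp.1.2, inp.2.2))

/-- The matrix of `𝓡 ⊗ id` on `(V₁⊗V₂) ⊗ (V₁⊗V₂) ⊗ (V₁⊗V₂)`. -/
def Rcal12 (F : Type*) [Field F] (q : F) (m N₁ k N₂ : ℕ) :
    Matrix ((Fin N₁ × Fin N₂) × (Fin N₁ × Fin N₂) × (Fin N₁ × Fin N₂))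
      ((Fin N₁ × Fin N₂) × (Fin N₁ × Fin N₂) × (Fin N₁ × Fin N₂)) F :=
  Matrix.of fun out inp =>
    Rcal F q m N₁ k N₂ (out.1, out.2.1) (inp.1, inp.2.1) *
      (if out.2.2 = inp.2.2 then 1 else 0)

/-- The matrix of `id ⊗ 𝓡` on `(V₁⊗V₂) ⊗ (V₁⊗V₂) ⊗ (V₁⊗V₂)`. -/
def Rcal23 (F : Type*) [Field F] (q : F) (m N₁ k N₂ : ℕ) :
    Matrix ((Fin N₁ × Fin N₂) × (Fin N₁ × Fin N₂) × (Fin N₁ × Fin N₂))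
      ((Fin N₁ × Fin N₂) × (Fin N₁ × Fin N₂) × (Fin N₁ × Fin N₂)) F :=
  Matrix.of fun out inp =>
    (if out.1 = inp.1 then 1 else 0) *
      Rcal F q m N₁ k N₂ (out.2.1, out.2.2) (inp.2.1, inp.2.2)

namespace BraidAux

open scoped Matrix

/-- Off-diagonal coefficient. -/
def al (F : Type*) [Field F] (t N : ℕ) (a b : Fin N) : F :=
  if a = b then 0 else if t ≤ (a : ℕ) ∧ t ≤ (b : ℕ) then -1 else 1

/-- Diagonal coefficient. -/
def be (F : Type*) [Field F] (q : F) (t N : ℕ) (a b : Fin N) : F :=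
  if a = b then (if (a : ℕ) < t then q⁻¹ else -q) else if b < a then q⁻¹ - q else 0

theorem Rmat_eq (F : Type*) [Field F] (q : F) (t N : ℕ) (o i : Fin N × Fin N) :
    Rmat F q t N o i = al F t N i.1 i.2 * (if o = (i.2, i.1) then 1 else 0) +
      be F q t N i.1 i.2 * (if o = i then 1 else 0) := by
  simp only [Rmat, al, be, Matrix.of_apply]
  by_cases h : i.1 = i.2
  · simp [h]
  · by_cases h2 : i.2 < i.1 <;> simp [h, h2]

def R12 (F : Type*) [Field F] (q : F) (t N : ℕ) :
    Matrix (Fin N × Fin N × Fin N) (Fin N × Fin N × Fin N) F :=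
  Matrix.of fun o i => Rmat F q t N (o.1, o.2.1) (i.1, i.2.1) *
    (if o.2.2 = i.2.2 then 1 else 0)

def R23 (F : Type*) [Field F] (q : F) (t N : ℕ) :
    Matrix (Fin N × Fin N × Fin N) (Fin N × Fin N × Fin N) F :=
  Matrix.of fun o i => (if o.1 = i.1 then 1 else 0) *
    Rmat F q t N (o.2.1, o.2.2) (i.2.1, i.2.2)

def ee (F : Type*) [Field F] {N : ℕ} (a b c : Fin N) : Fin N × Fin N × Fin N → F :=
  Pi.single (a, b, c) 1

theorem R12_ee (F : Type*) [Field F] (q : F) (t N : ℕ) (a b c : Fin N) :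
    R12 F q t N *ᵥ ee F a b c =
      al F t N a b • ee F b a c + be F q t N a b • ee F a b c := by
  ext ⟨x, y, z⟩
  simp only [ee, Matrix.mulVec_single_one, R12, Matrix.col_apply, Matrix.of_apply, Rmat_eq,
    Pi.add_apply, Pi.smul_apply, Pi.single_apply, smul_eq_mul, Prod.mk.injEq]
  by_cases h : z = c <;> simp [h]

theorem R23_ee (F : Type*) [Field F] (q : F) (t N : ℕ) (a b c : Fin N) :
    R23 F q t N *ᵥ ee F a b c =
      al F t N b c • ee F a c b + be F q t N b c • ee F a b c := by
  ext ⟨x, y, z⟩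
  simp only [ee, Matrix.mulVec_single_one, R23, Matrix.col_apply, Matrix.of_apply, Rmat_eq,
    Pi.add_apply, Pi.smul_apply, Pi.single_apply, smul_eq_mul, Prod.mk.injEq]
  by_cases h : x = a <;> simp [h]

theorem al_symm (F : Type*) [Field F] (t N : ℕ) (a b : Fin N) :
    al F t N a b = al F t N b a := by
  unfold al; simp only [eq_comm, and_comm]

theorem al_sq (F : Type*) [Field F] (t N : ℕ) (a b : Fin N) (h : a ≠ b) :
    al F t N a b * al F t N a b = 1 := by
  unfold al; rw [if_neg h]; split_ifs <;> simp

theorem al_self (F : Type*) [Field F] (t N : ℕ) (a : Fin N) :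
    al F t N a a = 0 := by
  simp [al]

theorem be_lt (F : Type*) [Field F] (q : F) (t N : ℕ) (a b : Fin N) (h : a < b) :
    be F q t N a b = 0 := by
  simp [be, h.ne, h.not_gt]

theorem be_gt (F : Type*) [Field F] (q : F) (t N : ℕ) (a b : Fin N) (h : b < a) :
    be F q t N a b = q⁻¹ - q := by
  simp [be, h.ne', h]

theorem be_self (F : Type*) [Field F] (q : F) (hq : q ≠ 0) (t N : ℕ) (a : Fin N) :
    be F q t N a a * be F q t N a a = 1 + (q⁻¹ - q) * be F q t N a a := by
  simp only [be, if_true]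
  split_ifs <;> field_simp <;> ring

theorem braid_ee (F : Type*) [Field F] (q : F) (hq : q ≠ 0) (t N : ℕ) (a b c : Fin N) :
    R12 F q t N *ᵥ (R23 F q t N *ᵥ (R12 F q t N *ᵥ ee F a b c)) =
    R23 F q t N *ᵥ (R12 F q t N *ᵥ (R23 F q t N *ᵥ ee F a b c)) := by
  simp only [R12_ee, R23_ee, Matrix.mulVec_add, Matrix.mulVec_smul]
  have s1 := al_symm F t N b a
  have s2 := al_symm F t N c a
  have s3 := al_symm F t N c b
  have d1 := be_self F q hq t N a
  have d2 := be_self F q hq t N b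
  have d3 := be_self F q hq t N c
  have g1 := be_gt F q t N
  have g2 := be_lt F q t N
  have g3 := al_self F t N
  have g4 := al_sq F t N
  rw [s1, s3]
  generalize q⁻¹ - q = r at *
  rcases lt_trichotomy a b with h1 | h1 | h1 <;>
  rcases lt_trichotomy b c with h2 | h2 | h2 <;>
  rcases lt_trichotomy a c with h3 | h3 | h3 <;>
  first
  | (exfalso; omega)
  | (subst_vars; simp (disch := first | assumption | omega) only [g1, g2, g3]; done)
  | (subst_vars
     simp (disch := first | assumption | omega) only [g1, g2, g3]
     simp only [zero_smul, add_zero, zero_add, smul_zero]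
     try have k1 := g4 a b (by omega)
     try have k2 := g4 a c (by omega)
     try have k3 := g4 b c (by omega)
     clear g1 g2 g3 g4
     match_scalars <;> grind)

theorem braid (F : Type*) [Field F] (q : F) (hq : q ≠ 0) (t N : ℕ) :
    R12 F q t N * R23 F q t N * R12 F q t N = R23 F q t N * R12 F q t N * R23 F q t N := by
  apply Matrix.ext_of_mulVec_single
  rintro ⟨a, b, c⟩
  have := braid_ee F q hq t N a b c
  simpa only [Matrix.mulVec_mulVec, ← Matrix.mul_assoc, ee] using this

/-- Total sign. -/
def SS (F : Type*) [Field F] (m k : ℕ) {N₁ N₂ : ℕ}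
    (o : (Fin N₁ × Fin N₂) × (Fin N₁ × Fin N₂) × (Fin N₁ × Fin N₂)) : F :=
  sgn12 F m k o.2.1.1 o.1.2 * sgn12 F m k o.2.2.1 o.1.2 * sgn12 F m k o.2.2.1 o.2.1.2

theorem sgn_sq (F : Type*) [Field F] (m k : ℕ) {N₁ N₂ : ℕ} (a : Fin N₁) (b : Fin N₂) :
    sgn12 F m k a b * sgn12 F m k a b = 1 := by
  unfold sgn12; split_ifs <;> simp

theorem SS_sq (F : Type*) [Field F] (m k : ℕ) {N₁ N₂ : ℕ}
    (o : (Fin N₁ × Fin N₂) × (Fin N₁ × Fin N₂) × (Fin N₁ × Fin N₂)) :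
    SS F m k o * SS F m k o = 1 := by
  unfold SS
  linear_combination
    (sgn12 F m k o.2.2.1 o.1.2)^2 * (sgn12 F m k o.2.2.1 o.2.1.2)^2 *
      sgn_sq F m k o.2.1.1 o.1.2 +
    (sgn12 F m k o.2.2.1 o.2.1.2)^2 * sgn_sq F m k o.2.2.1 o.1.2 +
    sgn_sq F m k o.2.2.1 o.2.1.2

def cj (F : Type*) [Field F] (m k : ℕ) {N₁ N₂ : ℕ}
    (A : Matrix (Fin N₁ × Fin N₁ × Fin N₁) (Fin N₁ × Fin N₁ × Fin N₁) F)
    (B : Matrix (Fin N₂ × Fin N₂ × Fin N₂) (Fin N₂ × Fin N₂ × Fin N₂) F) :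
    Matrix ((Fin N₁ × Fin N₂) × (Fin N₁ × Fin N₂) × (Fin N₁ × Fin N₂))
      ((Fin N₁ × Fin N₂) × (Fin N₁ × Fin N₂) × (Fin N₁ × Fin N₂)) F :=
  Matrix.of fun o i => SS F m k o * SS F m k i *
    (A (o.1.1, o.2.1.1, o.2.2.1) (i.1.1, i.2.1.1, i.2.2.1) *
     B (o.1.2, o.2.1.2, o.2.2.2) (i.1.2, i.2.1.2, i.2.2.2))

/-- Regrouping the indices. -/
def eqv (α β : Type*) : (α × β) × (α × β) × (α × β) ≃ (α × α × α) × (β × β × β) where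
  toFun o := ((o.1.1, o.2.1.1, o.2.2.1), (o.1.2, o.2.1.2, o.2.2.2))
  invFun p := ((p.1.1, p.2.1), (p.1.2.1, p.2.2.1), (p.1.2.2, p.2.2.2))
  left_inv _ := rfl
  right_inv _ := rfl

theorem cj_mul (F : Type*) [Field F] (m k : ℕ) {N₁ N₂ : ℕ}
    (A C : Matrix (Fin N₁ × Fin N₁ × Fin N₁) (Fin N₁ × Fin N₁ × Fin N₁) F)
    (B D : Matrix (Fin N₂ × Fin N₂ × Fin N₂) (Fin N₂ × Fin N₂ × Fin N₂) F) :
    cj F m k A B * cj F m k C D = cj F m k (A * C) (B * D) := by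
  ext o i
  simp only [cj, Matrix.mul_apply, Matrix.of_apply]
  rw [Finset.sum_mul_sum, ← Fintype.sum_prod_type', Finset.mul_sum]
  apply Fintype.sum_equiv (eqv (Fin N₁) (Fin N₂))
  intro x
  simp only [eqv, Equiv.coe_fn_mk]
  linear_combination (SS F m k o * SS F m k i *
    (A (o.1.1, o.2.1.1, o.2.2.1) (x.1.1, x.2.1.1, x.2.2.1) *
     B (o.1.2, o.2.1.2, o.2.2.2) (x.1.2, x.2.1.2, x.2.2.2)) *
    (C (x.1.1, x.2.1.1, x.2.2.1) (i.1.1, i.2.1.1, i.2.2.1) *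
     D (x.1.2, x.2.1.2, x.2.2.2) (i.1.2, i.2.1.2, i.2.2.2))) * SS_sq F m k x

theorem Rmat_supp (F : Type*) [Field F] (q : F) (t N : ℕ) (a b c d : Fin N)
    (h : Rmat F q t N (a, b) (c, d) ≠ 0) : (a = c ∧ b = d) ∨ (a = d ∧ b = c) := by
  rw [Rmat_eq] at h
  by_contra hh
  push Not at hh
  apply h
  rw [if_neg, if_neg] <;> simp only [Prod.mk.injEq] <;> grind

theorem Rcal12_eq (F : Type*) [Field F] (q : F) (m N₁ k N₂ : ℕ) :
    Rcal12 F q m N₁ k N₂ = cj F m k (R12 F q m N₁) (R12 F q k N₂) := by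
  ext ⟨⟨a1, b1⟩, ⟨a2, b2⟩, ⟨a3, b3⟩⟩ ⟨⟨a1', b1'⟩, ⟨a2', b2'⟩, ⟨a3', b3'⟩⟩
  simp only [Rcal12, cj, R12, Rcal, SS, Matrix.of_apply, Prod.mk.injEq]
  by_cases h3 : a3 = a3'
  swap
  · simp [h3]
  by_cases h4 : b3 = b3'
  swap
  · simp [h4]
  subst h3 h4
  by_cases hB : Rmat F q k N₂ (b1, b2) (b1', b2') = 0
  · simp [hB]
  have e1 := sgn_sq F m k a3 b1
  have e2 := sgn_sq F m k a3 b2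
  simp only [and_self, if_true, mul_one]
  have key : sgn12 F m k a3 b1 * sgn12 F m k a3 b2 *
      (sgn12 F m k a3 b1' * sgn12 F m k a3 b2') = 1 := by
    rcases Rmat_supp F q k N₂ _ _ _ _ hB with ⟨rfl, rfl⟩ | ⟨rfl, rfl⟩ <;> grind
  linear_combination (-(sgn12 F m k a2' b1' * sgn12 F m k a2 b1 *
    (Rmat F q m N₁ (a1, a2) (a1', a2') * Rmat F q k N₂ (b1, b2) (b1', b2')))) * key

theorem Rcal23_eq (F : Type*) [Field F] (q : F) (m N₁ k N₂ : ℕ) :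
    Rcal23 F q m N₁ k N₂ = cj F m k (R23 F q m N₁) (R23 F q k N₂) := by
  ext ⟨⟨a1, b1⟩, ⟨a2, b2⟩, ⟨a3, b3⟩⟩ ⟨⟨a1', b1'⟩, ⟨a2', b2'⟩, ⟨a3', b3'⟩⟩
  simp only [Rcal23, cj, R23, Rcal, SS, Matrix.of_apply, Prod.mk.injEq]
  by_cases h3 : a1 = a1'
  swap
  · simp [h3]
  by_cases h4 : b1 = b1'
  swap
  · simp [h4]
  subst h3 h4
  by_cases hA : Rmat F q m N₁ (a2, a3) (a2', a3') = 0
  · simp [hA]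
  have e1 := sgn_sq F m k a2 b1
  have e2 := sgn_sq F m k a3 b1
  simp only [and_self, if_true, one_mul]
  have key : sgn12 F m k a2 b1 * sgn12 F m k a3 b1 *
      (sgn12 F m k a2' b1 * sgn12 F m k a3' b1) = 1 := by
    rcases Rmat_supp F q m N₁ _ _ _ _ hA with ⟨rfl, rfl⟩ | ⟨rfl, rfl⟩ <;> grind
  linear_combination (-(sgn12 F m k a3' b2' * sgn12 F m k a3 b2 *
    (Rmat F q m N₁ (a2, a3) (a2', a3') * Rmat F q k N₂ (b2, b3) (b2', b3')))) * key

end BraidAux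

/-- The operator `𝓡` satisfies the braid relation
`(𝓡 ⊗ id) ∘ (id ⊗ 𝓡) ∘ (𝓡 ⊗ id) = (id ⊗ 𝓡) ∘ (𝓡 ⊗ id) ∘ (id ⊗ 𝓡)` on
`(V₁⊗V₂) ⊗ (V₁⊗V₂) ⊗ (V₁⊗V₂)`. -/
theorem stmt8 (F : Type*) [Field F] (q : F) (hq : q ≠ 0)
    (m n k l : ℕ) (hmn : 1 ≤ m + n) (hkl : 1 ≤ k + l) :
    Matrix.toLin' (Rcal12 F q m (m + n) k (k + l)) ∘ₗ
        Matrix.toLin' (Rcal23 F q m (m + n) k (k + l)) ∘ₗ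
        Matrix.toLin' (Rcal12 F q m (m + n) k (k + l)) =
      Matrix.toLin' (Rcal23 F q m (m + n) k (k + l)) ∘ₗ
        Matrix.toLin' (Rcal12 F q m (m + n) k (k + l)) ∘ₗ
        Matrix.toLin' (Rcal23 F q m (m + n) k (k + l)) := by
  rw [← Matrix.toLin'_mul, ← Matrix.toLin'_mul, ← Matrix.toLin'_mul, ← Matrix.toLin'_mul,
    ← Matrix.mul_assoc, ← Matrix.mul_assoc]
  simp only [BraidAux.Rcal12_eq, BraidAux.Rcal23_eq, BraidAux.cj_mul, BraidAux.braid F q hq]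
end
end

section
/- Assume in addition that q⁴ ≠ 1. Then the operator 𝓡 satisfies the cubic relation (𝓡 − q^{-2}·id) ∘ (𝓡 − q^{2}·id) ∘ (𝓡 + id) = 0 on (V₁⊗V₂) ⊗ (V₁⊗V₂). -/
noncomputable section

theorem Rmat_sq (F : Type*) [Field F] (q : F) (hq : q ≠ 0) (t N : ℕ) :
    Rmat F q t N * Rmat F q t N = 1 + (q⁻¹ - q) • Rmat F q t N := by
  ext ⟨a, b⟩ ⟨c, d⟩
  rw [Matrix.mul_apply]
  by_cases h : c = d
  · subst h
    have : ∀ x : Fin N × Fin N, Rmat F q t N (a, b) x * Rmat F q t N x (c, c) =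
        if x = (c, c) then Rmat F q t N (a, b) (c, c) * (if (c : ℕ) < t then q⁻¹ else -q)
          else 0 := by
      intro x
      by_cases hx : x = (c, c)
      · subst hx; simp [Rmat]
      · simp [Rmat, hx]
    rw [Finset.sum_congr rfl (fun x _ => this x), Finset.sum_ite_eq' ]
    simp only [Finset.mem_univ, if_true, Matrix.add_apply, Matrix.smul_apply, Matrix.one_apply,
      Rmat, Matrix.of_apply, smul_eq_mul]
    by_cases h2 : (a, b) = (c, c) <;> by_cases h3 : (c : ℕ) < t <;> simp [h2, h3] <;>
      field_simp <;> ring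
  · have h' : d ≠ c := fun e => h e.symm
    have : ∀ x : Fin N × Fin N, Rmat F q t N (a, b) x * Rmat F q t N x (c, d) =
        (if x = (d, c) then Rmat F q t N (a, b) (d, c) *
          (if t ≤ (c : ℕ) ∧ t ≤ (d : ℕ) then (-1 : F) else 1) else 0) +
        (if x = (c, d) then Rmat F q t N (a, b) (c, d) *
          (if d < c then (q⁻¹ - q) else 0) else 0) := by
      intro x
      have e : Rmat F q t N x (c, d) =
        (if t ≤ (c : ℕ) ∧ t ≤ (d : ℕ) then (-1 : F) else 1) *
          (if x = (d, c) then 1 else 0) +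
        (if d < c then (q⁻¹ - q) * (if x = (c, d) then 1 else 0) else 0) := by
        simp [Rmat, h]
      rw [e, mul_add]
      congr 1
      · by_cases hx : x = (d, c)
        · subst hx; simp
        · simp [hx]
      · by_cases hx : x = (c, d)
        · subst hx; simp
        · simp [hx]
    rw [Finset.sum_congr rfl (fun x _ => this x), Finset.sum_add_distrib,
      Finset.sum_ite_eq', Finset.sum_ite_eq']
    simp only [Finset.mem_univ, if_true, Matrix.add_apply, Matrix.smul_apply, Matrix.one_apply,
      Rmat, Matrix.of_apply, smul_eq_mul, h, h', if_false]
    have hs : ((if t ≤ (d : ℕ) ∧ t ≤ (c : ℕ) then (-1 : F) else 1)) =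
        (if t ≤ (c : ℕ) ∧ t ≤ (d : ℕ) then (-1 : F) else 1) := by
      simp only [and_comm]
    rw [hs]
    have hs2 : (if t ≤ (c : ℕ) ∧ t ≤ (d : ℕ) then (-1 : F) else 1) *
      (if t ≤ (c : ℕ) ∧ t ≤ (d : ℕ) then (-1 : F) else 1) = 1 := by
      split_ifs <;> simp
    generalize (if t ≤ (c : ℕ) ∧ t ≤ (d : ℕ) then (-1 : F) else 1) = s at hs2 ⊢
    rcases lt_or_gt_of_ne h with hl | hl
    · simp only [hl, not_lt_of_gt hl, if_true, if_false]
      linear_combination (if (a, b) = (c, d) then (1 : F) else 0) * hs2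
    · simp only [hl, not_lt_of_gt hl, if_true, if_false]
      linear_combination (if (a, b) = (c, d) then (1 : F) else 0) * hs2

/-- Signed Kronecker product. -/
def Phi (F : Type*) [Field F] (m N₁ k N₂ : ℕ)
    (A : Matrix (Fin N₁ × Fin N₁) (Fin N₁ × Fin N₁) F)
    (B : Matrix (Fin N₂ × Fin N₂) (Fin N₂ × Fin N₂) F) :
    Matrix ((Fin N₁ × Fin N₂) × (Fin N₁ × Fin N₂)) ((Fin N₁ × Fin N₂) × (Fin N₁ × Fin N₂))
      F :=
  Matrix.of fun out inp =>
    sgn12 F m k inp.2.1 inp.1.2 * sgn12 F m k out.2.1 out.1.2 *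
      (A (out.1.1, out.2.1) (inp.1.1, inp.2.1) * B (out.1.2, out.2.2) (inp.1.2, inp.2.2))

theorem sgn12_sq (F : Type*) [Field F] (m k : ℕ) {N₁ N₂ : ℕ} (a : Fin N₁) (b : Fin N₂) :
    sgn12 F m k a b * sgn12 F m k a b = 1 := by
  unfold sgn12; split_ifs <;> simp

theorem Phi_mul (F : Type*) [Field F] (m N₁ k N₂ : ℕ)
    (A A' : Matrix (Fin N₁ × Fin N₁) (Fin N₁ × Fin N₁) F)
    (B B' : Matrix (Fin N₂ × Fin N₂) (Fin N₂ × Fin N₂) F) :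
    Phi F m N₁ k N₂ A B * Phi F m N₁ k N₂ A' B' = Phi F m N₁ k N₂ (A * A') (B * B') := by
  ext x z
  simp only [Matrix.mul_apply, Phi, Matrix.of_apply]
  rw [Finset.sum_mul_sum, Finset.mul_sum]
  simp_rw [Finset.mul_sum]
  rw [← Finset.sum_product', Finset.univ_product_univ]
  refine Fintype.sum_equiv (Equiv.prodProdProdComm _ _ _ _) _ _ ?_
  rintro ⟨⟨a, b⟩, ⟨a', b'⟩⟩
  simp only [Equiv.prodProdProdComm_apply]
  linear_combination (sgn12 F m k z.2.1 z.1.2 * sgn12 F m k x.2.1 x.1.2 *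
    (A (x.1.1, x.2.1) (a, a') * B (x.1.2, x.2.2) (b, b')) *
    (A' (a, a') (z.1.1, z.2.1) * B' (b, b') (z.1.2, z.2.2))) * sgn12_sq F m k a' b

theorem Phi_one (F : Type*) [Field F] (m N₁ k N₂ : ℕ) : Phi F m N₁ k N₂ 1 1 = 1 := by
  ext ⟨⟨a, b⟩, ⟨a', b'⟩⟩ ⟨⟨c, d⟩, ⟨c', d'⟩⟩
  simp only [Phi, Matrix.of_apply, Matrix.one_apply, Prod.mk.injEq]
  by_cases h1 : a = c <;> by_cases h2 : b = d <;> by_cases h3 : a' = c' <;>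
    by_cases h4 : b' = d' <;> simp [h1, h2, h3, h4, sgn12_sq]

theorem cubic_aux {F M : Type*} [Field F] [Ring M] [Algebra F M] (q : F) (hq : q ≠ 0)
    (A B : M) (hAB : A * B = B * A) (hA : A * A = 1 + (q⁻¹ - q) • A)
    (hB : B * B = 1 + (q⁻¹ - q) • B) :
    (A * B - (q⁻¹) ^ 2 • 1) * ((A * B - q ^ 2 • 1) * (A * B + 1)) = 0 := by
  have hT2 : A * B * (A * B) = 1 + (q⁻¹ - q) • A + (q⁻¹ - q) • B +
      ((q⁻¹ - q) * (q⁻¹ - q)) • (A * B) := by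
    calc A * B * (A * B) = (A * A) * (B * B) := by
          rw [mul_assoc, ← mul_assoc B, ← hAB]; simp only [mul_assoc]
      _ = _ := by
          rw [hA, hB]
          simp only [add_mul, mul_add, one_mul, mul_one, smul_mul_assoc, mul_smul_comm, smul_smul]
          module
  have hTA : A * B * A = B + (q⁻¹ - q) • (A * B) := by
    rw [mul_assoc, ← hAB, ← mul_assoc, hA, add_mul, one_mul, smul_mul_assoc]
  have hTB : A * B * B = A + (q⁻¹ - q) • (A * B) := by
    rw [mul_assoc, hB, mul_add, mul_one, mul_smul_comm]
  generalize A * B = T at hT2 hTA hTB ⊢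
  simp only [sub_mul, mul_sub, mul_add, add_mul, mul_one, one_mul, smul_mul_assoc, mul_smul_comm,
    hT2, hTA, hTB]
  match_scalars <;> field_simp <;> ring

/-- Assuming `q⁴ ≠ 1`, the operator `𝓡` satisfies the cubic relation
`(𝓡 − q^{-2}·id) ∘ (𝓡 − q²·id) ∘ (𝓡 + id) = 0` on `(V₁⊗V₂) ⊗ (V₁⊗V₂)`. -/
theorem stmt9 (F : Type*) [Field F] (q : F) (hq : q ≠ 0) (hq4 : q ^ 4 ≠ 1)
    (m n k l : ℕ) (hmn : 1 ≤ m + n) (hkl : 1 ≤ k + l) :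
    (Matrix.toLin' (Rcal F q m (m + n) k (k + l)) - (q⁻¹) ^ 2 • LinearMap.id) ∘ₗ
        (Matrix.toLin' (Rcal F q m (m + n) k (k + l)) - q ^ 2 • LinearMap.id) ∘ₗ
        (Matrix.toLin' (Rcal F q m (m + n) k (k + l)) + LinearMap.id) = 0 := by
  have hR : Rcal F q m (m + n) k (k + l) =
      Phi F m (m + n) k (k + l) (Rmat F q m (m + n)) 1 *
      Phi F m (m + n) k (k + l) 1 (Rmat F q k (k + l)) := by
    rw [Phi_mul, mul_one, one_mul]; rfl
  have key := cubic_aux q hq (Phi F m (m + n) k (k + l) (Rmat F q m (m + n)) 1)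
    (Phi F m (m + n) k (k + l) 1 (Rmat F q k (k + l)))
    (by simp only [Phi_mul, mul_one, one_mul])
    (by
      rw [Phi_mul, Rmat_sq F q hq, ← Phi_one F m (m + n) k (k + l), mul_one]
      ext x y
      simp only [Phi, Matrix.of_apply, Matrix.add_apply, Matrix.smul_apply, smul_eq_mul]
      ring)
    (by
      rw [Phi_mul, Rmat_sq F q hq, ← Phi_one F m (m + n) k (k + l), mul_one]
      ext x y
      simp only [Phi, Matrix.of_apply, Matrix.add_apply, Matrix.smul_apply, smul_eq_mul]
      ring)
  rw [← hR] at key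
  have := congrArg Matrix.toLin' key
  simpa only [Matrix.toLin'_mul, map_sub, map_add, map_smul, Matrix.toLin'_one, map_zero]
    using this
end
end

section
/- For every N ≥ 0, the images in A of the monomials z_{a₁b₁}·z_{a₂b₂}⋯z_{a_N b_N} indexed by the sequences of pairs satisfying (a₁,b₁) ≤ (a₂,b₂) ≤ ⋯ ≤ (a_N,b_N) in the anti-lexicographic order, and such that an equality (a_i,b_i) = (a_{i+1},b_{i+1}) occurs only when the pair (a_i,b_i) is odd, form a K-basis of A_N. -/
noncomputable section

/-- The ground field `K = ℂ(q)`. -/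
abbrev Kq : Type := RatFunc ℂ

/-- The variable `q ∈ ℂ(q)`. -/
def qv : Kq := RatFunc.X

/-- The index set of the generators `z_{ab}` (0-based: `z_{ab}` corresponds to the pair
`(a−1, b−1)`); the index `a` has parity `1` iff `m ≤ a` and the index `b` has parity `1`
iff `k ≤ b`. -/
abbrev Idx (m n k l : ℕ) : Type := Fin (m + n) × Fin (k + l)

/-- The generator `z_{ab}` of the free algebra. -/
def zgen (m n k l : ℕ) (p : Idx m n k l) : FreeAlgebra Kq (Idx m n k l) :=
  FreeAlgebra.ι Kq p

/-- The sign `(−1)^{|a||b|}` for two indices with parity `1` iff `≥ t`. -/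
def sgn (t : ℕ) {N : ℕ} (a b : Fin N) : Kq :=
  if t ≤ (a : ℕ) ∧ t ≤ (b : ℕ) then -1 else 1

/-- The defining relators of the quantum exterior algebra
`Λ_q(ℂ_q^{m|n} ⊗ ℂ_q^{k|l})`, cf. (4.57) in the paper. -/
def relSet (m n k l : ℕ) : Set (FreeAlgebra Kq (Idx m n k l)) :=
  { r |
    (∃ a : Fin (m + n), ∃ b : Fin (k + l), ((m ≤ (a : ℕ)) ↔ (k ≤ (b : ℕ))) ∧
        r = zgen m n k l (a, b) * zgen m n k l (a, b)) ∨
    (∃ a b : Fin (m + n), ∃ c : Fin (k + l), a < b ∧ (c : ℕ) < k ∧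
        r = zgen m n k l (a, c) * zgen m n k l (b, c) +
          (sgn m a b * qv⁻¹) • (zgen m n k l (b, c) * zgen m n k l (a, c))) ∨
    (∃ a : Fin (m + n), ∃ c d : Fin (k + l), (a : ℕ) < m ∧ c < d ∧
        r = zgen m n k l (a, c) * zgen m n k l (a, d) +
          (sgn k c d * qv⁻¹) • (zgen m n k l (a, d) * zgen m n k l (a, c))) ∨
    (∃ a b : Fin (m + n), ∃ c d : Fin (k + l), a < b ∧ c < d ∧
        r = zgen m n k l (a, c) * zgen m n k l (b, d) +
          (sgn m a b * sgn k c d) • (zgen m n k l (b, d) * zgen m n k l (a, c))) ∨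
    (∃ a b : Fin (m + n), ∃ c d : Fin (k + l), b < a ∧ c < d ∧
        r = zgen m n k l (a, c) * zgen m n k l (b, d) +
          (sgn m a b * sgn k c d) • (zgen m n k l (b, d) * zgen m n k l (a, c)) -
          (sgn m a b * (qv⁻¹ - qv)) • (zgen m n k l (b, c) * zgen m n k l (a, d))) ∨
    (∃ a : Fin (m + n), ∃ c d : Fin (k + l), m ≤ (a : ℕ) ∧ c < d ∧
        r = zgen m n k l (a, c) * zgen m n k l (a, d) -
          (sgn k c d * qv) • (zgen m n k l (a, d) * zgen m n k l (a, c))) ∨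
    (∃ a b : Fin (m + n), ∃ c : Fin (k + l), a < b ∧ k ≤ (c : ℕ) ∧
        r = zgen m n k l (a, c) * zgen m n k l (b, c) -
          (sgn m a b * qv) • (zgen m n k l (b, c) * zgen m n k l (a, c))) }

/-- The relation whose `RingQuot` is the quotient of the free algebra by the two-sided
ideal generated by `relSet`. -/
def qrel (m n k l : ℕ) :
    FreeAlgebra Kq (Idx m n k l) → FreeAlgebra Kq (Idx m n k l) → Prop :=
  fun x y => x ∈ relSet m n k l ∧ y = 0

/-- The quantum exterior algebra `A = Λ_q(ℂ_q^{m|n} ⊗ ℂ_q^{k|l})`. -/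
abbrev QExt (m n k l : ℕ) : Type := RingQuot (qrel m n k l)

/-- The quotient map from the free algebra onto `A`. -/
def qmk (m n k l : ℕ) : FreeAlgebra Kq (Idx m n k l) →ₐ[Kq] QExt m n k l :=
  RingQuot.mkAlgHom Kq (qrel m n k l)

/-- The image in `A` of the ordered monomial `z_{a₁b₁}·z_{a₂b₂}⋯z_{a_N b_N}` determined by
`f : Fin N → Idx`. -/
def qmonomial (m n k l N : ℕ) (f : Fin N → Idx m n k l) : QExt m n k l :=
  (List.ofFn fun i => qmk m n k l (zgen m n k l (f i))).prod

/-- The degree-`N` piece `A_N` of `A`: the span of the images of all products of exactly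
`N` generators. -/
def qdeg (m n k l N : ℕ) : Submodule Kq (QExt m n k l) :=
  Submodule.span Kq { x | ∃ f : Fin N → Idx m n k l, x = qmonomial m n k l N f }

/-- The anti-lexicographic order on index pairs: `(a,b) ≤ (a',b')` iff `b < b'`, or
`b = b'` and `a ≤ a'`. -/
def antilexLE (m n k l : ℕ) (p p' : Idx m n k l) : Prop :=
  p.2 < p'.2 ∨ (p.2 = p'.2 ∧ p.1 ≤ p'.1)

/-- The pair `(a,b)` is odd iff `|a| ≠ |b|`. -/
def isOddPair (m n k l : ℕ) (p : Idx m n k l) : Prop :=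
  ¬ ((m ≤ (p.1 : ℕ)) ↔ (k ≤ (p.2 : ℕ)))

/-- A sequence of index pairs is admissible if it is weakly increasing in the
anti-lexicographic order and consecutive equal entries occur only at odd pairs. -/
def admissible (m n k l N : ℕ) (f : Fin N → Idx m n k l) : Prop :=
  (∀ i j : Fin N, i ≤ j → antilexLE m n k l (f i) (f j)) ∧
    ∀ i j : Fin N, (i : ℕ) + 1 = (j : ℕ) → f i = f j → isOddPair m n k l (f i)

namespace QProof

/-! ### The Hecke type operator and the braid relation -/

section Braid

variable {R K : Type*} [LinearOrder R] [Field K]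

/-- The Hecke type operator acting on functions of two indices. -/
def Rop (t : R → R → K) (p : R → K) (h : K) (F : R → R → K) (b a : R) : K :=
  if a < b then t b a * F a b else if b < a then t b a * F a b + h * F b a
    else p b * F a b

/-- The operator acting on the first two arguments. -/
def O12 (t : R → R → K) (p : R → K) (h : K) (f : R → R → R → K) (i j k : R) : K :=
  Rop t p h (fun a b => f a b k) i j

/-- The operator acting on the last two arguments. -/
def O23 (t : R → R → K) (p : R → K) (h : K) (f : R → R → R → K) (i j k : R) : K :=
  Rop t p h (fun a b => f i a b) j k

variable {t : R → R → K} {p : R → K} {h : K}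

lemma Rop_lt {F : R → R → K} {b a : R} (hab : a < b) : Rop t p h F b a = t b a * F a b := by
  simp [Rop, hab]

lemma Rop_gt {F : R → R → K} {b a : R} (hab : b < a) :
    Rop t p h F b a = t b a * F a b + h * F b a := by
  simp [Rop, hab, hab.not_gt]

lemma Rop_eq {F : R → R → K} {a : R} : Rop t p h F a a = p a * F a a := by
  simp [Rop]

lemma braid (ht : ∀ a b, t a b = t b a) (ht2 : ∀ a b, t a b * t a b = 1)
    (hp : ∀ a, p a * p a = h * p a + 1) (f : R → R → R → K) (i j k : R) :
    O12 t p h (O23 t p h (O12 t p h f)) i j k = O23 t p h (O12 t p h (O23 t p h f)) i j k := by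
  have e1 := ht i j
  have e2 := ht i k
  have e3 := ht j k
  have f1 := ht2 i j
  have f2 := ht2 i k
  have f3 := ht2 j k
  have p1 := hp i
  have p2 := hp j
  have p3 := hp k
  unfold O12 O23
  rcases lt_trichotomy i j with hij | hij | hij <;>
  rcases lt_trichotomy i k with hik | hik | hik <;>
  rcases lt_trichotomy j k with hjk | hjk | hjk <;>
  first
  | (exfalso; order)
  | (subst_vars
     simp (disch := assumption) only [Rop_lt, Rop_gt, Rop_eq]
     try grind)

/-- Eigenvectors: the straightening rules in a single column are the eigenvalue equation. -/
lemma Rop_eigen (ht : ∀ a b, t a b = t b a) (ht2 : ∀ a b, t a b * t a b = 1) {lam : K}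
    (hl0 : lam ≠ 0) (hl : lam * lam = h * lam + 1) (F : R → R → K)
    (h1 : ∀ a b, b < a → F a b = t a b * lam⁻¹ * F b a)
    (h2 : ∀ a, p a ≠ lam → F a a = 0) (a b : R) : Rop t p h F a b = lam * F a b := by
  rcases lt_trichotomy a b with hab | hab | hab
  · rw [Rop_gt hab, h1 b a hab, ht a b]
    have := ht2 b a
    field_simp
    linear_combination F a b * this - F a b * hl
  · subst hab
    rw [Rop_eq]
    by_cases hh : p a = lam
    · rw [hh]
    · rw [h2 a hh]; simp
  · rw [Rop_lt hab, h1 a b hab]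
    field_simp

lemma eigen_lt {lam : K}
    (hl0 : lam ≠ 0) {F : R → R → K} {a b : R} (hab : b < a)
    (hh : Rop t p h F a b = lam * F a b) : F a b = t a b * lam⁻¹ * F b a := by
  rw [Rop_lt hab] at hh
  field_simp
  linear_combination -hh

lemma eigen_eq {lam : K} {F : R → R → K} {a : R} (hne : p a ≠ lam)
    (hh : Rop t p h F a a = lam * F a a) : F a a = 0 := by
  rw [Rop_eq] at hh
  have : (p a - lam) * F a a = 0 := by linear_combination hh
  rcases mul_eq_zero.1 this with h' | h'
  · exact absurd (sub_eq_zero.1 h') hne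
  · exact h'

lemma Rop_smul (c : K) (F : R → R → K) (a b : R) :
    Rop t p h (fun a b => c * F a b) a b = c * Rop t p h F a b := by
  unfold Rop; split_ifs <;> ring

end Braid

/-! ### Parameters -/

lemma qv_ne : qv ≠ 0 := RatFunc.X_ne_zero

/-- The eigenvalue attached to a row index. -/
def pr (m n : ℕ) (a : Fin (m + n)) : Kq := if (a : ℕ) < m then -qv else qv⁻¹

/-- The eigenvalue attached to a column index. -/
def lm (k l : ℕ) (c : Fin (k + l)) : Kq := if (c : ℕ) < k then qv⁻¹ else -qv

/-- The Hecke parameter. -/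
def hh : Kq := qv⁻¹ - qv

/-- The (negative) sign attached to two rows. -/
def tt (m n : ℕ) (a b : Fin (m + n)) : Kq := - sgn m a b

lemma sgn_comm (t : ℕ) {N : ℕ} (a b : Fin N) : sgn t a b = sgn t b a := by
  unfold sgn; simp only [and_comm]

lemma sgn_sq (t : ℕ) {N : ℕ} (a b : Fin N) : sgn t a b * sgn t a b = 1 := by
  unfold sgn; split_ifs <;> simp

lemma tt_comm (m n : ℕ) (a b : Fin (m + n)) : tt m n a b = tt m n b a := by
  unfold tt; rw [sgn_comm]

lemma tt_sq (m n : ℕ) (a b : Fin (m + n)) : tt m n a b * tt m n a b = 1 := by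
  unfold tt; rw [neg_mul_neg, sgn_sq]

lemma pr_sq (m n : ℕ) (a : Fin (m + n)) : pr m n a * pr m n a = hh * pr m n a + 1 := by
  have := qv_ne
  unfold pr hh; split_ifs <;> (field_simp; ring)

lemma lm_sq (k l : ℕ) (a : Fin (k + l)) : lm k l a * lm k l a = hh * lm k l a + 1 := by
  have := qv_ne
  unfold lm hh; split_ifs <;> field_simp <;> ring

lemma lm_ne (k l : ℕ) (a : Fin (k + l)) : lm k l a ≠ 0 := by
  have := qv_ne
  unfold lm; split_ifs <;> simp [this]

lemma pr_ne_lm (m n k l : ℕ) (a : Fin (m + n)) (c : Fin (k + l)) (hne : pr m n a ≠ lm k l c) :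
    (m ≤ (a : ℕ) ↔ k ≤ (c : ℕ)) := by
  unfold pr lm at hne
  split_ifs at hne <;> simp_all <;> omega

lemma X_sq_ne : (RatFunc.X : RatFunc ℂ) * RatFunc.X ≠ -1 := by
  intro h
  have h2 := congrArg (RatFunc.eval (RingHom.id ℂ) 0) h
  have h1 : (RatFunc.X : RatFunc ℂ) * RatFunc.X
      = algebraMap (Polynomial ℂ) (RatFunc ℂ) (Polynomial.X * Polynomial.X) := by
    simp [RatFunc.algebraMap_X]
  have h3 : (-1 : RatFunc ℂ) = algebraMap (Polynomial ℂ) (RatFunc ℂ) (-1) := by simp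
  rw [h1, h3, RatFunc.eval_algebraMap, RatFunc.eval_algebraMap] at h2
  simp at h2

lemma ev_pr_ne (m n k l : ℕ) (a : Fin (m + n)) (c : Fin (k + l))
    (he : (m ≤ (a : ℕ) ↔ k ≤ (c : ℕ))) : pr m n a ≠ lm k l c := by
  have hq := qv_ne
  have key : -qv ≠ qv⁻¹ := by
    intro h
    apply X_sq_ne
    have : -qv * qv = 1 := by rw [h]; field_simp
    change qv * qv = -1
    linear_combination -this
  unfold pr lm
  split_ifs with h1 h2 h2
  · exact key
  · omega
  · omega
  · exact key.symm

/-! ### The rewriting rules -/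

/-- Strict antilexicographic order. -/
def blt {m n k l : ℕ} (x y : Idx m n k l) : Prop :=
  x.2 < y.2 ∨ (x.2 = y.2 ∧ x.1 < y.1)

/-- The reducible pairs. -/
def Red {m n k l : ℕ} (x y : Idx m n k l) : Prop :=
  blt y x ∨ (x = y ∧ ((m ≤ (x.1 : ℕ)) ↔ (k ≤ (x.2 : ℕ))))

/-- First coefficient of the rule. -/
def al {m n k l : ℕ} (x y : Idx m n k l) : Kq :=
  if y.2 < x.2 then
    (if x.1 = y.1 then sgn k x.2 y.2 * pr m n x.1 else sgn k x.2 y.2 * tt m n x.1 y.1)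
  else if x = y then 0 else tt m n x.1 y.1 * (lm k l x.2)⁻¹

/-- Second coefficient of the rule. -/
def be {m n k l : ℕ} (x y : Idx m n k l) : Kq :=
  if y.2 < x.2 ∧ x.1 < y.1 then sgn k x.2 y.2 * hh else 0

/-- Right-hand side of the rule. -/
def rhs2 {m n k l : ℕ} (F : Idx m n k l → Idx m n k l → Kq) (x y : Idx m n k l) : Kq :=
  al x y * F y x + be x y * F (x.1, y.2) (y.1, x.2)

section Rules

variable {m n k l : ℕ}

lemma rhs2_cross (F : Idx m n k l → Idx m n k l → Kq) (i j : Fin (m + n)) (c d : Fin (k + l))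
    (hcd : c < d) : rhs2 F (i, d) (j, c) =
      sgn k d c * Rop (tt m n) (pr m n) hh (fun a b => F (a, c) (b, d)) i j := by
  unfold rhs2 al be
  rcases lt_trichotomy i j with h | h | h
  · rw [Rop_gt h]; simp [hcd, h, h.ne]; ring
  · subst h; rw [Rop_eq]; simp [hcd]; ring
  · rw [Rop_lt h]; simp [hcd, h.not_gt, h.ne']; ring

lemma rhs2_same (F : Idx m n k l → Idx m n k l → Kq) (i j : Fin (m + n)) (d : Fin (k + l))
    (hij : j < i) : rhs2 F (i, d) (j, d) = tt m n i j * (lm k l d)⁻¹ * F (j, d) (i, d) := by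
  unfold rhs2 al be
  simp [hij.ne']

lemma rhs2_eq (F : Idx m n k l → Idx m n k l → Kq) (x : Idx m n k l) : rhs2 F x x = 0 := by
  unfold rhs2 al be
  simp

lemma rhs2_congr {F F' : Idx m n k l → Idx m n k l → Kq} {x y : Idx m n k l} (hr : Red x y)
    (h : ∀ p q, blt p x → F p q = F' p q) : rhs2 F x y = rhs2 F' x y := by
  unfold rhs2
  congr 1
  · rcases hr with hr | hr
    · rw [h _ _ hr]
    · simp [al, hr.1]
  · unfold be
    split_ifs with hb
    · rw [h (x.1, y.2) _ (Or.inl hb.1)]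
    · simp

/-- The overlap ambiguities are resolvable. -/
lemma overlap (G : Idx m n k l → Idx m n k l → Idx m n k l → Kq) (x y z : Idx m n k l)
    (hxy : Red x y) (hyz : Red y z)
    (H12 : ∀ p q r, (blt p x ∨ (p = x ∧ blt q y)) → Red p q →
      G p q r = rhs2 (fun a b => G a b r) p q)
    (H23 : ∀ p q r, (blt p x ∨ (p = x ∧ blt q y)) → Red q r →
      G p q r = rhs2 (fun a b => G p a b) q r) :
    rhs2 (fun a b => G a b z) x y = rhs2 (fun a b => G x a b) y z := by
  obtain ⟨i, c1⟩ := x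
  obtain ⟨j, c2⟩ := y
  obtain ⟨w, c3⟩ := z
  have h21 : c2 ≤ c1 := by
    rcases hxy with (h | h) | h
    · exact h.le
    · exact h.1.le
    · simp at h; exact h.1.2.ge
  have h32 : c3 ≤ c2 := by
    rcases hyz with (h | h) | h
    · exact h.le
    · exact h.1.le
    · simp at h; exact h.1.2.ge
  have hbr := braid (K := Kq) (tt_comm m n) (tt_sq m n) (pr_sq m n)
  -- cross rules at the two places
  have C12 : ∀ a b r (c d : Fin (k + l)), c < d →
      (blt (a, d) (i, c1) ∨ ((a, d) = (i, c1) ∧ blt (b, c) (j, c2))) →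
      G (a, d) (b, c) r = sgn k d c *
        Rop (tt m n) (pr m n) hh (fun a b => G (a, c) (b, d) r) a b := by
    intro a b r c d hcd hs
    rw [H12 _ _ _ hs (Or.inl (Or.inl hcd)), rhs2_cross _ _ _ _ _ hcd]
  have C23 : ∀ p a b (c d : Fin (k + l)), c < d →
      (blt p (i, c1) ∨ (p = (i, c1) ∧ blt (a, d) (j, c2))) →
      G p (a, d) (b, c) = sgn k d c *
        Rop (tt m n) (pr m n) hh (fun a b => G p (a, c) (b, d)) a b := by
    intro p a b c d hcd hs
    rw [H23 _ _ _ hs (Or.inl (Or.inl hcd)), rhs2_cross _ _ _ _ _ hcd]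
  rcases h21.lt_or_eq with h21 | h21
  · rcases h32.lt_or_eq with h32 | h32
    · -- three different columns
      have h31 := h32.trans h21
      rw [rhs2_cross _ _ _ _ _ h21, rhs2_cross _ _ _ _ _ h32]
      have E1 : ∀ r, (fun a b => G (a, c2) (b, c1) (r, c3)) = fun a b => (sgn k c1 c3 * sgn k c2 c3) *
          O23 (tt m n) (pr m n) hh (O12 (tt m n) (pr m n) hh
            (fun a b r => G (a, c3) (b, c2) (r, c1))) a b r := by
        intro r
        funext a b
        rw [C23 _ _ _ _ _ h31 (Or.inl (Or.inl h21))]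
        have : (fun a' b' => G (a, c2) (a', c3) (b', c1)) = fun a' b' => sgn k c2 c3 *
            O12 (tt m n) (pr m n) hh (fun a b r => G (a, c3) (b, c2) (r, c1)) a a' b' := by
          funext a' b'
          rw [C12 _ _ _ _ _ h32 (Or.inl (Or.inl h21))]
          rfl
        rw [this, Rop_smul, mul_assoc]
        rfl
      have E2 : (fun a b => G (i, c1) (a, c3) (b, c2)) = fun a b => (sgn k c1 c3 * sgn k c1 c2) *
          O12 (tt m n) (pr m n) hh (O23 (tt m n) (pr m n) hh
            (fun a b r => G (a, c3) (b, c2) (r, c1))) i a b := by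
        funext a b
        rw [C12 _ _ _ _ _ h31 (Or.inr ⟨rfl, Or.inl h32⟩)]
        have : (fun a' b' => G (a', c3) (b', c1) (b, c2)) = fun a' b' => sgn k c1 c2 *
            O23 (tt m n) (pr m n) hh (fun a b r => G (a, c3) (b, c2) (r, c1)) a' b' b := by
          funext a' b'
          rw [C23 _ _ _ _ _ h21 (Or.inl (Or.inl h31))]
          rfl
        rw [this, Rop_smul, mul_assoc]
        rfl
      rw [E1, E2, Rop_smul, Rop_smul]
      have hb := hbr (fun a b r => G (a, c3) (b, c2) (r, c1)) i j w
      unfold O12 at hb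
      unfold O23 at hb
      unfold O12 O23
      rw [hb]
      ring
    · -- two columns, the last two letters in the same one
      subst h32
      have hev : ∀ r a b, O12 (tt m n) (pr m n) hh
          (fun a b r => G (a, c3) (b, c3) (r, c1)) a b r = lm k l c3 * G (a, c3) (b, c3) (r, c1) := by
        intro r a b
        apply Rop_eigen (tt_comm m n) (tt_sq m n) (lm_ne k l c3) (lm_sq k l c3)
          (fun a b => G (a, c3) (b, c3) (r, c1))
        · intro a b hab
          rw [H12 (a, c3) (b, c3) _ (Or.inl (Or.inl h21)) (Or.inl (Or.inr ⟨rfl, hab⟩)), rhs2_same _ _ _ _ hab]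
        · intro a ha
          rw [H12 _ _ _ (Or.inl (Or.inl h21)) (Or.inr ⟨rfl, pr_ne_lm _ _ _ _ _ _ ha⟩), rhs2_eq]
      set f : Fin (m + n) → Fin (m + n) → Fin (m + n) → Kq :=
        fun a b r => G (a, c3) (b, c3) (r, c1) with hf
      have hX : ∀ a b r, O23 (tt m n) (pr m n) hh
          (O12 (tt m n) (pr m n) hh (O23 (tt m n) (pr m n) hh f)) a b r =
            lm k l c3 * O12 (tt m n) (pr m n) hh (O23 (tt m n) (pr m n) hh f) a b r := by
        intro a b r
        have e1 : O12 (tt m n) (pr m n) hh f = fun a b r => lm k l c3 * f a b r := by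
          funext a b r
          exact hev r a b
        have e2 : O23 (tt m n) (pr m n) hh (fun a b r => lm k l c3 * f a b r) =
            fun a b r => lm k l c3 * O23 (tt m n) (pr m n) hh f a b r := by
          funext a b r
          exact Rop_smul _ _ _ _
        rw [← hbr, e1, e2]
        exact Rop_smul _ _ _ _
      have E1 : (fun a b => G (a, c3) (b, c1) (w, c3)) = fun a b => sgn k c1 c3 *
          O23 (tt m n) (pr m n) hh f a b w := by
        funext a b
        rw [C23 _ _ _ _ _ h21 (Or.inl (Or.inl h21))]
        rfl
      have E2 : ∀ a b, blt (a, c3) (j, c3) → G (i, c1) (a, c3) (b, c3) =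
          (sgn k c1 c3 * sgn k c1 c3) *
          O12 (tt m n) (pr m n) hh (O23 (tt m n) (pr m n) hh f) i a b := by
        intro a b hab
        rw [C12 _ _ _ _ _ h21 (Or.inr ⟨rfl, hab⟩)]
        have : (fun a' b' => G (a', c3) (b', c1) (b, c3)) = fun a' b' => sgn k c1 c3 *
            O23 (tt m n) (pr m n) hh f a' b' b := by
          funext a' b'
          rw [C23 _ _ _ _ _ h21 (Or.inl (Or.inl h21))]
          rfl
        rw [this, Rop_smul, mul_assoc]
        rfl
      rw [rhs2_cross _ _ _ _ _ h21, E1, Rop_smul]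
      change sgn k c1 c3 * (sgn k c1 c3 *
        O12 (tt m n) (pr m n) hh (O23 (tt m n) (pr m n) hh f) i j w) = _
      rcases hyz with (h | h) | h
      · exact absurd h (lt_irrefl _)
      · have hwj : w < j := h.2
        rw [rhs2_same _ _ _ _ hwj, E2 w j (Or.inr ⟨rfl, hwj⟩)]
        rw [eigen_lt (lm_ne k l c3) hwj (hX i j w)]
        ring
      · obtain ⟨h, he⟩ := h
        obtain rfl : j = w := (Prod.ext_iff.1 h).1
        rw [rhs2_eq, eigen_eq (ev_pr_ne m n k l j c3 he) (hX i j j)]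
        ring
  · subst h21
    rcases h32.lt_or_eq with h32 | h32
    · -- two columns, the first two letters in the same one
      have hev : ∀ r a b, O23 (tt m n) (pr m n) hh
          (fun a b r => G (a, c3) (b, c2) (r, c2)) r a b = lm k l c2 * G (r, c3) (a, c2) (b, c2) := by
        intro r a b
        apply Rop_eigen (tt_comm m n) (tt_sq m n) (lm_ne k l c2) (lm_sq k l c2)
          (fun a b => G (r, c3) (a, c2) (b, c2))
        · intro a b hab
          rw [H23 _ (a, c2) (b, c2) (Or.inl (Or.inl h32)) (Or.inl (Or.inr ⟨rfl, hab⟩)), rhs2_same _ _ _ _ hab]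
        · intro a ha
          rw [H23 _ _ _ (Or.inl (Or.inl h32)) (Or.inr ⟨rfl, pr_ne_lm _ _ _ _ _ _ ha⟩), rhs2_eq]
      set f : Fin (m + n) → Fin (m + n) → Fin (m + n) → Kq :=
        fun a b r => G (a, c3) (b, c2) (r, c2) with hf
      have hX : ∀ a b r, O12 (tt m n) (pr m n) hh
          (O23 (tt m n) (pr m n) hh (O12 (tt m n) (pr m n) hh f)) a b r =
            lm k l c2 * O23 (tt m n) (pr m n) hh (O12 (tt m n) (pr m n) hh f) a b r := by
        intro a b r
        have e1 : O23 (tt m n) (pr m n) hh f = fun a b r => lm k l c2 * f a b r := by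
          funext a b r
          exact hev a b r
        have e2 : O12 (tt m n) (pr m n) hh (fun a b r => lm k l c2 * f a b r) =
            fun a b r => lm k l c2 * O12 (tt m n) (pr m n) hh f a b r := by
          funext a b r
          exact Rop_smul _ _ _ _
        rw [hbr, e1, e2]
        exact Rop_smul _ _ _ _
      have E1 : (fun a b => G (i, c2) (a, c3) (b, c2)) = fun a b => sgn k c2 c3 *
          O12 (tt m n) (pr m n) hh f i a b := by
        funext a b
        rw [C12 _ _ _ _ _ h32 (Or.inr ⟨rfl, Or.inl h32⟩)]
        rfl
      have E2 : ∀ a b, blt (a, c2) (i, c2) → G (a, c2) (b, c2) (w, c3) =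
          (sgn k c2 c3 * sgn k c2 c3) *
          O23 (tt m n) (pr m n) hh (O12 (tt m n) (pr m n) hh f) a b w := by
        intro a b hab
        rw [C23 _ _ _ _ _ h32 (Or.inl hab)]
        have : (fun a' b' => G (a, c2) (a', c3) (b', c2)) = fun a' b' => sgn k c2 c3 *
            O12 (tt m n) (pr m n) hh f a a' b' := by
          funext a' b'
          rw [C12 _ _ _ _ _ h32 (Or.inl hab)]
          rfl
        rw [this, Rop_smul, mul_assoc]
        rfl
      rw [rhs2_cross _ _ _ _ _ h32, E1, Rop_smul]
      change _ = sgn k c2 c3 * (sgn k c2 c3 *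
        O23 (tt m n) (pr m n) hh (O12 (tt m n) (pr m n) hh f) i j w)
      rcases hxy with (h | h) | h
      · exact absurd h (lt_irrefl _)
      · have hji : j < i := h.2
        rw [rhs2_same _ _ _ _ hji, E2 j i (Or.inr ⟨rfl, hji⟩)]
        have := eigen_lt
          (F := fun a b => O23 (tt m n) (pr m n) hh (O12 (tt m n) (pr m n) hh f) a b w)
          (lm_ne k l c2) hji (hX i j w)
        beta_reduce at this
        rw [this]
        ring
      · obtain ⟨h, he⟩ := h
        obtain rfl : i = j := (Prod.ext_iff.1 h).1
        have := eigen_eq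
          (F := fun a b => O23 (tt m n) (pr m n) hh (O12 (tt m n) (pr m n) hh f) a b w)
          (ev_pr_ne m n k l i c2 he) (hX i i w)
        beta_reduce at this
        rw [rhs2_eq, this]
        ring
    · -- a single column
      subst h32
      have S12 : ∀ a b r, b < a → (a < i ∨ a = i ∧ b < j) →
          G (a, c3) (b, c3) r = tt m n a b * (lm k l c3)⁻¹ * G (b, c3) (a, c3) r := by
        intro a b r hab hs
        rw [H12 (a, c3) (b, c3) r (hs.imp (fun h => Or.inr ⟨rfl, h⟩)
          (fun h => ⟨by rw [h.1], Or.inr ⟨rfl, h.2⟩⟩)) (Or.inl (Or.inr ⟨rfl, hab⟩)),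
          rhs2_same _ _ _ _ hab]
      have S23 : ∀ a b r, r < b → (a < i ∨ a = i ∧ b < j) →
          G (a, c3) (b, c3) (r, c3) = tt m n b r * (lm k l c3)⁻¹ * G (a, c3) (r, c3) (b, c3) := by
        intro a b r hab hs
        rw [H23 (a, c3) (b, c3) (r, c3) (hs.imp (fun h => Or.inr ⟨rfl, h⟩)
          (fun h => ⟨by rw [h.1], Or.inr ⟨rfl, h.2⟩⟩)) (Or.inl (Or.inr ⟨rfl, hab⟩)),
          rhs2_same _ _ _ _ hab]
      rcases hxy with (h | h) | ⟨h, he⟩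
      · exact absurd h (lt_irrefl _)
      · have hji : j < i := h.2
        rw [rhs2_same _ _ _ _ hji]
        rcases hyz with (h' | h') | ⟨h', he'⟩
        · exact absurd h' (lt_irrefl _)
        · have hwj : w < j := h'.2
          have hwi := hwj.trans hji
          rw [rhs2_same _ _ _ _ hwj, S23 j i w hwi (Or.inl hji), S12 j w _ hwj (Or.inl hji),
            S12 i w _ hwi (Or.inr ⟨rfl, hwj⟩), S23 w i j hji (Or.inl hwi)]
          ring
        · obtain rfl : j = w := (Prod.ext_iff.1 h').1
          rw [rhs2_eq, S23 j i j hji (Or.inl hji),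
            H12 (j, c3) (j, c3) _ (Or.inl (Or.inr ⟨rfl, hji⟩)) (Or.inr ⟨rfl, he'⟩), rhs2_eq]
          ring
      · obtain rfl : i = j := (Prod.ext_iff.1 h).1
        rw [rhs2_eq]
        rcases hyz with (h' | h') | ⟨h', he'⟩
        · exact absurd h' (lt_irrefl _)
        · have hwi : w < i := h'.2
          rw [rhs2_same _ _ _ _ hwi, S12 i w _ hwi (Or.inr ⟨rfl, hwi⟩),
            H23 (w, c3) (i, c3) _ (Or.inl (Or.inr ⟨rfl, hwi⟩)) (Or.inr ⟨rfl, he⟩), rhs2_eq]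
          ring
        · obtain rfl : i = w := (Prod.ext_iff.1 h').1
          rw [rhs2_eq]

end Rules

/-! ### The weight of a word -/

section Words

variable {m n k l : ℕ}

/-- Rank of a letter in the antilexicographic order. -/
def rk (x : Idx m n k l) : ℕ := (x.2 : ℕ) * (m + n) + x.1

lemma rk_lt (x : Idx m n k l) : rk x < (m + n) * (k + l) := by
  unfold rk
  have h1 := x.1.2
  have h2 := x.2.2
  calc (x.2 : ℕ) * (m + n) + x.1 < (x.2 : ℕ) * (m + n) + (m + n) := by omega
    _ = ((x.2 : ℕ) + 1) * (m + n) := by ring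
    _ ≤ (k + l) * (m + n) := Nat.mul_le_mul_right _ h2
    _ = _ := by ring

lemma rk_blt {x y : Idx m n k l} (h : blt x y) : rk x < rk y := by
  unfold rk
  have h1 := x.1.2
  rcases h with h | ⟨h, h'⟩
  · calc (x.2 : ℕ) * (m + n) + x.1 < (x.2 : ℕ) * (m + n) + (m + n) := by omega
      _ = ((x.2 : ℕ) + 1) * (m + n) := by ring
      _ ≤ (y.2 : ℕ) * (m + n) := Nat.mul_le_mul_right _ h
      _ ≤ _ := Nat.le_add_right _ _
  · rw [h]
    have : (x.1 : ℕ) < y.1 := h'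
    omega

/-- Weight of a word: its value as a number in base `(m+n)(k+l)`. -/
def wt : List (Idx m n k l) → ℕ
  | [] => 0
  | x :: t => rk x * ((m + n) * (k + l)) ^ t.length + wt t

lemma wt_lt_pow (u : List (Idx m n k l)) : wt u < ((m + n) * (k + l)) ^ u.length := by
  induction u with
  | nil => simp [wt]
  | cons x t ih =>
    have := rk_lt x
    simp only [wt, List.length_cons]
    calc rk x * ((m + n) * (k + l)) ^ t.length + wt t
        < rk x * ((m + n) * (k + l)) ^ t.length + ((m + n) * (k + l)) ^ t.length := by omega
      _ = (rk x + 1) * ((m + n) * (k + l)) ^ t.length := by ring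
      _ ≤ ((m + n) * (k + l)) * ((m + n) * (k + l)) ^ t.length := Nat.mul_le_mul_right _ this
      _ = _ := by ring

lemma wt_lt (u : List (Idx m n k l)) {p x : Idx m n k l} {s s' : List (Idx m n k l)}
    (hs : s.length = s'.length) (h : blt p x) : wt (u ++ p :: s) < wt (u ++ x :: s') := by
  induction u with
  | nil =>
    have h1 := rk_blt h
    have h2 := wt_lt_pow s
    simp only [List.nil_append, wt]
    rw [← hs]
    calc rk p * ((m + n) * (k + l)) ^ s.length + wt s
        < rk p * ((m + n) * (k + l)) ^ s.length + ((m + n) * (k + l)) ^ s.length := by omega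
      _ = (rk p + 1) * ((m + n) * (k + l)) ^ s.length := by ring
      _ ≤ rk x * ((m + n) * (k + l)) ^ s.length := Nat.mul_le_mul_right _ h1
      _ ≤ _ := Nat.le_add_right _ _
  | cons y t ih =>
    simp only [List.cons_append, wt, List.length_append, List.length_cons, hs]
    omega

/-- The rule at one place of a word. -/
def RuleAt (g : List (Idx m n k l) → Kq) (u : List (Idx m n k l)) (x y : Idx m n k l)
    (v : List (Idx m n k l)) : Prop :=
  g (u ++ x :: y :: v) = rhs2 (fun p q => g (u ++ p :: q :: v)) x y

/-- Two rewriting steps of the same word agree, with the first to the left of the second. -/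
lemma conf_aux (g : List (Idx m n k l) → Kq) (u : List (Idx m n k l)) (x y : Idx m n k l)
    (v u' : List (Idx m n k l)) (x' y' : Idx m n k l) (v' : List (Idx m n k l))
    (he : u ++ x :: y :: v = u' ++ x' :: y' :: v') (hlen : u.length ≤ u'.length)
    (hr : Red x y) (hr' : Red x' y')
    (H : ∀ s a b t, wt (s ++ a :: b :: t) < wt (u ++ x :: y :: v) → Red a b → RuleAt g s a b t) :
    rhs2 (fun p q => g (u ++ p :: q :: v)) x y
      = rhs2 (fun p q => g (u' ++ p :: q :: v')) x' y' := by
  obtain ⟨w, rfl⟩ : ∃ w, u' = u ++ w := by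
    have : u <+: u' ++ x' :: y' :: v' := ⟨_, he⟩
    obtain ⟨w, hw⟩ := List.prefix_of_prefix_length_le this ⟨_, rfl⟩ hlen
    exact ⟨w, hw.symm⟩
  rw [List.append_assoc] at he
  have he := List.append_cancel_left he
  match w, he with
  | [], he =>
    simp only [List.nil_append, List.cons.injEq] at he
    obtain ⟨rfl, rfl, rfl⟩ := he
    simp
  | [a], he =>
    simp only [List.cons_append, List.nil_append, List.cons.injEq] at he
    obtain ⟨rfl, rfl, rfl⟩ := he
    have := overlap (fun a b c => g (u ++ a :: b :: c :: v')) x y y' hr hr'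
      (fun p q r hs hpq => by
        apply H u p q (r :: v') _ hpq
        rcases hs with hs | ⟨rfl, hs⟩
        · exact wt_lt u (by simp) hs
        · have := wt_lt (u ++ [p]) (s := r :: v') (s' := y' :: v') (by simp) hs
          simpa using this)
      (fun p q r hs hpq => by
        have h1 := H (u ++ [p]) q r v' (by
          rcases hs with hs | ⟨rfl, hs⟩
          · have := wt_lt u (s := q :: r :: v') (s' := y :: y' :: v') (by simp) hs
            simpa using this
          · have := wt_lt (u ++ [p]) (s := r :: v') (s' := y' :: v') (by simp) hs
            simpa using this) hpq
        simpa [RuleAt] using h1)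
    simpa using this
  | a :: b :: t, he =>
    simp only [List.cons_append, List.cons.injEq] at he
    obtain ⟨rfl, rfl, rfl⟩ := he
    have e1 : rhs2 (fun p q => g (u ++ p :: q :: (t ++ x' :: y' :: v'))) x y =
        rhs2 (fun p q => rhs2 (fun p' q' => g (u ++ p :: q :: (t ++ p' :: q' :: v'))) x' y') x y := by
      apply rhs2_congr hr
      intro p q hp
      have := H (u ++ p :: q :: t) x' y' v' (by
        have := wt_lt u (s := q :: (t ++ x' :: y' :: v')) (s' := y :: (t ++ x' :: y' :: v'))
          (by simp) hp
        simpa using this) hr'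
      simpa [RuleAt] using this
    have e2 : rhs2 (fun p q => g (u ++ x :: y :: t ++ p :: q :: v')) x' y' =
        rhs2 (fun p' q' => rhs2 (fun p q => g (u ++ p :: q :: (t ++ p' :: q' :: v'))) x y) x' y' := by
      apply rhs2_congr hr'
      intro p q hp
      have := H u x y (t ++ p :: q :: v') (by
        have := wt_lt (u ++ x :: y :: t) (s := q :: v') (s' := y' :: v') (by simp) hp
        simpa using this) hr
      simpa [RuleAt] using this
    rw [e1, e2]
    unfold rhs2
    ring

open Classical in
/-- The functional extending prescribed values on irreducible words. -/
def gf (g0 : List (Idx m n k l) → Kq) (w : List (Idx m n k l)) : Kq :=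
  if h : ∃ d : List (Idx m n k l) × Idx m n k l × Idx m n k l × List (Idx m n k l),
      w = d.1 ++ d.2.1 :: d.2.2.1 :: d.2.2.2 ∧ Red d.2.1 d.2.2.1 then
    rhs2 (fun p q => if _hlt : wt (h.choose.1 ++ p :: q :: h.choose.2.2.2) < wt w then
      gf g0 (h.choose.1 ++ p :: q :: h.choose.2.2.2) else 0) h.choose.2.1 h.choose.2.2.1
  else g0 w
termination_by wt w

lemma gf_irred (g0 : List (Idx m n k l) → Kq) (w : List (Idx m n k l))
    (h : ∀ u x y v, w = u ++ x :: y :: v → ¬ Red x y) : gf g0 w = g0 w := by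
  rw [gf, dif_neg]
  rintro ⟨d, h1, h2⟩
  exact h _ _ _ _ h1 h2

lemma gf_rule (g0 : List (Idx m n k l) → Kq) (N : ℕ) : ∀ (u : List (Idx m n k l)) (x y : Idx m n k l)
    (v : List (Idx m n k l)), wt (u ++ x :: y :: v) = N → Red x y → RuleAt (gf g0) u x y v := by
  induction N using Nat.strong_induction_on with
  | _ N ih =>
  intro u x y v hN hr
  have H : ∀ s a b t, wt (s ++ a :: b :: t) < wt (u ++ x :: y :: v) → Red a b →
      RuleAt (gf g0) s a b t := fun s a b t hlt hab => ih _ (hN ▸ hlt) s a b t rfl hab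
  have h : ∃ d : List (Idx m n k l) × Idx m n k l × Idx m n k l × List (Idx m n k l),
      u ++ x :: y :: v = d.1 ++ d.2.1 :: d.2.2.1 :: d.2.2.2 ∧ Red d.2.1 d.2.2.1 :=
    ⟨(u, x, y, v), rfl, hr⟩
  unfold RuleAt
  rw [gf, dif_pos h]
  obtain ⟨h1, h2⟩ := h.choose_spec
  generalize h.choose = d at h1 h2 ⊢
  obtain ⟨u', x', y', v'⟩ := d
  simp only at h1 h2 ⊢
  have e : rhs2 (fun p q => if _hlt : wt (u' ++ p :: q :: v') < wt (u ++ x :: y :: v) then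
      gf g0 (u' ++ p :: q :: v') else 0) x' y' = rhs2 (fun p q => gf g0 (u' ++ p :: q :: v')) x' y' := by
    apply rhs2_congr h2
    intro p q hp
    rw [dif_pos]
    rw [h1]
    exact wt_lt u' (by simp) hp
  rw [e]
  rcases le_total u.length u'.length with hl | hl
  · exact (conf_aux (gf g0) u x y v u' x' y' v' h1 hl hr h2 H).symm
  · exact conf_aux (gf g0) u' x' y' v' u x y v h1.symm hl h2 hr (h1 ▸ H)

end Words

/-! ### The representation of the algebra -/

section Rep

/-- The space of functions on words obeying all the rules. -/
def GS (m n k l : ℕ) : Submodule Kq (List (Idx m n k l) → Kq) where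
  carrier := {g | ∀ u x y v, Red x y → RuleAt g u x y v}
  add_mem' := by
    intro g g' h h' u x y v hr
    have e1 := h u x y v hr
    have e2 := h' u x y v hr
    unfold RuleAt at *
    simp only [Pi.add_apply]
    rw [e1, e2]
    unfold rhs2
    ring
  zero_mem' := by
    intro u x y v _
    simp [RuleAt, rhs2]
  smul_mem' := by
    intro c g h u x y v hr
    have e1 := h u x y v hr
    unfold RuleAt at *
    simp only [Pi.smul_apply, smul_eq_mul]
    rw [e1]
    unfold rhs2
    ring

/-- Translation by a letter. -/
def tr (m n k l : ℕ) (x : Idx m n k l) : Module.End Kq (GS m n k l) where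
  toFun g := ⟨fun u => g.1 (u ++ [x]), by
    intro u a b v hr
    have := g.2 u a b (v ++ [x]) hr
    unfold RuleAt at *
    simpa using this⟩
  map_add' _ _ := rfl
  map_smul' _ _ := rfl

lemma tr_apply (m n k l : ℕ) (x : Idx m n k l) (g : GS m n k l) (u : List (Idx m n k l)) :
    (tr m n k l x g).1 u = g.1 (u ++ [x]) := rfl

/-- The representation of the free algebra. -/
def rep0 (m n k l : ℕ) : FreeAlgebra Kq (Idx m n k l) →ₐ[Kq] Module.End Kq (GS m n k l) :=
  FreeAlgebra.lift Kq (tr m n k l)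

lemma rep0_gen (m n k l : ℕ) (x : Idx m n k l) : rep0 m n k l (zgen m n k l x) = tr m n k l x := by
  simp [rep0, zgen]

lemma rep0_rel (m n k l : ℕ) (r : FreeAlgebra Kq (Idx m n k l)) (hr : r ∈ relSet m n k l) :
    rep0 m n k l r = 0 := by
  have hq := qv_ne
  apply LinearMap.ext
  intro g
  apply Subtype.ext
  funext u
  have two : ∀ x y, (rep0 m n k l (zgen m n k l x * zgen m n k l y) g).1 u =
      g.1 (u ++ x :: y :: []) := by
    intro x y
    rw [map_mul, rep0_gen, rep0_gen, Module.End.mul_apply, tr_apply, tr_apply]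
    simp
  have rule : ∀ x y, Red x y → g.1 (u ++ x :: y :: []) =
      rhs2 (fun p q => g.1 (u ++ p :: q :: [])) x y := fun x y h => g.2 u x y [] h
  have cross : ∀ (i j : Fin (m + n)) (c d : Fin (k + l)), c < d →
      g.1 (u ++ (i, d) :: (j, c) :: []) = sgn k d c * Rop (tt m n) (pr m n) hh
        (fun a b => g.1 (u ++ (a, c) :: (b, d) :: [])) i j := by
    intro i j c d hcd
    rw [rule (i, d) (j, c) (Or.inl (Or.inl hcd)), rhs2_cross _ _ _ _ _ hcd]
  have same : ∀ (i j : Fin (m + n)) (d : Fin (k + l)), j < i →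
      g.1 (u ++ (i, d) :: (j, d) :: []) = tt m n i j * (lm k l d)⁻¹ *
        g.1 (u ++ (j, d) :: (i, d) :: []) := by
    intro i j d hij
    rw [rule (i, d) (j, d) (Or.inl (Or.inr ⟨rfl, hij⟩)), rhs2_same _ _ _ _ hij]
  change (rep0 m n k l r g).1 u = 0
  rcases hr with ⟨a, b, he, rfl⟩ | ⟨a, b, c, hab, hc, rfl⟩ | ⟨a, c, d, ha, hcd, rfl⟩ |
    ⟨a, b, c, d, hab, hcd, rfl⟩ | ⟨a, b, c, d, hab, hcd, rfl⟩ | ⟨a, c, d, ha, hcd, rfl⟩ |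
    ⟨a, b, c, hab, hc, rfl⟩
  · rw [two, rule _ _ (Or.inr ⟨rfl, he⟩), rhs2_eq]
  · simp only [map_add, map_smul, LinearMap.add_apply, LinearMap.smul_apply, Submodule.coe_add,
      Submodule.coe_smul, Pi.add_apply, Pi.smul_apply, two, smul_eq_mul]
    rw [same _ _ _ hab, tt, sgn_comm m b a, lm, if_pos hc]
    have := sgn_sq m a b
    field_simp
    linear_combination -g.1 (u ++ [(a, c), (b, c)]) * this
  · simp only [map_add, map_smul, LinearMap.add_apply, LinearMap.smul_apply, Submodule.coe_add,
      Submodule.coe_smul, Pi.add_apply, Pi.smul_apply, two, smul_eq_mul]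
    rw [cross _ _ _ _ hcd, Rop_eq, sgn_comm k d c, pr, if_pos ha]
    have := sgn_sq k c d
    field_simp
    linear_combination -g.1 (u ++ [(a, c), (a, d)]) * this
  · simp only [map_add, map_smul, LinearMap.add_apply, LinearMap.smul_apply, Submodule.coe_add,
      Submodule.coe_smul, Pi.add_apply, Pi.smul_apply, two, smul_eq_mul]
    rw [cross _ _ _ _ hcd, Rop_lt hab, sgn_comm k d c, tt, sgn_comm m b a]
    have h1 := sgn_sq k c d
    have h2 := sgn_sq m a b
    linear_combination -g.1 (u ++ [(a, c), (b, d)]) * h1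
      - g.1 (u ++ [(a, c), (b, d)]) * sgn k c d * sgn k c d * h2
  · simp only [map_add, map_sub, map_smul, LinearMap.add_apply, LinearMap.sub_apply,
      LinearMap.smul_apply, Submodule.coe_add, Submodule.coe_sub,
      Submodule.coe_smul, Pi.add_apply, Pi.sub_apply, Pi.smul_apply, two, smul_eq_mul]
    rw [cross _ _ _ _ hcd, Rop_gt hab, sgn_comm k d c, tt, sgn_comm m b a, hh]
    have h1 := sgn_sq k c d
    have h2 := sgn_sq m a b
    linear_combination -g.1 (u ++ [(a, c), (b, d)]) * h1
      - g.1 (u ++ [(a, c), (b, d)]) * sgn k c d * sgn k c d * h2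
      + sgn m a b * (qv⁻¹ - qv) * g.1 (u ++ [(b, c), (a, d)]) * h1
  · simp only [map_sub, map_smul, LinearMap.sub_apply, LinearMap.smul_apply, Submodule.coe_sub,
      Submodule.coe_smul, Pi.sub_apply, Pi.smul_apply, two, smul_eq_mul]
    rw [cross _ _ _ _ hcd, Rop_eq, sgn_comm k d c, pr, if_neg (by omega)]
    have := sgn_sq k c d
    field_simp
    linear_combination -g.1 (u ++ [(a, c), (a, d)]) * this
  · simp only [map_sub, map_smul, LinearMap.sub_apply, LinearMap.smul_apply, Submodule.coe_sub,
      Submodule.coe_smul, Pi.sub_apply, Pi.smul_apply, two, smul_eq_mul]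
    rw [same _ _ _ hab, tt, sgn_comm m b a, lm, if_neg (by omega)]
    have := sgn_sq m a b
    field_simp
    linear_combination -g.1 (u ++ [(a, c), (b, c)]) * this

/-- The representation of the quantum exterior algebra. -/
def rep (m n k l : ℕ) : QExt m n k l →ₐ[Kq] Module.End Kq (GS m n k l) :=
  RingQuot.liftAlgHom Kq ⟨rep0 m n k l, by
    rintro x y ⟨hx, rfl⟩
    rw [rep0_rel m n k l x hx, map_zero]⟩

lemma rep_gen (m n k l : ℕ) (x : Idx m n k l) :
    rep m n k l (qmk m n k l (zgen m n k l x)) = tr m n k l x := by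
  unfold rep qmk
  rw [RingQuot.liftAlgHom_mkAlgHom_apply, rep0_gen]

/-- The monomial attached to a word. -/
def mon (m n k l : ℕ) (w : List (Idx m n k l)) : QExt m n k l :=
  (w.map fun x => qmk m n k l (zgen m n k l x)).prod

lemma qmonomial_eq (m n k l N : ℕ) (f : Fin N → Idx m n k l) :
    qmonomial m n k l N f = mon m n k l (List.ofFn f) := by
  unfold qmonomial mon
  rw [List.map_ofFn]
  rfl

lemma rep_mon (m n k l : ℕ) (w : List (Idx m n k l)) (g : GS m n k l) :
    ∀ u, (rep m n k l (mon m n k l w) g).1 u = g.1 (u ++ w) := by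
  induction w with
  | nil => intro u; simp [mon]
  | cons x t ih =>
    intro u
    have : mon m n k l (x :: t) = qmk m n k l (zgen m n k l x) * mon m n k l t := by
      simp [mon]
    rw [this, map_mul, rep_gen, Module.End.mul_apply, tr_apply, ih]
    simp

/-- Irreducible words. -/
def Irr {m n k l : ℕ} (w : List (Idx m n k l)) : Prop :=
  ∀ u x y v, w = u ++ x :: y :: v → ¬ Red x y

lemma not_blt {m n k l : ℕ} {x y : Idx m n k l} : ¬ blt y x ↔ antilexLE m n k l x y := by
  unfold blt antilexLE
  constructor
  · intro h
    push Not at h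
    rcases h.1.lt_or_eq with h' | h'
    · exact Or.inl h'
    · exact Or.inr ⟨h', h.2 h'.symm⟩
  · rintro (h | h) (h' | h') <;> order

lemma irr_iff {m n k l N : ℕ} (f : Fin N → Idx m n k l) :
    Irr (List.ofFn f) ↔ admissible m n k l N f := by
  constructor
  · intro h
    have key : ∀ i (hi : i + 1 < N), ¬ Red (f ⟨i, by omega⟩) (f ⟨i + 1, hi⟩) := by
      intro i hi
      apply h ((List.ofFn f).take i) _ _ ((List.ofFn f).drop (i + 2))
      conv_lhs => rw [← List.take_append_drop i (List.ofFn f)]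
      rw [List.drop_eq_getElem_cons (by simp; omega), List.drop_eq_getElem_cons (by simp; omega)]
      simp
    have key2 : ∀ (d i : ℕ) (hi : i + d < N),
        antilexLE m n k l (f ⟨i, by omega⟩) (f ⟨i + d, hi⟩) := by
      intro d
      induction d with
      | zero => intro i hi; exact Or.inr ⟨rfl, le_refl _⟩
      | succ d ih =>
        intro i hi
        have h1 := ih i (by omega)
        have h2 := not_blt.1 (fun hb => key (i + d) hi (Or.inl hb))
        unfold antilexLE at *
        have e : i + d + 1 = i + (d + 1) := by omega
        simp only [e] at h2
        rcases h1 with h1 | h1 <;> rcases h2 with h2 | h2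
        · left; order
        · left; order
        · left; order
        · right; exact ⟨h1.1.trans h2.1, h1.2.trans h2.2⟩
    refine ⟨fun i j hij => ?_, fun i j hij he ho => ?_⟩
    · have hij' : (i : ℕ) ≤ j := hij
      have := key2 (j - i) i (by omega)
      have e : (i : ℕ) + (j - i) = j := by omega
      simpa only [e] using this
    · have hlt : (i : ℕ) + 1 < N := by omega
      have e : (⟨(i : ℕ) + 1, hlt⟩ : Fin N) = j := Fin.ext hij
      apply key i hlt
      rw [e]
      exact Or.inr ⟨he, ho⟩
  · rintro ⟨h1, h2⟩ u x y v he hr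
    have hlen : N = u.length + (v.length + 2) := by
      have := congrArg List.length he
      simpa using this
    have hi : u.length < N := by omega
    have hj : u.length + 1 < N := by omega
    have ex : f ⟨u.length, hi⟩ = x := by
      have h := List.getElem_ofFn (f := f) (i := u.length) (by simpa using hi)
      rw [← h]
      simp [he]
    have ey : f ⟨u.length + 1, hj⟩ = y := by
      have h := List.getElem_ofFn (f := f) (i := u.length + 1) (by simpa using hj)
      rw [← h]
      simp [he]
    rcases hr with hr | ⟨hr, ho⟩
    · have := h1 ⟨u.length, hi⟩ ⟨u.length + 1, hj⟩ (by simp [Fin.le_def])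
      rw [ex, ey] at this
      exact not_blt.2 this hr
    · have := h2 ⟨u.length, hi⟩ ⟨u.length + 1, hj⟩ rfl (by rw [ex, ey, hr])
      rw [ex] at this
      exact this ho

/-- The straightening rule in the algebra. -/
lemma straighten (m n k l : ℕ) (x y : Idx m n k l) (hr : Red x y) :
    ∃ c1 c2 : Kq, mon m n k l [x, y] = c1 • mon m n k l [y, x] +
      c2 • mon m n k l [(x.1, y.2), (y.1, x.2)] ∧ (blt y x ∨ c1 = 0) ∧ (y.2 < x.2 ∨ c2 = 0) := by
  have hq := qv_ne
  have rel : ∀ r ∈ relSet m n k l, qmk m n k l r = 0 := by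
    intro r hr
    have := RingQuot.mkAlgHom_rel Kq (s := qrel m n k l) (x := r) (y := 0) ⟨hr, rfl⟩
    rw [map_zero] at this
    exact this
  have two : ∀ a b, qmk m n k l (zgen m n k l a * zgen m n k l b) = mon m n k l [a, b] := by
    intro a b; simp [mon]
  have inv : ∀ (c : Kq) (P Q : QExt m n k l), c ≠ 0 → P + c • Q = 0 → Q = (-c⁻¹) • P := by
    intro c P Q hc h
    have : P = -(c • Q) := eq_neg_of_add_eq_zero_left h
    rw [this, smul_neg, neg_smul, neg_neg, smul_smul, inv_mul_cancel₀ hc, one_smul]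
  have inv2 : ∀ (c : Kq) (P Q : QExt m n k l), c ≠ 0 → P - c • Q = 0 → Q = c⁻¹ • P := by
    intro c P Q hc h
    rw [sub_eq_zero.1 h, smul_smul, inv_mul_cancel₀ hc, one_smul]
  have addz : ∀ (c : Kq) (P Q W : QExt m n k l), P = c • Q → P = c • Q + (0 : Kq) • W := by
    intro c P Q W h
    rw [zero_smul, add_zero, h]
  have sne : ∀ (t N : ℕ) (a b : Fin N), sgn t a b ≠ 0 := by
    intro t N a b; unfold sgn; split_ifs <;> simp
  obtain ⟨b, d⟩ := x
  obtain ⟨a, c⟩ := y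
  rcases hr with (hcd | ⟨hcd, hab⟩) | ⟨hxy, he⟩
  · simp only at hcd
    rcases lt_trichotomy a b with hab | hab | hab
    · have h := rel _ (Or.inr (Or.inr (Or.inr (Or.inl ⟨a, b, c, d, hab, hcd, rfl⟩))))
      rw [map_add, map_smul, two, two] at h
      have h' := inv _ _ _ (mul_ne_zero (sne _ _ _ _) (sne _ _ _ _)) h
      exact ⟨_, 0, addz _ _ _ _ h', Or.inl (Or.inl hcd), Or.inr rfl⟩
    · subst hab
      by_cases ha : (a : ℕ) < m
      · have h := rel _ (Or.inr (Or.inr (Or.inl ⟨a, c, d, ha, hcd, rfl⟩)))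
        rw [map_add, map_smul, two, two] at h
        have h' := inv _ _ _ (mul_ne_zero (sne _ _ _ _) (inv_ne_zero hq)) h
        exact ⟨_, 0, addz _ _ _ _ h', Or.inl (Or.inl hcd), Or.inr rfl⟩
      · have h := rel _ (Or.inr (Or.inr (Or.inr (Or.inr (Or.inr
          (Or.inl ⟨a, c, d, not_lt.1 ha, hcd, rfl⟩))))))
        rw [map_sub, map_smul, two, two] at h
        have h' := inv2 _ _ _ (mul_ne_zero (sne _ _ _ _) hq) h
        exact ⟨_, 0, addz _ _ _ _ h', Or.inl (Or.inl hcd), Or.inr rfl⟩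
    · have h := rel _ (Or.inr (Or.inr (Or.inr (Or.inr (Or.inl ⟨a, b, c, d, hab, hcd, rfl⟩)))))
      rw [map_sub, map_add, map_smul, map_smul, two, two, two, add_sub_right_comm] at h
      have h' := inv _ _ _ (mul_ne_zero (sne _ _ _ _) (sne _ _ _ _)) h
      rw [smul_sub, smul_smul, sub_eq_add_neg, ← neg_smul] at h'
      exact ⟨_, _, h', Or.inl (Or.inl hcd), Or.inl hcd⟩
  · simp only at hcd hab
    obtain rfl : d = c := hcd.symm
    by_cases hc : (d : ℕ) < k
    · have h := rel _ (Or.inr (Or.inl ⟨a, b, d, hab, hc, rfl⟩))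
      rw [map_add, map_smul, two, two] at h
      have h' := inv _ _ _ (mul_ne_zero (sne _ _ _ _) (inv_ne_zero hq)) h
      exact ⟨_, 0, addz _ _ _ _ h', Or.inl (Or.inr ⟨rfl, hab⟩), Or.inr rfl⟩
    · have h := rel _ (Or.inr (Or.inr (Or.inr (Or.inr (Or.inr
          (Or.inr ⟨a, b, d, hab, not_lt.1 hc, rfl⟩))))))
      rw [map_sub, map_smul, two, two] at h
      have h' := inv2 _ _ _ (mul_ne_zero (sne _ _ _ _) hq) h
      exact ⟨_, 0, addz _ _ _ _ h', Or.inl (Or.inr ⟨rfl, hab⟩), Or.inr rfl⟩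
  · rw [← hxy]
    have h := rel _ (Or.inl ⟨b, d, he, rfl⟩)
    rw [two] at h
    exact ⟨0, 0, by rw [h]; simp, Or.inr rfl, Or.inr rfl⟩

lemma mon_append (m n k l : ℕ) (u v : List (Idx m n k l)) :
    mon m n k l (u ++ v) = mon m n k l u * mon m n k l v := by
  simp [mon]

lemma mon_mem (m n k l N : ℕ) (M : ℕ) : ∀ w : List (Idx m n k l), wt w = M → w.length = N →
    mon m n k l w ∈ Submodule.span Kq
      {x | ∃ w' : List (Idx m n k l), w'.length = N ∧ Irr w' ∧ x = mon m n k l w'} := by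
  induction M using Nat.strong_induction_on with
  | _ M ih =>
  intro w hM hN
  by_cases hw : Irr w
  · exact Submodule.subset_span ⟨w, hN, hw, rfl⟩
  unfold Irr at hw
  push Not at hw
  obtain ⟨u, x, y, v, rfl, hr⟩ := hw
  obtain ⟨c1, c2, he, h1, h2⟩ := straighten m n k l x y hr
  have exp : ∀ p q, mon m n k l (u ++ p :: q :: v) =
      mon m n k l u * (mon m n k l [p, q] * mon m n k l v) := by
    intro p q
    rw [← mon_append, ← mon_append]
    rfl
  rw [exp, he, add_mul, mul_add, smul_mul_assoc, smul_mul_assoc, mul_smul_comm, mul_smul_comm,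
    ← exp, ← exp]
  have hN' : ∀ p q, (u ++ p :: q :: v).length = N := by
    intro p q
    rw [← hN]; simp
  apply Submodule.add_mem
  · rcases h1 with h1 | h1
    · apply Submodule.smul_mem
      exact ih _ (hM ▸ wt_lt u (by simp) h1) _ rfl (hN' _ _)
    · rw [h1, zero_smul]; exact Submodule.zero_mem _
  · rcases h2 with h2 | h2
    · apply Submodule.smul_mem
      exact ih _ (hM ▸ wt_lt u (by simp) (Or.inl h2)) _ rfl (hN' _ _)
    · rw [h2, zero_smul]; exact Submodule.zero_mem _

end Rep

end QProof

/-- Lemma 4.5 of the paper: the images in `A` of the monomials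
`z_{a₁b₁}·z_{a₂b₂}⋯z_{a_N b_N}` indexed by admissible sequences form a `K`-basis of the
degree-`N` piece `A_N`. -/
theorem stmt10 (m n k l N : ℕ) (hmn : 1 ≤ m + n) (hkl : 1 ≤ k + l) :
    LinearIndependent Kq
        (fun f : {f : Fin N → Idx m n k l // admissible m n k l N f} =>
          qmonomial m n k l N f.val) ∧
      Submodule.span Kq
          (Set.range fun f : {f : Fin N → Idx m n k l // admissible m n k l N f} =>
            qmonomial m n k l N f.val) =
        qdeg m n k l N := by
  classical
  constructor
  · rw [linearIndependent_iff']
    intro s c hc f hf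
    let g0 : List (Idx m n k l) → Kq := fun w => if w = List.ofFn f.1 then 1 else 0
    let g : QProof.GS m n k l :=
      ⟨QProof.gf g0, fun u x y v hr => QProof.gf_rule g0 _ u x y v rfl hr⟩
    have h := congrArg (fun a => (QProof.rep m n k l a g).1 []) hc
    have hv : ∀ f' : {f : Fin N → Idx m n k l // admissible m n k l N f},
        (QProof.rep m n k l (qmonomial m n k l N f'.1) g).1 [] = if f' = f then 1 else 0 := by
      intro f'
      rw [QProof.qmonomial_eq, QProof.rep_mon, List.nil_append]
      change QProof.gf g0 _ = _
      rw [QProof.gf_irred g0 _ ((QProof.irr_iff f'.1).2 f'.2)]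
      simp only [g0, List.ofFn_inj, Subtype.ext_iff]
    simp only [map_sum, map_smul, LinearMap.sum_apply, LinearMap.smul_apply,
      AddSubmonoidClass.coe_finsetSum, Finset.sum_apply, Submodule.coe_smul, Pi.smul_apply, hv,
      smul_eq_mul, mul_ite, mul_one, mul_zero, Finset.sum_ite_eq', hf, if_true, map_zero,
      LinearMap.zero_apply, Submodule.coe_zero, Pi.zero_apply] at h
    exact h
  · apply le_antisymm
    · rw [Submodule.span_le]
      rintro _ ⟨f, rfl⟩
      exact Submodule.subset_span ⟨f.1, rfl⟩
    · unfold qdeg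
      rw [Submodule.span_le]
      rintro _ ⟨f, rfl⟩
      rw [QProof.qmonomial_eq]
      refine Submodule.span_mono ?_ (QProof.mon_mem m n k l N _ (List.ofFn f) rfl (by simp))
      rintro _ ⟨w, hw, hi, rfl⟩
      subst hw
      have e : List.ofFn w.get = w := List.ofFn_get w
      refine ⟨⟨w.get, (QProof.irr_iff _).1 (by rw [e]; exact hi)⟩, ?_⟩
      simp only [QProof.qmonomial_eq, e]
end
end

section
/- For every N ≥ 0, the K-dimension of A_N equals ∑_{j=0}^{N} binom(mk+nl, N−j)·binom(ml+nk+j−1, j), where the term binom(ml+nk+j−1, j) is understood as 1 when j = 0; that is, the graded dimension of the quantum exterior algebra A coincides with the graded dimension of the classical exterior superalgebra of ℂ^{m|n} ⊗ ℂ^{k|l} (the representation ℂ_q^{m|n} ⊗ ℂ_q^{k|l} is flat). -/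
noncomputable section

set_option linter.unusedSimpArgs false
set_option linter.unusedVariables false
namespace QE
section check
variable {K : Type} [Field K] {R Q : Type} [LinearOrder R] [LinearOrder Q]
  {C : Type} [Ring C] [Algebra K C]

/-- coefficient data -/
structure Dat (K R Q : Type) [Field K] where
  s : R → R → K
  s' : Q → Q → K
  t : R → K
  w : R → K
  t' : Q → K
  w' : Q → K
  h : K
  ss : ∀ a b, s a b = s b a
  ss' : ∀ a b, s' a b = s' b a
  sq : ∀ a b, s a b * s a b = 1
  sq' : ∀ a b, s' a b * s' a b = 1
  tw : ∀ a, t a * w a = 1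
  tw' : ∀ a, t' a * w' a = 1
  th' : ∀ a, t' a - w' a = h
  th : ∀ a, t a - w a = h

/-- x-commutation coefficient: row part -/
def Dat.f (D : Dat K R Q) (b a : R) : K := if a = b then D.t b else D.s a b
def Dat.g (D : Dat K R Q) (d c : Q) : K := if c = d then D.w' d else D.s' c d
def Dat.kk (D : Dat K R Q) (b : R) (d : Q) (a : R) (c : Q) : K :=
  if b < a ∧ c < d then - (D.s' c d * D.h) else 0

/-- position: `(a,c)` before `(b,d)` -/
def Bef (a : R) (c : Q) (b : R) (d : Q) : Prop := c < d ∨ (c = d ∧ b < a)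


/-- the commutation relations before `(b,d)` -/
def Hyp (D : Dat K R Q) (z : R → Q → C) (b : R) (d : Q) : Prop :=
  ∀ a c a' c', Bef a c a' c' → Bef a' c' b d →
      z a' c' * z a c = (-(D.f a' a * D.g c' c)) • (z a c * z a' c') +
        D.kk a' c' a c • (z a' c * z a c')

variable {D : Dat K R Q} {z : R → Q → C} {b : R} {d : Q}

theorem R1 (H : Hyp D z b d) {a a' : R} {c : Q} (h1 : a < a') (h2 : c < d ∨ (c = d ∧ b < a)) :
    z a c * z a' c = (-(D.s a a' * D.w' c)) • (z a' c * z a c) := by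
  have := H a' c a c (Or.inr ⟨rfl, h1⟩) h2
  simpa [Dat.f, Dat.g, Dat.kk, h1.ne', D.ss a' a] using this
theorem R2 (H : Hyp D z b d) {a : R} {c c' : Q} (h1 : c < c') (h2 : c' < d ∨ (c' = d ∧ b < a)) :
    z a c' * z a c = (-(D.t a * D.s' c c')) • (z a c * z a c') := by
  have := H a c a c' (Or.inl h1) h2
  simpa [Dat.f, Dat.g, Dat.kk, h1.ne] using this
theorem R3 (H : Hyp D z b d) {a a' : R} {c c' : Q} (h1 : a < a') (h3 : c < c')
    (h2 : c' < d ∨ (c' = d ∧ b < a')) :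
    z a' c' * z a c = (-(D.s a a' * D.s' c c')) • (z a c * z a' c') := by
  have := H a c a' c' (Or.inl h3) h2
  simpa [Dat.f, Dat.g, Dat.kk, h1.ne, h1.not_gt, h3.ne] using this
theorem R4 (H : Hyp D z b d) {a a' : R} {c c' : Q} (h1 : a < a') (h3 : c < c')
    (h2 : c' < d ∨ (c' = d ∧ b < a)) :
    z a c' * z a' c = (-(D.s a a' * D.s' c c')) • (z a' c * z a c') +
        (-(D.s' c c' * D.h)) • (z a c * z a' c') := by
  have := H a' c a c' (Or.inl h3) h2
  simpa [Dat.f, Dat.g, Dat.kk, h1.ne', h1, h3, h3.ne, D.ss a' a] using this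
theorem S1 (H : Hyp D z b d) {a a' : R} {c : Q} (h1 : a < a') (h2 : c < d ∨ (c = d ∧ b < a))
    (y : C) : z a c * (z a' c * y) = (-(D.s a a' * D.w' c)) • (z a' c * (z a c * y)) := by
  rw [← mul_assoc, R1 H h1 h2, smul_mul_assoc, mul_assoc]
theorem S2 (H : Hyp D z b d) {a : R} {c c' : Q} (h1 : c < c') (h2 : c' < d ∨ (c' = d ∧ b < a))
    (y : C) : z a c' * (z a c * y) = (-(D.t a * D.s' c c')) • (z a c * (z a c' * y)) := by
  rw [← mul_assoc, R2 H h1 h2, smul_mul_assoc, mul_assoc]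
theorem S3 (H : Hyp D z b d) {a a' : R} {c c' : Q} (h1 : a < a') (h3 : c < c')
    (h2 : c' < d ∨ (c' = d ∧ b < a')) (y : C) :
    z a' c' * (z a c * y) = (-(D.s a a' * D.s' c c')) • (z a c * (z a' c' * y)) := by
  rw [← mul_assoc, R3 H h1 h3 h2, smul_mul_assoc, mul_assoc]
theorem S4 (H : Hyp D z b d) {a a' : R} {c c' : Q} (h1 : a < a') (h3 : c < c')
    (h2 : c' < d ∨ (c' = d ∧ b < a)) (y : C) :
    z a c' * (z a' c * y) = (-(D.s a a' * D.s' c c')) • (z a' c * (z a c' * y)) +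
        (-(D.s' c c' * D.h)) • (z a c * (z a' c' * y)) := by
  rw [← mul_assoc, R4 H h1 h3 h2, add_mul, smul_mul_assoc, mul_assoc, smul_mul_assoc,
      mul_assoc]

/-- compatibility of the skew derivation with the relation between two earlier pairs -/
def A2 (D : Dat K R Q) (z : R → Q → C) (b : R) (d : Q) (a : R) (c : Q) (a' : R) (c' : Q) : Prop :=
    (-(D.f b a' * D.g d c')) • (z a' c' * (D.kk b d a c • (z b c * z a d)))
      + (D.kk b d a' c' • (z b c' * z a' d)) * z a c =
    (-(D.f a' a * D.g c' c)) • ((-(D.f b a * D.g d c)) • (z a c * (D.kk b d a' c' • (z b c' * z a' d)))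
        + (D.kk b d a c • (z b c * z a d)) * z a' c') +
    D.kk a' c' a c • ((-(D.f b a' * D.g d c)) • (z a' c * (D.kk b d a c' • (z b c' * z a d)))
        + (D.kk b d a' c • (z b c * z a' d)) * z a c')

theorem caseI1 (H : Hyp D z b d) {a a' : R} {c c' : Q} (h1 : b < a) (h3 : a < a') (h7 : c < c') (h9 : c' < d) :
    A2 D z b d a c a' c' := by
  have q1 := D.sq b a
  have h2 : b < a' := by order
  have q2 := D.sq b a'
  have q3 := D.sq a a'
  have q4 := D.tw b
  have r4 := D.th b
  have q5 := D.tw a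
  have r5 := D.th a
  have q6 := D.tw a'
  have r6 := D.th a'
  have q7 := D.sq' c c'
  have h8 : c < d := by order
  have q8 := D.sq' c d
  have q9 := D.sq' c' d
  have q10 := D.tw' c
  have r10 := D.th' c
  have q11 := D.tw' c'
  have r11 := D.th' c'
  have q12 := D.tw' d
  have r12 := D.th' d
  unfold A2
  simp only [Dat.f, Dat.g, Dat.kk, h1, h1.ne, h1.ne', h1.not_gt, D.ss a b, h2, h2.ne, h2.ne', h2.not_gt, D.ss a' b, h3, h3.ne, h3.ne', h3.not_gt, D.ss a' a, h7, h7.ne, h7.ne', h7.not_gt, D.ss' c' c, h8, h8.ne, h8.ne', h8.not_gt, D.ss' d c, h9, h9.ne, h9.ne', h9.not_gt, D.ss' d c', lt_irrefl,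
    and_true, true_and, and_false, false_and, if_true, if_false, true_or, or_true, and_self, false_or, or_false,
    smul_add, mul_add, add_mul, smul_mul_assoc, mul_smul_comm, mul_assoc, R1 H, R2 H, R3 H, R4 H,
    S1 H, S2 H, S3 H, S4 H, zero_smul, smul_zero, add_zero, zero_add, mul_zero, zero_mul]
  match_scalars <;> grind
theorem caseI2 (H : Hyp D z b d) {a' : R} {c c' : Q} (h1 : b < a') (h4 : c < c') (h6 : c' < d) :
    A2 D z b d b c a' c' := by
  have q1 := D.sq b a'
  have q2 := D.tw b
  have r2 := D.th b
  have q3 := D.tw a'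
  have r3 := D.th a'
  have q4 := D.sq' c c'
  have h5 : c < d := by order
  have q5 := D.sq' c d
  have q6 := D.sq' c' d
  have q7 := D.tw' c
  have r7 := D.th' c
  have q8 := D.tw' c'
  have r8 := D.th' c'
  have q9 := D.tw' d
  have r9 := D.th' d
  unfold A2
  simp only [Dat.f, Dat.g, Dat.kk, h1, h1.ne, h1.ne', h1.not_gt, D.ss a' b, h4, h4.ne, h4.ne', h4.not_gt, D.ss' c' c, h5, h5.ne, h5.ne', h5.not_gt, D.ss' d c, h6, h6.ne, h6.ne', h6.not_gt, D.ss' d c', lt_irrefl,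
    and_true, true_and, and_false, false_and, if_true, if_false, true_or, or_true, and_self, false_or, or_false,
    smul_add, mul_add, add_mul, smul_mul_assoc, mul_smul_comm, mul_assoc, R1 H, R2 H, R3 H, R4 H,
    S1 H, S2 H, S3 H, S4 H, zero_smul, smul_zero, add_zero, zero_add, mul_zero, zero_mul]
  match_scalars <;> grind
theorem caseI3 (H : Hyp D z b d) {a a' : R} {c c' : Q} (h1 : a < b) (h3 : b < a') (h7 : c < c') (h9 : c' < d) :
    A2 D z b d a c a' c' := by
  have q1 := D.sq a b
  have h2 : a < a' := by order
  have q2 := D.sq a a'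
  have q3 := D.sq b a'
  have q4 := D.tw a
  have r4 := D.th a
  have q5 := D.tw b
  have r5 := D.th b
  have q6 := D.tw a'
  have r6 := D.th a'
  have q7 := D.sq' c c'
  have h8 : c < d := by order
  have q8 := D.sq' c d
  have q9 := D.sq' c' d
  have q10 := D.tw' c
  have r10 := D.th' c
  have q11 := D.tw' c'
  have r11 := D.th' c'
  have q12 := D.tw' d
  have r12 := D.th' d
  unfold A2
  simp only [Dat.f, Dat.g, Dat.kk, h1, h1.ne, h1.ne', h1.not_gt, D.ss b a, h2, h2.ne, h2.ne', h2.not_gt, D.ss a' a, h3, h3.ne, h3.ne', h3.not_gt, D.ss a' b, h7, h7.ne, h7.ne', h7.not_gt, D.ss' c' c, h8, h8.ne, h8.ne', h8.not_gt, D.ss' d c, h9, h9.ne, h9.ne', h9.not_gt, D.ss' d c', lt_irrefl,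
    and_true, true_and, and_false, false_and, if_true, if_false, true_or, or_true, and_self, false_or, or_false,
    smul_add, mul_add, add_mul, smul_mul_assoc, mul_smul_comm, mul_assoc, R1 H, R2 H, R3 H, R4 H,
    S1 H, S2 H, S3 H, S4 H, zero_smul, smul_zero, add_zero, zero_add, mul_zero, zero_mul]
  match_scalars <;> grind
theorem caseI4 (H : Hyp D z b d) {a : R} {c c' : Q} (h1 : b < a) (h4 : c < c') (h6 : c' < d) :
    A2 D z b d a c a c' := by
  have q1 := D.sq b a
  have q2 := D.tw b
  have r2 := D.th b
  have q3 := D.tw a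
  have r3 := D.th a
  have q4 := D.sq' c c'
  have h5 : c < d := by order
  have q5 := D.sq' c d
  have q6 := D.sq' c' d
  have q7 := D.tw' c
  have r7 := D.th' c
  have q8 := D.tw' c'
  have r8 := D.th' c'
  have q9 := D.tw' d
  have r9 := D.th' d
  unfold A2
  simp only [Dat.f, Dat.g, Dat.kk, h1, h1.ne, h1.ne', h1.not_gt, D.ss a b, h4, h4.ne, h4.ne', h4.not_gt, D.ss' c' c, h5, h5.ne, h5.ne', h5.not_gt, D.ss' d c, h6, h6.ne, h6.ne', h6.not_gt, D.ss' d c', lt_irrefl,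
    and_true, true_and, and_false, false_and, if_true, if_false, true_or, or_true, and_self, false_or, or_false,
    smul_add, mul_add, add_mul, smul_mul_assoc, mul_smul_comm, mul_assoc, R1 H, R2 H, R3 H, R4 H,
    S1 H, S2 H, S3 H, S4 H, zero_smul, smul_zero, add_zero, zero_add, mul_zero, zero_mul]
  match_scalars <;> grind
theorem caseI5 (H : Hyp D z b d) {a' a : R} {c c' : Q} (h1 : b < a') (h3 : a' < a) (h7 : c < c') (h9 : c' < d) :
    A2 D z b d a c a' c' := by
  have q1 := D.sq b a'
  have h2 : b < a := by order
  have q2 := D.sq b a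
  have q3 := D.sq a' a
  have q4 := D.tw b
  have r4 := D.th b
  have q5 := D.tw a'
  have r5 := D.th a'
  have q6 := D.tw a
  have r6 := D.th a
  have q7 := D.sq' c c'
  have h8 : c < d := by order
  have q8 := D.sq' c d
  have q9 := D.sq' c' d
  have q10 := D.tw' c
  have r10 := D.th' c
  have q11 := D.tw' c'
  have r11 := D.th' c'
  have q12 := D.tw' d
  have r12 := D.th' d
  unfold A2
  simp only [Dat.f, Dat.g, Dat.kk, h1, h1.ne, h1.ne', h1.not_gt, D.ss a' b, h2, h2.ne, h2.ne', h2.not_gt, D.ss a b, h3, h3.ne, h3.ne', h3.not_gt, D.ss a a', h7, h7.ne, h7.ne', h7.not_gt, D.ss' c' c, h8, h8.ne, h8.ne', h8.not_gt, D.ss' d c, h9, h9.ne, h9.ne', h9.not_gt, D.ss' d c', lt_irrefl,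
    and_true, true_and, and_false, false_and, if_true, if_false, true_or, or_true, and_self, false_or, or_false,
    smul_add, mul_add, add_mul, smul_mul_assoc, mul_smul_comm, mul_assoc, R1 H, R2 H, R3 H, R4 H,
    S1 H, S2 H, S3 H, S4 H, zero_smul, smul_zero, add_zero, zero_add, mul_zero, zero_mul]
  match_scalars <;> grind
theorem caseI6 (H : Hyp D z b d) {a : R} {c c' : Q} (h1 : b < a) (h4 : c < c') (h6 : c' < d) :
    A2 D z b d a c b c' := by
  have q1 := D.sq b a
  have q2 := D.tw b
  have r2 := D.th b
  have q3 := D.tw a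
  have r3 := D.th a
  have q4 := D.sq' c c'
  have h5 : c < d := by order
  have q5 := D.sq' c d
  have q6 := D.sq' c' d
  have q7 := D.tw' c
  have r7 := D.th' c
  have q8 := D.tw' c'
  have r8 := D.th' c'
  have q9 := D.tw' d
  have r9 := D.th' d
  unfold A2
  simp only [Dat.f, Dat.g, Dat.kk, h1, h1.ne, h1.ne', h1.not_gt, D.ss a b, h4, h4.ne, h4.ne', h4.not_gt, D.ss' c' c, h5, h5.ne, h5.ne', h5.not_gt, D.ss' d c, h6, h6.ne, h6.ne', h6.not_gt, D.ss' d c', lt_irrefl,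
    and_true, true_and, and_false, false_and, if_true, if_false, true_or, or_true, and_self, false_or, or_false,
    smul_add, mul_add, add_mul, smul_mul_assoc, mul_smul_comm, mul_assoc, R1 H, R2 H, R3 H, R4 H,
    S1 H, S2 H, S3 H, S4 H, zero_smul, smul_zero, add_zero, zero_add, mul_zero, zero_mul]
  match_scalars <;> grind
theorem caseI7 (H : Hyp D z b d) {a' a : R} {c c' : Q} (h1 : a' < b) (h3 : b < a) (h7 : c < c') (h9 : c' < d) :
    A2 D z b d a c a' c' := by
  have q1 := D.sq a' b
  have h2 : a' < a := by order
  have q2 := D.sq a' a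
  have q3 := D.sq b a
  have q4 := D.tw a'
  have r4 := D.th a'
  have q5 := D.tw b
  have r5 := D.th b
  have q6 := D.tw a
  have r6 := D.th a
  have q7 := D.sq' c c'
  have h8 : c < d := by order
  have q8 := D.sq' c d
  have q9 := D.sq' c' d
  have q10 := D.tw' c
  have r10 := D.th' c
  have q11 := D.tw' c'
  have r11 := D.th' c'
  have q12 := D.tw' d
  have r12 := D.th' d
  unfold A2
  simp only [Dat.f, Dat.g, Dat.kk, h1, h1.ne, h1.ne', h1.not_gt, D.ss b a', h2, h2.ne, h2.ne', h2.not_gt, D.ss a a', h3, h3.ne, h3.ne', h3.not_gt, D.ss a b, h7, h7.ne, h7.ne', h7.not_gt, D.ss' c' c, h8, h8.ne, h8.ne', h8.not_gt, D.ss' d c, h9, h9.ne, h9.ne', h9.not_gt, D.ss' d c', lt_irrefl,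
    and_true, true_and, and_false, false_and, if_true, if_false, true_or, or_true, and_self, false_or, or_false,
    smul_add, mul_add, add_mul, smul_mul_assoc, mul_smul_comm, mul_assoc, R1 H, R2 H, R3 H, R4 H,
    S1 H, S2 H, S3 H, S4 H, zero_smul, smul_zero, add_zero, zero_add, mul_zero, zero_mul]
  match_scalars <;> grind
theorem caseII1 (H : Hyp D z b d) {a a' : R} {c : Q} (h1 : b < a) (h3 : a < a') (h7 : c < d) :
    A2 D z b d a c a' d := by
  have q1 := D.sq b a
  have h2 : b < a' := by order
  have q2 := D.sq b a'
  have q3 := D.sq a a'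
  have q4 := D.tw b
  have r4 := D.th b
  have q5 := D.tw a
  have r5 := D.th a
  have q6 := D.tw a'
  have r6 := D.th a'
  have q7 := D.sq' c d
  have q8 := D.tw' c
  have r8 := D.th' c
  have q9 := D.tw' d
  have r9 := D.th' d
  unfold A2
  simp only [Dat.f, Dat.g, Dat.kk, h1, h1.ne, h1.ne', h1.not_gt, D.ss a b, h2, h2.ne, h2.ne', h2.not_gt, D.ss a' b, h3, h3.ne, h3.ne', h3.not_gt, D.ss a' a, h7, h7.ne, h7.ne', h7.not_gt, D.ss' d c, lt_irrefl,
    and_true, true_and, and_false, false_and, if_true, if_false, true_or, or_true, and_self, false_or, or_false,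
    smul_add, mul_add, add_mul, smul_mul_assoc, mul_smul_comm, mul_assoc, R1 H, R2 H, R3 H, R4 H,
    S1 H, S2 H, S3 H, S4 H, zero_smul, smul_zero, add_zero, zero_add, mul_zero, zero_mul]
  match_scalars <;> grind
theorem caseII2 (H : Hyp D z b d) {a : R} {c : Q} (h1 : b < a) (h4 : c < d) (hz : z a d * z a d = 0 ∨ D.t a * D.t' d = -1) :
    A2 D z b d a c a d := by
  have q1 := D.sq b a
  have q2 := D.tw b
  have r2 := D.th b
  have q3 := D.tw a
  have r3 := D.th a
  have q4 := D.sq' c d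
  have q5 := D.tw' c
  have r5 := D.th' c
  have q6 := D.tw' d
  have r6 := D.th' d
  unfold A2
  simp only [Dat.f, Dat.g, Dat.kk, h1, h1.ne, h1.ne', h1.not_gt, D.ss a b, h4, h4.ne, h4.ne', h4.not_gt, D.ss' d c, lt_irrefl,
    and_true, true_and, and_false, false_and, if_true, if_false, true_or, or_true, and_self, false_or, or_false,
    smul_add, mul_add, add_mul, smul_mul_assoc, mul_smul_comm, mul_assoc, R1 H, R2 H, R3 H, R4 H,
    S1 H, S2 H, S3 H, S4 H, zero_smul, smul_zero, add_zero, zero_add, mul_zero, zero_mul]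
  rcases hz with hz | hz
  · have hz' : ∀ y, z a d * (z a d * y) = 0 := by
      intro y; rw [← mul_assoc, hz, zero_mul]
    simp only [hz, hz', smul_zero, mul_zero, add_zero, zero_add]
  · match_scalars <;> grind
theorem caseII3 (H : Hyp D z b d) {a' a : R} {c : Q} (h1 : b < a') (h3 : a' < a) (h7 : c < d) :
    A2 D z b d a c a' d := by
  have q1 := D.sq b a'
  have h2 : b < a := by order
  have q2 := D.sq b a
  have q3 := D.sq a' a
  have q4 := D.tw b
  have r4 := D.th b
  have q5 := D.tw a'
  have r5 := D.th a'
  have q6 := D.tw a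
  have r6 := D.th a
  have q7 := D.sq' c d
  have q8 := D.tw' c
  have r8 := D.th' c
  have q9 := D.tw' d
  have r9 := D.th' d
  unfold A2
  simp only [Dat.f, Dat.g, Dat.kk, h1, h1.ne, h1.ne', h1.not_gt, D.ss a' b, h2, h2.ne, h2.ne', h2.not_gt, D.ss a b, h3, h3.ne, h3.ne', h3.not_gt, D.ss a a', h7, h7.ne, h7.ne', h7.not_gt, D.ss' d c, lt_irrefl,
    and_true, true_and, and_false, false_and, if_true, if_false, true_or, or_true, and_self, false_or, or_false,
    smul_add, mul_add, add_mul, smul_mul_assoc, mul_smul_comm, mul_assoc, R1 H, R2 H, R3 H, R4 H,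
    S1 H, S2 H, S3 H, S4 H, zero_smul, smul_zero, add_zero, zero_add, mul_zero, zero_mul]
  match_scalars <;> grind
theorem caseIII1 (H : Hyp D z b d) {a' a : R} {c : Q} (h1 : b < a') (h3 : a' < a) (h7 : c < d) :
    A2 D z b d a c a' c := by
  have q1 := D.sq b a'
  have h2 : b < a := by order
  have q2 := D.sq b a
  have q3 := D.sq a' a
  have q4 := D.tw b
  have r4 := D.th b
  have q5 := D.tw a'
  have r5 := D.th a'
  have q6 := D.tw a
  have r6 := D.th a
  have q7 := D.sq' c d
  have q8 := D.tw' c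
  have r8 := D.th' c
  have q9 := D.tw' d
  have r9 := D.th' d
  unfold A2
  simp only [Dat.f, Dat.g, Dat.kk, h1, h1.ne, h1.ne', h1.not_gt, D.ss a' b, h2, h2.ne, h2.ne', h2.not_gt, D.ss a b, h3, h3.ne, h3.ne', h3.not_gt, D.ss a a', h7, h7.ne, h7.ne', h7.not_gt, D.ss' d c, lt_irrefl,
    and_true, true_and, and_false, false_and, if_true, if_false, true_or, or_true, and_self, false_or, or_false,
    smul_add, mul_add, add_mul, smul_mul_assoc, mul_smul_comm, mul_assoc, R1 H, R2 H, R3 H, R4 H,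
    S1 H, S2 H, S3 H, S4 H, zero_smul, smul_zero, add_zero, zero_add, mul_zero, zero_mul]
  match_scalars <;> grind
theorem caseIII2 (H : Hyp D z b d) {a : R} {c : Q} (h1 : b < a) (h4 : c < d) (hz : z b c * z b c = 0 ∨ D.t b * D.t' c = -1) :
    A2 D z b d a c b c := by
  have q1 := D.sq b a
  have q2 := D.tw b
  have r2 := D.th b
  have q3 := D.tw a
  have r3 := D.th a
  have q4 := D.sq' c d
  have q5 := D.tw' c
  have r5 := D.th' c
  have q6 := D.tw' d
  have r6 := D.th' d
  unfold A2
  simp only [Dat.f, Dat.g, Dat.kk, h1, h1.ne, h1.ne', h1.not_gt, D.ss a b, h4, h4.ne, h4.ne', h4.not_gt, D.ss' d c, lt_irrefl,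
    and_true, true_and, and_false, false_and, if_true, if_false, true_or, or_true, and_self, false_or, or_false,
    smul_add, mul_add, add_mul, smul_mul_assoc, mul_smul_comm, mul_assoc, R1 H, R2 H, R3 H, R4 H,
    S1 H, S2 H, S3 H, S4 H, zero_smul, smul_zero, add_zero, zero_add, mul_zero, zero_mul]
  rcases hz with hz | hz
  · have hz' : ∀ y, z b c * (z b c * y) = 0 := by
      intro y; rw [← mul_assoc, hz, zero_mul]
    simp only [hz, hz', smul_zero, mul_zero, add_zero, zero_add]
  · match_scalars <;> grind
theorem caseIII3 (H : Hyp D z b d) {a' a : R} {c : Q} (h1 : a' < b) (h3 : b < a) (h7 : c < d) :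
    A2 D z b d a c a' c := by
  have q1 := D.sq a' b
  have h2 : a' < a := by order
  have q2 := D.sq a' a
  have q3 := D.sq b a
  have q4 := D.tw a'
  have r4 := D.th a'
  have q5 := D.tw b
  have r5 := D.th b
  have q6 := D.tw a
  have r6 := D.th a
  have q7 := D.sq' c d
  have q8 := D.tw' c
  have r8 := D.th' c
  have q9 := D.tw' d
  have r9 := D.th' d
  unfold A2
  simp only [Dat.f, Dat.g, Dat.kk, h1, h1.ne, h1.ne', h1.not_gt, D.ss b a', h2, h2.ne, h2.ne', h2.not_gt, D.ss a a', h3, h3.ne, h3.ne', h3.not_gt, D.ss a b, h7, h7.ne, h7.ne', h7.not_gt, D.ss' d c, lt_irrefl,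
    and_true, true_and, and_false, false_and, if_true, if_false, true_or, or_true, and_self, false_or, or_false,
    smul_add, mul_add, add_mul, smul_mul_assoc, mul_smul_comm, mul_assoc, R1 H, R2 H, R3 H, R4 H,
    S1 H, S2 H, S3 H, S4 H, zero_smul, smul_zero, add_zero, zero_add, mul_zero, zero_mul]
  match_scalars <;> grind

theorem checkA2 (H : Hyp D z b d)
    (hz : ∀ a c, Bef a c b d → z a c * z a c = 0 ∨ D.t a * D.t' c = -1)
    (a : R) (c : Q) (a' : R) (c' : Q) (h1 : Bef a c a' c') (h2 : Bef a' c' b d) :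
    A2 D z b d a c a' c' := by
  rcases h1 with h1 | ⟨rfl, h1⟩ <;> rcases h2 with h2 | ⟨rfl, h2⟩
  · by_cases hb : a ≤ b ∧ a' ≤ b
    · simp [A2, Dat.kk, hb.1.not_gt, hb.2.not_gt]
    rcases lt_trichotomy a a' with aa | rfl | aa
    · rcases lt_trichotomy a b with ab | rfl | ab
      · exact caseI3 H ab (by grind) h1 h2
      · exact caseI2 H aa h1 h2
      · exact caseI1 H ab aa h1 h2
    · exact caseI4 H (by grind) h1 h2
    · rcases lt_trichotomy a' b with ab | rfl | ab
      · exact caseI7 H ab (by grind) h1 h2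
      · exact caseI6 H aa h1 h2
      · exact caseI5 H ab aa h1 h2
  · rcases le_or_gt a b with ab | ab
    · have : ¬ a' < a := by order
      simp [A2, Dat.kk, ab.not_gt, this]
    rcases lt_trichotomy a a' with aa | rfl | aa
    · exact caseII1 H ab aa h1
    · exact caseII2 H ab h1 (hz _ _ (Or.inr ⟨rfl, h2⟩))
    · exact caseII3 H h2 aa h1
  · rcases le_or_gt a b with ab | ab
    · have : ¬ b < a' := by order
      simp [A2, Dat.kk, ab.not_gt, this]
    rcases lt_trichotomy a' b with ab' | rfl | ab'
    · exact caseIII3 H ab' ab h2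
    · exact caseIII2 H ab h2 (hz _ _ (Or.inl h2))
    · exact caseIII1 H ab' h1 h2
  · simp [A2, Dat.kk]

theorem checkA3 (H : Hyp D z b d) (a : R) (c : Q) (h : Bef a c b d) (ht : D.t a = D.t' c) :
    (-(D.f b a * D.g d c)) • (z a c * (D.kk b d a c • (z b c * z a d))) +
      (D.kk b d a c • (z b c * z a d)) * z a c = 0 := by
  by_cases hh : b < a ∧ c < d
  · obtain ⟨h1, h4⟩ := hh
    have q1 := D.sq b a
    have q4 := D.sq' c d
    have q2 := D.tw a
    have q3 := D.tw' c
    simp only [Dat.f, Dat.g, Dat.kk, h1, h1.ne', h4, h4.ne, D.ss a b, and_self, if_true, if_false,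
      smul_mul_assoc, mul_smul_comm, mul_assoc, R1 H, R2 H, S1 H, S2 H, true_or, or_true, and_true]
    match_scalars <;> grind
  · simp [Dat.kk, hh]

theorem checkA4 (a : R) (c : Q) :
    D.kk b d a c • ((-(D.f b b * D.g d c)) • (z b c * (D.kk b d a d • (z b d * z a d)))
        + (D.kk b d b c • (z b c * z b d)) * z a d) = 0 := by
  simp [Dat.kk]

theorem checkA5 (a : R) (c : Q) (h : Bef a c b d) (ht : D.t b = D.t' d) :
    D.kk b d a c * ((-(D.f b b * D.g d c)) * (-(D.f b a * D.g d d)) + (-(D.f b a * D.g d c))) = 0 := by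
  by_cases hh : b < a ∧ c < d
  · obtain ⟨h1, h4⟩ := hh
    have q3 := D.tw' d
    simp only [Dat.f, Dat.g, if_true, h1.ne', h4.ne, if_false]
    grind
  · simp [Dat.kk, hh]
end check
end QE

set_option linter.unusedSectionVars false
namespace QE
section abs
variable {K : Type} [Field K] {I : Type} [LinearOrder I] [Fintype I]

/-- data of an iterated (truncated) skew polynomial extension -/
structure Pres (K I : Type) [Field K] where
  c : I → I → K
  k : I → I → K
  u : I → I → I
  v : I → I → I
  E : I → Prop

/-- the elements `z i` satisfy the relations with indices in `S` -/
structure Sat (P : Pres K I) (S : Finset I) {C : Type} [Ring C] [Algebra K C] (z : I → C) : Prop where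
  sq : ∀ i ∈ S, P.E i → z i * z i = 0
  comm : ∀ i ∈ S, ∀ j ∈ S, i < j →
    z j * z i = P.c j i • (z i * z j) + P.k j i • (z (P.u j i) * z (P.v j i))
  kill : ∀ i ∉ S, z i = 0

open FreeAlgebra in
/-- relations for the universal algebra -/
inductive BRel (P : Pres K I) (S : Finset I) : FreeAlgebra K I → FreeAlgebra K I → Prop
  | sq (i) : i ∈ S → P.E i → BRel P S (ι K i * ι K i) 0
  | comm (i j) : i ∈ S → j ∈ S → i < j → BRel P S (ι K j * ι K i)
      (P.c j i • (ι K i * ι K j) + P.k j i • (ι K (P.u j i) * ι K (P.v j i)))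
  | kill (i) : i ∉ S → BRel P S (ι K i) 0

/-- universal algebra -/
def BA (P : Pres K I) (S : Finset I) : Type := RingQuot (BRel P S)

noncomputable instance (P : Pres K I) (S : Finset I) : Ring (BA P S) :=
  inferInstanceAs (Ring (RingQuot (BRel P S)))

noncomputable instance (P : Pres K I) (S : Finset I) : Algebra K (BA P S) :=
  inferInstanceAs (Algebra K (RingQuot (BRel P S)))

/-- the quotient map -/
noncomputable def bmk (P : Pres K I) (S : Finset I) : FreeAlgebra K I →ₐ[K] BA P S :=
  RingQuot.mkAlgHom K (BRel P S)

theorem bmk_rel {P : Pres K I} {S : Finset I} {x y : FreeAlgebra K I} (h : BRel P S x y) :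
    bmk P S x = bmk P S y := RingQuot.mkAlgHom_rel K h

theorem bmk_surj (P : Pres K I) (S : Finset I) : Function.Surjective (bmk P S) :=
  RingQuot.mkAlgHom_surjective K (BRel P S)

theorem bmk_lift {P : Pres K I} {S : Finset I} {C : Type} [Ring C] [Algebra K C]
    (f : FreeAlgebra K I →ₐ[K] C) (h : ∀ x y, BRel P S x y → f x = f y) :
    ∃ φ : BA P S →ₐ[K] C, ∀ x, φ (bmk P S x) = f x :=
  ⟨RingQuot.liftAlgHom K ⟨f, fun {x y} => h x y⟩,
    fun x => RingQuot.liftAlgHom_mkAlgHom_apply K f (fun {x y} => h x y) x⟩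

/-- its generators -/
noncomputable def bz (P : Pres K I) (S : Finset I) (i : I) : BA P S :=
  bmk P S (FreeAlgebra.ι K i)

theorem bz_sat (P : Pres K I) (S : Finset I) : Sat P S (bz P S) := by
  constructor
  · intro i hi hE
    have := bmk_rel (BRel.sq (P := P) (S := S) i hi hE)
    simpa [bz] using this
  · intro i hi j hj hij
    have := bmk_rel (BRel.comm (P := P) (S := S) i j hi hj hij)
    simpa [bz] using this
  · intro i hi
    have := bmk_rel (BRel.kill (P := P) (S := S) i hi)
    simpa [bz] using this

theorem exists_lift {P : Pres K I} {S : Finset I} {C : Type} [Ring C] [Algebra K C] {z : I → C}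
    (h : Sat P S z) : ∃ φ : BA P S →ₐ[K] C, ∀ i, φ (bz P S i) = z i := by
  have key : ∀ x y, BRel P S x y → FreeAlgebra.lift K z x = FreeAlgebra.lift K z y := by
    intro x y hxy
    induction hxy with
    | sq i hi hE => simpa using h.sq i hi hE
    | comm i j hi hj hij => simpa using h.comm i hi j hj hij
    | kill i hi => simpa using h.kill i hi
  obtain ⟨φ, hφ⟩ := bmk_lift (P := P) (S := S) (FreeAlgebra.lift K z) key
  refine ⟨φ, fun i => ?_⟩
  simp [bz, hφ]

theorem BA.ind {P : Pres K I} {S : Finset I} {p : BA P S → Prop}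
    (h0 : ∀ r : K, p (algebraMap K _ r)) (h1 : ∀ i, p (bz P S i))
    (h2 : ∀ a b, p a → p b → p (a * b)) (h3 : ∀ a b, p a → p b → p (a + b)) (x : BA P S) : p x := by
  obtain ⟨y, rfl⟩ := bmk_surj P S x
  induction y using FreeAlgebra.induction with
  | grade0 r => simpa using h0 r
  | grade1 i => exact h1 i
  | mul a b ha hb => simpa using h2 _ _ ha hb
  | add a b ha hb => simpa using h3 _ _ ha hb

/-- the value of the skew derivation on generators -/
def DD (P : Pres K I) {C : Type} [Ring C] [Algebra K C] (z : I → C) (r i : I) : C :=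
  P.k r i • (z (P.u r i) * z (P.v r i))

/-- consistency conditions -/
structure Good (P : Pres K I) : Prop where
  u_lt : ∀ j i, i < j → P.k j i ≠ 0 → P.u j i < j ∧ P.v j i < j
  A1 : ∀ r i j, i < j → j < r → P.k j i ≠ 0 →
    P.c r (P.u j i) * P.c r (P.v j i) = P.c r j * P.c r i
  A2 : ∀ (C : Type) [Ring C] [Algebra K C] (z : I → C) (r : I), Sat P (Finset.univ.filter (· < r)) z →
    ∀ i j, i < j → j < r →
    P.c r j • (z j * DD P z r i) + DD P z r j * z i =
      P.c j i • (P.c r i • (z i * DD P z r j) + DD P z r i * z j) +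
      P.k j i • (P.c r (P.u j i) • (z (P.u j i) * DD P z r (P.v j i)) +
        DD P z r (P.u j i) * z (P.v j i))
  A3 : ∀ (C : Type) [Ring C] [Algebra K C] (z : I → C) (r : I), Sat P (Finset.univ.filter (· < r)) z →
    ∀ i, i < r → P.E i → P.c r i • (z i * DD P z r i) + DD P z r i * z i = 0
  A4 : ∀ (C : Type) [Ring C] [Algebra K C] (z : I → C) (r : I),
    ∀ i, i < r → P.E r → P.k r i • (P.c r (P.u r i) • (z (P.u r i) * DD P z r (P.v r i)) +
        DD P z r (P.u r i) * z (P.v r i)) = 0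
  A5 : ∀ r i, i < r → P.E r → P.k r i * (P.c r (P.u r i) * P.c r (P.v r i) + P.c r i) = 0

variable {P : Pres K I}

/-- shorthand: indices below `r` -/
abbrev Lo (r : I) : Finset I := Finset.univ.filter (· < r)

theorem exists_skew (hP : Good P) (r : I) :
    ∃ (σ : BA P (Lo r) →ₐ[K] BA P (Lo r)) (δ : BA P (Lo r) →ₗ[K] BA P (Lo r)),
      (∀ i, σ (bz P (Lo r) i) = P.c r i • bz P (Lo r) i) ∧
      (∀ i, i < r → δ (bz P (Lo r) i) = DD P (bz P (Lo r)) r i) ∧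
      (∀ a b, δ (a * b) = σ a * δ b + δ a * b) := by
  set z := bz P (Lo r) with hz
  have hs := bz_sat P (Lo r)
  rw [← hz] at hs
  let D : I → BA P (Lo r) := fun i => if i < r then DD P z r i else 0
  have hD : ∀ i, i < r → D i = DD P z r i := fun i hi => by simp [D, hi]
  let Z : I → Matrix (Fin 2) (Fin 2) (BA P (Lo r)) := fun i =>
    !![P.c r i • z i, D i; 0, z i]
  have hZ : Sat P (Lo r) Z := by
    constructor
    · intro i hi hE
      have hi' : i < r := by simpa using hi
      have h1 := hs.sq i hi hE
      have h2 := hP.A3 _ z r hs i hi' hE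
      simp only [Z, Matrix.mul_fin_two, hD i hi']
      ext a b
      fin_cases a <;> fin_cases b <;> simp [h1, h2]
    · intro i hi j hj hij
      have hi' : i < r := by simpa using hi
      have hj' : j < r := by simpa using hj
      have h1 := hs.comm i hi j hj hij
      have h2 := hP.A2 _ z r hs i j hij hj'
      have h3 : P.k j i ≠ 0 → _ := hP.A1 r i j hij hj'
      by_cases hk : P.k j i = 0
      · simp only [hk, zero_smul, add_zero] at h1 h2 ⊢
        simp only [Z, Matrix.mul_fin_two, hD i hi', hD j hj', Matrix.smul_of]
        ext a b
        fin_cases a <;> fin_cases b <;> simp [h1, h2, smul_smul] 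
        congr 1; ring
      · have hu := (hP.u_lt j i hij hk).1.trans hj'
        have hv := (hP.u_lt j i hij hk).2.trans hj'
        have h3 := h3 hk
        simp only [Z, Matrix.mul_fin_two, hD i hi', hD j hj', hD _ hu, hD _ hv, Matrix.smul_of]
        ext a b
        fin_cases a <;> fin_cases b <;> simp [h1, h2, smul_smul] 
        · rw [mul_comm (P.c r (P.v j i)), h3]
          module
    · intro i hi
      have hi' : ¬ i < r := by simpa using hi
      simp only [Z, D, hs.kill i hi, hi', if_false, smul_zero]
      ext a b
      fin_cases a <;> fin_cases b <;> simp
  obtain ⟨φ, hφ⟩ := exists_lift hZ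
  have key : ∀ x, φ x 1 0 = 0 ∧ φ x 1 1 = x := by
    intro x
    induction x using BA.ind with
    | h0 a => simp [Algebra.algebraMap_eq_smul_one]
    | h1 i => rw [hφ]; simp [Z, hz]
    | h2 a b ha hb => simp [Matrix.mul_apply, Fin.sum_univ_two, ha, hb]
    | h3 a b ha hb => simp [ha, hb]
  refine ⟨AlgHom.ofLinearMap ((Matrix.entryLinearMap K _ 0 0).comp φ.toLinearMap) ?_ ?_,
    (Matrix.entryLinearMap K _ 0 1).comp φ.toLinearMap, ?_, ?_, ?_⟩
  · simp
  · intro a b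
    simp [Matrix.mul_apply, Fin.sum_univ_two, key]
  · intro i
    simp [hz ▸ hφ i, Z]
  · intro i hi
    simp [hz ▸ hφ i, Z, hD i hi]
  · intro a b
    simp [Matrix.mul_apply, Fin.sum_univ_two, key]

theorem skew_E (hP : Good P) (r : I) (hE : P.E r) (σ : BA P (Lo r) →ₐ[K] BA P (Lo r))
    (δ : BA P (Lo r) →ₗ[K] BA P (Lo r))
    (h1 : ∀ i, σ (bz P (Lo r) i) = P.c r i • bz P (Lo r) i)
    (h2 : ∀ i, i < r → δ (bz P (Lo r) i) = DD P (bz P (Lo r)) r i)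
    (h3 : ∀ a b, δ (a * b) = σ a * δ b + δ a * b) (x : BA P (Lo r)) :
    δ (δ x) = 0 ∧ σ (δ x) + δ (σ x) = 0 := by
  have hone : δ 1 = 0 := by
    have := h3 1 1
    simpa using this
  induction x using BA.ind with
  | h0 a => simp [Algebra.algebraMap_eq_smul_one, hone]
  | h1 i =>
    by_cases hi : i < r
    · rw [h2 i hi, h1, map_smul, h2 i hi]
      by_cases hk : P.k r i = 0
      · simp [DD, hk]
      obtain ⟨hu, hv⟩ := hP.u_lt r i hi hk
      have a4 := hP.A4 _ (bz P (Lo r)) r i hi hE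
      have a5 := hP.A5 r i hi hE
      constructor
      · change δ (P.k r i • (bz P (Lo r) (P.u r i) * bz P (Lo r) (P.v r i))) = 0
        rw [map_smul, h3, h1, h2 _ hu, h2 _ hv, smul_mul_assoc]
        exact a4
      · simp only [DD, map_smul, map_mul, h1, smul_mul_smul_comm, smul_smul]
        rw [← add_smul]
        convert zero_smul K _ using 2
        linear_combination a5
    · have : bz P (Lo r) i = 0 := (bz_sat P (Lo r)).kill i (by simpa using hi)
      simp [this]
  | h2 a b ha hb =>
    have e1 := eq_neg_of_add_eq_zero_left ha.2
    have e2 := eq_neg_of_add_eq_zero_left hb.2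
    constructor
    · simp only [h3, map_add, ha.1, hb.1, zero_mul, mul_zero, e1, neg_mul]
      abel
    · simp only [h3, map_add, map_mul, e1, e2, neg_mul, mul_neg]
      abel
  | h3 a b ha hb =>
    have e1 := eq_neg_of_add_eq_zero_left ha.2
    have e2 := eq_neg_of_add_eq_zero_left hb.2
    simp only [map_add, ha.1, hb.1, e1, e2]
    exact ⟨by simp, by abel⟩

/-- ordered monomials -/
def mono (S : Finset I) {C : Type} [Ring C] (z : I → C) (e : I → ℕ) : C :=
  ((S.sort (· ≤ ·)).map (fun i => z i ^ e i)).prod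

theorem mono_congr (S : Finset I) {C : Type} [Ring C] {z z' : I → C} {e e' : I → ℕ}
    (h : ∀ i ∈ S, z i = z' i) (h' : ∀ i ∈ S, e i = e' i) : mono S z e = mono S z' e' := by
  unfold mono
  congr 1
  apply List.map_congr_left
  intro i hi
  have : i ∈ S := by simpa using hi
  rw [h i this, h' i this]

theorem mono_insert (S : Finset I) (r : I) (hr : ∀ i ∈ S, i < r) {C : Type} [Ring C] (z : I → C)
    (e : I → ℕ) : mono (insert r S) z e = mono S z e * z r ^ e r := by
  have : (insert r S).sort (· ≤ ·) = S.sort (· ≤ ·) ++ [r] := by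
    have hrS : r ∉ S := fun h => lt_irrefl _ (hr r h)
    apply List.Perm.eq_of_pairwise' (r := (· ≤ ·))
    · exact Finset.pairwise_sort _ _
    · rw [List.pairwise_append]
      refine ⟨Finset.pairwise_sort _ _, by simp, ?_⟩
      intro a ha b hb
      simp at ha hb
      rw [hb]; exact (hr a ha).le
    · rw [List.perm_ext_iff_of_nodup (Finset.sort_nodup _ _)]
      · intro a; simp; tauto
      · rw [List.nodup_append]
        refine ⟨Finset.sort_nodup _ _, by simp, ?_⟩
        intro a ha b hb
        simp at ha hb
        rw [hb]; exact (hr a ha).ne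
  simp [mono, this]

theorem map_mono (S : Finset I) {C C' : Type} [Ring C] [Algebra K C] [Ring C'] [Algebra K C']
    (φ : C →ₐ[K] C') (z : I → C) (e : I → ℕ) : φ (mono S z e) = mono S (fun i => φ (z i)) e := by
  simp [mono, map_list_prod, Function.comp_def]

/-- admissible exponents -/
def Adm (P : Pres K I) (S : Finset I) : Set (I → ℕ) :=
  {e | (∀ i ∉ S, e i = 0) ∧ ∀ i, P.E i → e i ≤ 1}

/-- evaluating in the module `B[X]` -/
theorem exists_eval (hP : Good P) (r : I) :
    ∃ Φ : BA P (insert r (Lo r)) →ₗ[K] (ℕ →₀ BA P (Lo r)), ∀ e : I → ℕ, (P.E r → e r ≤ 1) →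
      Φ (mono (insert r (Lo r)) (bz P _) e) = Finsupp.single (e r) (mono (Lo r) (bz P _) e) := by
  classical
  obtain ⟨σ, δ, h1, h2, h3⟩ := exists_skew hP r
  have hone : δ 1 = 0 := by
    have := h3 1 1
    simpa using this
  let w : ℕ → K := fun n => if P.E r then (if Even n then 1 else 0) else 1
  let X : Module.End K (ℕ →₀ BA P (Lo r)) := Finsupp.lsum K (fun n =>
    w n • (Finsupp.lsingle (n+1) ∘ₗ σ.toLinearMap) + Finsupp.lsingle n ∘ₗ δ)
  have hX : ∀ n b, X (Finsupp.single n b) =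
      w n • Finsupp.single (n+1) (σ b) + Finsupp.single n (δ b) := by
    intro n b
    simp [X]
  let Lm : BA P (Lo r) →ₐ[K] Module.End K (ℕ →₀ BA P (Lo r)) := Algebra.lsmul K K _
  have hL : ∀ y n b, Lm y (Finsupp.single n b) = Finsupp.single n (y * b) := by
    intro y n b
    simp [Lm]
  let Z : I → Module.End K (ℕ →₀ BA P (Lo r)) := fun i => if i = r then X else Lm (bz P (Lo r) i)
  have hs := bz_sat P (Lo r)
  have hrel : ∀ y, X * Lm y = Lm (σ y) * X + Lm (δ y) := by
    intro y
    refine Finsupp.lhom_ext fun n b => ?_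
    simp only [Module.End.mul_apply, LinearMap.add_apply, hL, hX, map_add, map_smul, h3, map_mul,
      Finsupp.single_add]
    abel
  have hZr : Z r = X := by simp [Z]
  have hZi : ∀ i, i ≠ r → Z i = Lm (bz P (Lo r) i) := by intro i hi; simp [Z, hi]
  have hZ : Sat P (insert r (Lo r)) Z := by
    constructor
    · intro i hi hE
      by_cases hir : i = r
      · subst hir
        rw [hZr]
        refine Finsupp.lhom_ext fun n b => ?_
        obtain ⟨e1, e2⟩ := skew_E hP i hE σ δ h1 h2 h3 b
        have hw : w n * w (n+1) = 0 := by
          simp only [w, hE, if_true]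
          by_cases hn : Even n
          · simp [hn, Nat.even_add_one]
          · simp [hn]
        have e2 := eq_neg_of_add_eq_zero_left e2
        simp only [Module.End.mul_apply, hX, map_add, map_smul, e1, e2, smul_add, smul_smul, hw]
        simp
      · rw [hZi i hir, ← map_mul, hs.sq i ?_ hE, map_zero]
        simpa [hir] using hi
    · intro i hi j hj hij
      have hir : i < r := by
        simp at hi hj
        rcases hi with rfl | hi
        · rcases hj with rfl | hj <;> order
        · exact hi
      by_cases hjr : j = r
      · subst hjr
        rw [hZr, hZi i hir.ne, hrel, h1, h2 i hir, map_smul, DD, map_smul, map_mul, smul_mul_assoc]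
        by_cases hk : P.k j i = 0
        · simp [hk]
        · obtain ⟨hu, hv⟩ := hP.u_lt j i hij hk
          rw [hZi _ hu.ne, hZi _ hv.ne]
      · have hjr' : j < r := by simpa [hjr] using hj
        have := hs.comm i (by simpa using hir) j (by simpa using hjr') hij
        rw [hZi i hir.ne, hZi j hjr, ← map_mul, this]
        simp only [map_add, map_smul, map_mul]
        by_cases hk : P.k j i = 0
        · simp [hk]
        · obtain ⟨hu, hv⟩ := hP.u_lt j i hij hk
          rw [hZi _ (hu.trans hjr').ne, hZi _ (hv.trans hjr').ne]
    · intro i hi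
      simp at hi
      rw [hZi i hi.1, hs.kill i (by simpa using hi.2), map_zero]
  obtain ⟨ψ, hψ⟩ := exists_lift hZ
  refine ⟨(LinearMap.applyₗ (Finsupp.single 0 (1 : BA P (Lo r)) : ℕ →₀ BA P (Lo r))).comp ψ.toLinearMap, ?_⟩
  intro e he
  have hXp : ∀ n, (P.E r → n ≤ 1) → (X ^ n) (Finsupp.single 0 1) = Finsupp.single n 1 := by
    intro n
    induction n with
    | zero => simp
    | succ n ih =>
      intro hn
      rw [pow_succ', Module.End.mul_apply, ih (fun h => by have := hn h; omega), hX]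
      have : w n = 1 := by
        by_cases h : P.E r
        · have := hn h
          have : n = 0 := by omega
          simp [w, h, this]
        · simp [w, h]
      simp [this, hone]
  rw [mono_insert _ _ (by simp)]
  simp only [LinearMap.comp_apply, AlgHom.toLinearMap_apply, LinearMap.applyₗ_apply_apply, map_mul, map_pow,
    hψ, hZr, Module.End.mul_apply, hXp _ he]
  have hm : ψ (mono (Lo r) (bz P (insert r (Lo r))) e) = Lm (mono (Lo r) (bz P (Lo r)) e) := by
    have e1 := map_mono (K := K) (C' := Module.End K (ℕ →₀ BA P (Lo r))) (Lo r) ψ (bz P _) e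
    have e2 := map_mono (K := K) (C' := Module.End K (ℕ →₀ BA P (Lo r))) (Lo r) Lm (bz P _) e
    refine e1.trans (Eq.trans ?_ e2.symm)
    refine mono_congr (Lo r) (fun i hi => ?_) (fun _ _ => rfl)
    rw [hψ, hZi i (by simp at hi; exact hi.ne)]
  rw [hm, hL, mul_one]

theorem indep (hP : Good P) (S : Finset I) (hS : IsLowerSet (S : Set I)) :
    LinearIndependent K (fun e : Adm P S => mono S (bz P S) e.1) := by
  induction S using Finset.induction_on_max with
  | empty =>
    have hsub : Subsingleton (Adm P (∅ : Finset I)) := by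
      constructor
      rintro ⟨e, he⟩ ⟨e', he'⟩
      ext i
      simp [he.1 i (by simp), he'.1 i (by simp)]
    have hz : Sat P ∅ (fun _ : I => (0 : K)) := by
      constructor <;> simp
    obtain ⟨φ, -⟩ := exists_lift hz
    have : Nontrivial (BA P (∅ : Finset I)) := φ.toRingHom.domain_nontrivial
    apply LinearIndependent.of_subsingleton ⟨fun _ => 0, by simp [Adm]⟩
    simp [mono]
  | insert r S hr ih =>
    have hSL : S = Lo r := by
      ext i
      constructor
      · intro hi; simpa using hr i hi
      · intro hi
        have hi : i < r := by simpa using hi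
        have : i ∈ insert r S := by
          have := hS hi.le (by simp : r ∈ (↑(insert r S) : Set I))
          exact_mod_cast this
        simpa [hi.ne] using this
    subst hSL
    have ih := ih (by
      intro a b hab ha
      simp at ha ⊢
      order)
    obtain ⟨Φ, hΦ⟩ := exists_eval hP r
    apply LinearIndependent.of_comp Φ
    have key := Finsupp.linearIndependent_single (R := K) (ι := ℕ) (φ := fun _ => Adm P (Lo r))
      (f := fun _ e => mono (Lo r) (bz P (Lo r)) e.1) (fun _ => ih)
    let g : Adm P (insert r (Lo r)) → Σ _ : ℕ, Adm P (Lo r) := fun e =>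
      ⟨e.1 r, ⟨Function.update e.1 r 0, by
        constructor
        · intro i hi
          by_cases h : i = r
          · subst h; simp
          · rw [Function.update_of_ne h]
            exact e.2.1 i (by simp at hi ⊢; exact ⟨h, hi⟩)
        · intro i hi
          by_cases h : i = r
          · subst h; simp
          · rw [Function.update_of_ne h]
            exact e.2.2 i hi⟩⟩
    have hg : Function.Injective g := by
      intro e e' h
      simp only [g, Sigma.mk.injEq, heq_eq_eq] at h
      ext i
      by_cases hi : i = r
      · subst hi; exact h.1
      · have := congrFun (congrArg Subtype.val h.2) i
        simpa [hi] using this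
    convert key.comp g hg using 1
    ext1 e
    simp only [Function.comp_apply]
    rw [hΦ e.1 (e.2.2 r)]
    simp only [g]
    congr 1
    apply mono_congr _ (fun _ _ => rfl)
    intro i hi
    rw [Function.update_of_ne]
    simp at hi
    exact hi.ne

/-- span of normal monomials of degree `N` -/
def Nm (P : Pres K I) (S : Finset I) {C : Type} [Ring C] [Algebra K C] (z : I → C) (N : ℕ) :
    Submodule K C :=
  Submodule.span K {x | ∃ e ∈ Adm P S, ∑ i, e i = N ∧ x = mono S z e}

/-- span of generators -/
def Tm (K : Type) [Field K] {I : Type} (S : Finset I) {C : Type} [Ring C] [Algebra K C]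
    (z : I → C) : Submodule K C :=
  Submodule.span K (z '' (S : Set I))

theorem mem_Tm {S : Finset I} {C : Type} [Ring C] [Algebra K C] {z : I → C} {i : I} (hi : i ∈ S) :
    z i ∈ Tm K S z := Submodule.subset_span ⟨i, hi, rfl⟩

theorem mono_mem {C : Type} [Ring C] [Algebra K C] {z : I → C} (S : Finset I) (e : I → ℕ) :
    mono S z e ∈ Tm K S z ^ (∑ i ∈ S, e i) := by
  have key : ∀ L : List I, (∀ i ∈ L, i ∈ S) →
      (L.map (fun i => z i ^ e i)).prod ∈ Tm K S z ^ ((L.map e).sum) := by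
    intro L
    induction L with
    | nil => intro _; simp; exact ⟨1, map_one _⟩
    | cons a L ih =>
      intro h
      simp only [List.map_cons, List.prod_cons, List.sum_cons, pow_add]
      exact Submodule.mul_mem_mul (Submodule.pow_mem_pow _ (mem_Tm (h a (by simp))) _)
        (ih fun i hi => h i (by simp [hi]))
  have := key (S.sort (· ≤ ·)) (by simp)
  have e2 : ((S.sort (· ≤ ·)).map e).sum = ∑ i ∈ S, e i := by
    conv_rhs => rw [← Finset.sort_toFinset (r := (· ≤ ·)) S]
    rw [List.sum_toFinset e (Finset.sort_nodup _ _)]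
  rw [e2] at this
  exact this

theorem Tm_mono {C : Type} [Ring C] [Algebra K C] {z : I → C} {S S' : Finset I} (h : S ⊆ S') :
    Tm K S z ≤ Tm K S' z := Submodule.span_mono (Set.image_mono (by exact_mod_cast h))

section span
variable {C : Type} [Ring C] [Algebra K C] {z : I → C}

theorem x_push (hP : Good P) (hz : Sat P Finset.univ z) (r : I) (n : ℕ) :
    ∀ m ∈ Tm K (Lo r) z ^ n, ∃ m' ∈ Tm K (Lo r) z ^ n, ∃ m'' ∈ Tm K (Lo r) z ^ (n + 1),
      z r * m = m' * z r + m'' := by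
  induction n with
  | zero =>
    intro m hm
    rw [pow_zero, Submodule.mem_one] at hm
    obtain ⟨y, rfl⟩ := hm
    refine ⟨algebraMap K C y, by rw [pow_zero]; exact Submodule.algebraMap_mem y, 0, zero_mem _, ?_⟩
    rw [add_zero, Algebra.commutes]
  | succ n ih =>
    intro m hm
    rw [pow_succ'] at hm
    induction hm using Submodule.mul_induction_on' with
    | mem_mul_mem a ha b hb =>
      obtain ⟨b', hb', b'', hb'', e⟩ := ih b hb
      induction ha using Submodule.span_induction with
      | mem x hx =>
        obtain ⟨i, hi, rfl⟩ := hx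
        have hir : i < r := by simpa using hi
        have hc := hz.comm i (by simp) r (by simp) hir
        have hd : DD P z r i ∈ Tm K (Lo r) z ^ 2 := by
          unfold DD
          by_cases hk : P.k r i = 0
          · simp [hk]
          · obtain ⟨hu, hv⟩ := hP.u_lt r i hir hk
            rw [pow_two]
            exact Submodule.smul_mem _ _ (Submodule.mul_mem_mul (mem_Tm (by simpa using hu))
              (mem_Tm (by simpa using hv)))
        have hzi : z i ∈ Tm K (Lo r) z := mem_Tm hi
        refine ⟨P.c r i • (z i * b'), ?_, P.c r i • (z i * b'') + DD P z r i * b, ?_, ?_⟩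
        · rw [pow_succ']
          exact Submodule.smul_mem _ _ (Submodule.mul_mem_mul hzi hb')
        · refine Submodule.add_mem _ ?_ ?_
          · rw [pow_succ']
            exact Submodule.smul_mem _ _ (Submodule.mul_mem_mul hzi hb'')
          · have : n + 1 + 1 = 2 + n := by omega
            rw [this, pow_add]
            exact Submodule.mul_mem_mul hd hb
        · rw [← mul_assoc, hc]
          simp only [DD, smul_mul_assoc, mul_assoc, add_mul, mul_add, smul_add, e]
          abel
      | zero => exact ⟨0, zero_mem _, 0, zero_mem _, by simp⟩
      | add x y _ _ hx hy =>
        obtain ⟨x', hx', x'', hx'', ex⟩ := hx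
        obtain ⟨y', hy', y'', hy'', ey⟩ := hy
        exact ⟨x' + y', add_mem hx' hy', x'' + y'', add_mem hx'' hy'', by
          rw [add_mul, mul_add, ex, ey, add_mul]; abel⟩
      | smul c x _ hx =>
        obtain ⟨x', hx', x'', hx'', ex⟩ := hx
        exact ⟨c • x', Submodule.smul_mem _ _ hx', c • x'', Submodule.smul_mem _ _ hx'', by
          rw [smul_mul_assoc, mul_smul_comm, ex, smul_mul_assoc, smul_add]⟩
    | add x _ y _ hx hy =>
        obtain ⟨x', hx', x'', hx'', ex⟩ := hx
        obtain ⟨y', hy', y'', hy'', ey⟩ := hy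
        exact ⟨x' + y', add_mem hx' hy', x'' + y'', add_mem hx'' hy'', by
          rw [mul_add, ex, ey, add_mul]; abel⟩

theorem Tm_le_Nm (hP : Good P) (hz : Sat P Finset.univ z) (S : Finset I)
    (hS : IsLowerSet (S : Set I)) : ∀ N, Tm K S z ^ N ≤ Nm P S z N := by
  induction S using Finset.induction_on_max with
  | empty =>
    intro N
    cases N with
    | zero =>
      rw [pow_zero, Submodule.one_eq_span]
      apply Submodule.span_mono
      rintro x rfl
      exact ⟨fun _ => 0, by simp [Adm], by simp, by simp [mono]⟩
    | succ n => simp [Tm, pow_succ]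
  | insert r S hr ih =>
    have hSL : S = Lo r := by
      ext i
      constructor
      · intro hi; simpa using hr i hi
      · intro hi
        have hi : i < r := by simpa using hi
        have : i ∈ insert r S := by
          have := hS hi.le (by simp : r ∈ (↑(insert r S) : Set I))
          exact_mod_cast this
        simpa [hi.ne] using this
    subst hSL
    have ih := ih (by
      intro a b hab ha
      simp at ha ⊢
      order)
    have step : ∀ n j, ∀ m ∈ Tm K (Lo r) z ^ n, m * z r ^ j ∈ Nm P (insert r (Lo r)) z (n + j) := by
      intro n j m hm
      by_cases hj : P.E r ∧ 2 ≤ j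
      · obtain ⟨i, rfl⟩ := Nat.exists_eq_add_of_le hj.2
        rw [pow_add, pow_two, hz.sq r (by simp) hj.1]
        simp
      have hm' := ih n hm
      clear hm
      induction hm' using Submodule.span_induction with
      | mem x hx =>
        obtain ⟨e, he, hs, rfl⟩ := hx
        apply Submodule.subset_span
        refine ⟨Function.update e r j, ⟨?_, ?_⟩, ?_, ?_⟩
        · intro i hi
          simp at hi
          rw [Function.update_of_ne hi.1]
          exact he.1 i (by simpa using hi.2)
        · intro i hi
          by_cases hir : i = r
          · subst hir; simp
            by_contra hcon
            exact hj ⟨hi, by omega⟩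
          · rw [Function.update_of_ne hir]; exact he.2 i hi
        · have h0 : e r = 0 := he.1 r (by simp)
          rw [Finset.sum_update_of_mem (Finset.mem_univ r)]
          rw [← Finset.sum_sdiff (Finset.subset_univ {r}), Finset.sum_singleton, h0] at hs
          omega
        · rw [mono_insert _ _ (by simp)]
          simp only [Function.update_self]
          congr 1
          apply mono_congr _ (fun _ _ => rfl)
          intro i hi
          rw [Function.update_of_ne]
          simp at hi
          exact hi.ne
      | zero => simp
      | add x y _ _ hx hy => rw [add_mul]; exact add_mem hx hy
      | smul c x _ hx => rw [smul_mul_assoc]; exact Submodule.smul_mem _ _ hx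
    intro N
    induction N with
    | zero => 
      rw [pow_zero, Submodule.one_eq_span]
      apply Submodule.span_mono
      rintro x rfl
      exact ⟨fun _ => 0, by simp [Adm], by simp, by simp [mono]⟩
    | succ N ihN =>
      rw [pow_succ']
      refine (mul_le_mul' le_rfl ihN).trans ?_
      rw [Tm, Nm, Submodule.span_mul_span, Submodule.span_le]
      rintro _ ⟨_, ⟨i, hi, rfl⟩, _, ⟨e, he, hs, rfl⟩, rfl⟩
      simp only [SetLike.mem_coe]
      rw [mono_insert _ _ (by simp), ← mul_assoc]
      have hN : ∑ i ∈ Lo r, e i + e r = N := by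
        rw [← hs, add_comm, ← Finset.sum_insert (by simp)]
        apply Finset.sum_subset (Finset.subset_univ _)
        intro i _ hi
        exact he.1 i hi
      have hm := mono_mem (K := K) (z := z) (Lo r) e
      rcases Finset.mem_insert.1 (Finset.mem_coe.1 hi) with rfl | hi
      · obtain ⟨m', hm', m'', hm'', e1⟩ := x_push hP hz _ _ _ hm
        rw [e1, add_mul, mul_assoc, ← pow_succ']
        refine add_mem ?_ ?_
        · have := step _ (e i + 1) _ hm'
          rwa [← add_assoc, hN] at this
        · have := step _ (e i) _ hm''
          rwa [add_right_comm, hN] at this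
      · have h1 : z i * mono (Lo r) z e ∈ Tm K (Lo r) z ^ (∑ i ∈ Lo r, e i + 1) := by
          rw [pow_succ']
          exact Submodule.mul_mem_mul (mem_Tm hi) hm
        have := step _ (e r) _ h1
        rwa [add_right_comm, hN] at this

theorem Nm_eq (hP : Good P) (hz : Sat P Finset.univ z) (N : ℕ) :
    Nm P Finset.univ z N = Tm K Finset.univ z ^ N := by
  apply le_antisymm
  · rw [Nm, Submodule.span_le]
    rintro _ ⟨e, he, rfl, rfl⟩
    exact mono_mem _ _
  · exact Tm_le_Nm hP hz _ (by simp [isLowerSet_univ]) N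

theorem rank_eq (hP : Good P) (hz : Sat P Finset.univ z)
    (huniv : ∃ φ : C →ₐ[K] BA P Finset.univ, ∀ i, φ (z i) = bz P Finset.univ i) (N : ℕ) :
    Module.rank K ↥(Tm K Finset.univ z ^ N) =
      Cardinal.mk {e : I → ℕ | (∀ i, P.E i → e i ≤ 1) ∧ ∑ i, e i = N} := by
  obtain ⟨φ, hφ⟩ := huniv
  let v : {e : I → ℕ | (∀ i, P.E i → e i ≤ 1) ∧ ∑ i, e i = N} → C := fun e => mono Finset.univ z e.1
  have hv : LinearIndependent K v := by
    apply LinearIndependent.of_comp φ.toLinearMap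
    have := (indep hP Finset.univ (by simp [isLowerSet_univ])).comp
      (fun e : {e : I → ℕ | (∀ i, P.E i → e i ≤ 1) ∧ ∑ i, e i = N} =>
        (⟨e.1, by simp, e.2.1⟩ : Adm P Finset.univ)) (by
        intro a b h
        simpa [Subtype.ext_iff] using h)
    convert this using 1
    ext1 e
    simp [v, map_mono, hφ]
    rfl
  rw [← Nm_eq hP hz N]
  have : Nm P Finset.univ z N = Submodule.span K (Set.range v) := by
    unfold Nm
    congr 1
    ext x
    constructor
    · rintro ⟨e, he, hs, rfl⟩
      exact ⟨⟨e, he.2, hs⟩, rfl⟩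
    · rintro ⟨⟨e, he, hs⟩, rfl⟩
      exact ⟨e, ⟨by simp, he⟩, hs, rfl⟩
  rw [this, rank_span hv, Cardinal.mk_range_eq _ hv.injective]

end span

end abs
end QE

namespace QE
open PowerSeries in
theorem count {I : Type} [Fintype I] [DecidableEq I] (E : I → Prop) [DecidablePred E] (N A B : ℕ)
    (hA : (Finset.univ.filter E).card = A) (hB : (Finset.univ.filter (fun i => ¬ E i)).card = B) :
    Cardinal.mk {e : I → ℕ | (∀ i, E i → e i ≤ 1) ∧ ∑ i, e i = N} =
      ((∑ j ∈ Finset.range (N + 1), Nat.choose A (N - j) * Nat.choose (B + j - 1) j : ℕ) :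
        Cardinal) := by
  let F : Finset (I →₀ ℕ) := (Finset.finsuppAntidiag Finset.univ N).filter (fun e => ∀ i, E i → e i ≤ 1)
  have hF : Cardinal.mk {e : I → ℕ | (∀ i, E i → e i ≤ 1) ∧ ∑ i, e i = N} = (F.card : Cardinal) := by
    rw [← Cardinal.mk_coe_finset]
    refine Cardinal.mk_congr (Equiv.symm (Equiv.subtypeEquiv Finsupp.equivFunOnFinite ?_))
    intro e
    simp [F, Finset.mem_finsuppAntidiag, and_comm]
  rw [hF]
  congr 1
  let G : I → ℤ⟦X⟧ := fun i => if E i then 1 + X else PowerSeries.mk 1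
  have hG : ∀ i n, coeff n (G i) = if E i → n ≤ 1 then 1 else 0 := by
    intro i n
    by_cases h : E i
    · simp only [G, h, if_true, map_add, coeff_one, coeff_X]
      rcases n with _ | _ | n <;> simp
    · simp [G, h]
  have h1 : coeff N (∏ i, G i) = (F.card : ℤ) := by
    rw [coeff_prod, Finset.card_filter]
    push_cast
    apply Finset.sum_congr rfl
    intro e _
    simp only [hG]
    rw [Finset.prod_ite_zero]
    simp
  have h2 : ∏ i, G i = (1 + X) ^ A * (PowerSeries.mk 1) ^ B := by
    simp only [G]
    rw [Finset.prod_ite, Finset.prod_const, Finset.prod_const, hA, hB]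
  have h3 : ∀ j, coeff j ((PowerSeries.mk 1 : ℤ⟦X⟧) ^ B) = ((B + j - 1).choose j : ℤ) := by
    intro j
    rcases B with _ | B
    · rcases j with _ | j
      · simp
      · simp [coeff_one]
    · rw [mk_one_pow_eq_mk_choose_add, coeff_mk]
      have : B + 1 + j - 1 = B + j := by omega
      rw [this, Nat.choose_symm_add]
  have h4 : ∀ j, coeff j ((1 + X : ℤ⟦X⟧) ^ A) = (A.choose j : ℤ) := by
    intro j
    have : ((1 + X : ℤ⟦X⟧) ^ A) = (((1 + Polynomial.X : Polynomial ℤ) ^ A : Polynomial ℤ) : ℤ⟦X⟧) := by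
      simp
    rw [this, Polynomial.coeff_coe, Polynomial.coeff_one_add_X_pow]
  have h5 : (F.card : ℤ) = ((∑ j ∈ Finset.range (N + 1), Nat.choose A (N - j) * Nat.choose (B + j - 1) j : ℕ) : ℤ) := by
    rw [← h1, h2, mul_comm, coeff_mul, Finset.Nat.sum_antidiagonal_eq_sum_range_succ_mk]
    push_cast
    apply Finset.sum_congr rfl
    intro j _
    rw [h3, h4, mul_comm]
  exact_mod_cast h5
end QE

namespace QE

/-- concrete index type -/
@[ext] structure GI (R Q : Type) where
  row : R
  col : Q

section gi
variable {R Q : Type} [LinearOrder R] [LinearOrder Q]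

/-- equivalence with the product -/
def GI.equiv (R Q : Type) : GI R Q ≃ R × Q where
  toFun p := (p.row, p.col)
  invFun p := ⟨p.1, p.2⟩
  left_inv _ := rfl
  right_inv _ := rfl

instance [Fintype R] [Fintype Q] : Fintype (GI R Q) := Fintype.ofEquiv _ (GI.equiv R Q).symm

instance : LinearOrder (GI R Q) :=
  LinearOrder.lift' (fun p : GI R Q => toLex (p.col, OrderDual.toDual p.row)) (by
    intro p q h
    have h := toLex.injective h
    simp only [Prod.mk.injEq, EmbeddingLike.apply_eq_iff_eq] at h
    ext
    · exact h.2
    · exact h.1)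

theorem GI.lt_iff (p q : GI R Q) : p < q ↔ Bef p.row p.col q.row q.col := by
  change toLex (p.col, OrderDual.toDual p.row) < toLex (q.col, OrderDual.toDual q.row) ↔ _
  rw [Prod.Lex.toLex_lt_toLex]
  simp [Bef]

variable {K : Type} [Field K]

/-- the presentation attached to coefficient data -/
def PP (D : Dat K R Q) (E : R → Q → Prop) : Pres K (GI R Q) where
  c j i := -(D.f j.row i.row * D.g j.col i.col)
  k j i := D.kk j.row j.col i.row i.col
  u j i := ⟨j.row, i.col⟩
  v j i := ⟨i.row, j.col⟩
  E p := E p.row p.col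

variable [Fintype R] [Fintype Q]

theorem PP_good (D : Dat K R Q) (E : R → Q → Prop) (h1 : ∀ a c, E a c → D.t a = D.t' c)
    (h2 : ∀ a c, ¬ E a c → D.t a * D.t' c = -1) : Good (PP D E) := by
  have hyp : ∀ (C : Type) [Ring C] [Algebra K C] (z : GI R Q → C) (r : GI R Q),
      Sat (PP D E) (Finset.univ.filter (· < r)) z → Hyp D (fun a c => z ⟨a, c⟩) r.row r.col := by
    intro C _ _ z r hs a c a' c' h3 h4
    have l1 : (⟨a, c⟩ : GI R Q) < ⟨a', c'⟩ := (GI.lt_iff _ _).2 h3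
    have l2 : (⟨a', c'⟩ : GI R Q) < r := (GI.lt_iff _ _).2 h4
    exact hs.comm ⟨a, c⟩ (by simpa using l1.trans l2) ⟨a', c'⟩ (by simpa using l2) l1
  constructor
  · intro j i hij hk
    have : j.row < i.row ∧ i.col < j.col := by
      by_contra hcon
      exact hk (if_neg hcon)
    exact ⟨(GI.lt_iff _ _).2 (Or.inl this.2), (GI.lt_iff _ _).2 (Or.inr ⟨rfl, this.1⟩)⟩
  · intro r i j _ _ _
    simp only [PP]
    ring
  · intro C _ _ z r hs i j hij hjr
    exact checkA2 (hyp C z r hs) (by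
      intro a c hb
      by_cases hE : E a c
      · exact Or.inl (hs.sq ⟨a, c⟩ (by simpa using (GI.lt_iff _ _).2 hb) hE)
      · exact Or.inr (h2 a c hE)) i.row i.col j.row j.col ((GI.lt_iff _ _).1 hij)
        ((GI.lt_iff _ _).1 hjr)
  · intro C _ _ z r hs i hi hE
    exact checkA3 (hyp C z r hs) i.row i.col ((GI.lt_iff _ _).1 hi) (h1 _ _ hE)
  · intro C _ _ z r i hi hE
    exact checkA4 (z := fun a c => z ⟨a, c⟩) i.row i.col
  · intro r i hi hE
    exact checkA5 i.row i.col ((GI.lt_iff _ _).1 hi) (h1 _ _ hE)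
end gi

theorem qv_ne : qv ≠ 0 := RatFunc.X_ne_zero

theorem sgn_comm (t : ℕ) {N : ℕ} (a b : Fin N) : sgn t a b = sgn t b a := by
  simp [sgn, and_comm]

theorem sgn_sq (t : ℕ) {N : ℕ} (a b : Fin N) : sgn t a b * sgn t a b = 1 := by
  unfold sgn; split_ifs <;> simp

/-- eigenvalue -/
def tt (t : ℕ) {N : ℕ} (a : Fin N) : Kq := if t ≤ (a : ℕ) then -qv⁻¹ else qv
/-- inverse eigenvalue -/
def ww (t : ℕ) {N : ℕ} (a : Fin N) : Kq := if t ≤ (a : ℕ) then -qv else qv⁻¹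

theorem tt_ww (t : ℕ) {N : ℕ} (a : Fin N) : tt t a * ww t a = 1 := by
  have := qv_ne
  unfold tt ww; split_ifs <;> field_simp

theorem tt_sub (t : ℕ) {N : ℕ} (a : Fin N) : tt t a - ww t a = qv - qv⁻¹ := by
  unfold tt ww; split_ifs <;> ring

/-- concrete data -/
def QD (m n k l : ℕ) : Dat Kq (Fin (m + n)) (Fin (k + l)) where
  s := sgn m
  s' := sgn k
  t := tt m
  w := ww m
  t' := tt k
  w' := ww k
  h := qv - qv⁻¹
  ss := sgn_comm m
  ss' := sgn_comm k
  sq := sgn_sq m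
  sq' := sgn_sq k
  tw := tt_ww m
  tw' := tt_ww k
  th := tt_sub m
  th' := tt_sub k

/-- evenness -/
def QE0 (m n k l : ℕ) (a : Fin (m + n)) (c : Fin (k + l)) : Prop := m ≤ (a : ℕ) ↔ k ≤ (c : ℕ)

/-- the concrete presentation -/
abbrev QP (m n k l : ℕ) : Pres Kq (GI (Fin (m + n)) (Fin (k + l))) :=
  PP (QD m n k l) (QE0 m n k l)

theorem QP_good (m n k l : ℕ) : Good (QP m n k l) := by
  have := qv_ne
  apply PP_good
  · intro a c h
    unfold QE0 at h
    simp only [QD, tt, h]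
  · intro a c h
    unfold QE0 at h
    simp only [QD, tt]
    split_ifs <;> first | (exfalso; tauto) | field_simp

section mods
variable {K V : Type} [Field K] [Ring V] [Algebra K V]

theorem mod_add {x y : V} {c d : K} (h : y = c • x) (e : d * c = -1) : x + d • y = 0 := by
  rw [h, smul_smul, e]; simp

theorem mod_sub {x y : V} {c d : K} (h : y = c • x) (e : d * c = 1) : x - d • y = 0 := by
  rw [h, smul_smul, e]; simp

theorem mod_sub3 {x y u : V} {c d e f : K} (h : y = c • x + e • u) (h1 : d * c = -1)
    (h2 : d * e = f) : x + d • y - f • u = 0 := by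
  rw [h, smul_add, smul_smul, smul_smul, h1, h2]; simp

theorem mod_solve {x y u : V} {c d e f : K} (h : x + d • y - f • u = 0) (h1 : c * d = -1)
    (h2 : e = -(c * f)) : y = c • x + e • u := by
  have hx : x = f • u - d • y := by
    rw [sub_eq_zero] at h
    rw [← h]; simp
  rw [hx, smul_sub, smul_smul, smul_smul, h1, h2]; simp
end mods

/-- The relations of the algebra and the abstract relations are equivalent. -/
theorem rel_iff (m n k l : ℕ) {C : Type} [Ring C] [Algebra Kq C] (z : Idx m n k l → C) :
    (∀ r ∈ relSet m n k l, FreeAlgebra.lift Kq z r = 0) ↔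
      Sat (QP m n k l) Finset.univ (fun p => z (p.row, p.col)) := by
  have hq := qv_ne
  constructor
  · intro H
    constructor
    · intro i _ hE
      have := H _ (Or.inl ⟨i.row, i.col, hE, rfl⟩)
      simpa [zgen] using this
    · rintro ⟨a, c⟩ _ ⟨b, d⟩ _ hij
      rw [GI.lt_iff] at hij
      simp only [QP, PP, QD, Dat.f, Dat.g, Dat.kk]
      rcases hij with hcd | ⟨h, hba⟩
      · simp only at hcd
        rcases lt_trichotomy a b with hab | rfl | hab
        · have := H _ (Or.inr (Or.inr (Or.inr (Or.inl ⟨a, b, c, d, hab, hcd, rfl⟩))))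
          simp only [zgen, map_add, map_mul, map_smul, FreeAlgebra.lift_ι_apply] at this
          have e := eq_neg_of_add_eq_zero_left this
          simp only [hab.ne, hcd.ne, hab.not_gt, if_false, false_and, zero_smul, add_zero]
          rw [e, smul_neg, smul_smul]
          have : -(sgn m a b * sgn k c d) * (sgn m a b * sgn k c d) = -1 := by
            linear_combination (-sgn k c d * sgn k c d) * sgn_sq m a b - sgn_sq k c d
          rw [this]; simp
        · by_cases hm : m ≤ (a : ℕ)
          · have := H _ (Or.inr (Or.inr (Or.inr (Or.inr (Or.inr (Or.inl ⟨a, c, d, hm, hcd, rfl⟩))))))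
            simp only [zgen, map_sub, map_mul, map_smul, FreeAlgebra.lift_ι_apply] at this
            have e := eq_of_sub_eq_zero this
            simp only [hcd.ne, lt_irrefl, if_false, false_and, zero_smul, add_zero, if_true, tt, hm]
            rw [e, smul_smul]
            have : -(-qv⁻¹ * sgn k c d) * (sgn k c d * qv) = 1 := by
              field_simp
              linear_combination sgn_sq k c d
            rw [this]; simp
          · have := H _ (Or.inr (Or.inr (Or.inl ⟨a, c, d, by omega, hcd, rfl⟩)))
            simp only [zgen, map_add, map_mul, map_smul, FreeAlgebra.lift_ι_apply] at this
            have e := eq_neg_of_add_eq_zero_left this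
            simp only [hcd.ne, lt_irrefl, if_false, false_and, zero_smul, add_zero, if_true, tt, hm]
            rw [e, smul_neg, smul_smul]
            have : -(qv * sgn k c d) * (sgn k c d * qv⁻¹) = -1 := by
              field_simp
              linear_combination -sgn_sq k c d
            rw [this]; simp
        · have := H _ (Or.inr (Or.inr (Or.inr (Or.inr (Or.inl ⟨a, b, c, d, hab, hcd, rfl⟩)))))
          have h2 := H _ (Or.inr (Or.inr (Or.inr (Or.inl ⟨b, a, c, d, hab, hcd, rfl⟩))))
          simp only [zgen, map_add, map_sub, map_mul, map_smul, FreeAlgebra.lift_ι_apply] at this h2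
          simp only [hab, hab.ne', hcd, hcd.ne, and_self, if_false, if_true]
          have s1 := sgn_sq m a b
          have s2 := sgn_sq k c d
          refine mod_solve (K := Kq) this ?_ ?_
          · linear_combination (-sgn k c d * sgn k c d) * s1 - s2
          · linear_combination (-sgn k c d * (qv⁻¹ - qv)) * s1
      · simp only at h hba
        subst h
        by_cases hm : k ≤ (c : ℕ)
        · have := H _ (Or.inr (Or.inr (Or.inr (Or.inr (Or.inr (Or.inr ⟨b, a, c, hba, hm, rfl⟩))))))
          simp only [zgen, map_sub, map_mul, map_smul, FreeAlgebra.lift_ι_apply] at this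
          have e := eq_of_sub_eq_zero this
          simp only [hba.ne', lt_irrefl, if_false, and_false, zero_smul, add_zero, if_true, ww, hm]
          rw [e, sgn_comm m a b]
          congr 1; ring
        · have := H _ (Or.inr (Or.inl ⟨b, a, c, hba, by omega, rfl⟩))
          simp only [zgen, map_add, map_mul, map_smul, FreeAlgebra.lift_ι_apply] at this
          have e := eq_neg_of_add_eq_zero_left this
          simp only [hba.ne', lt_irrefl, if_false, and_false, zero_smul, add_zero, if_true, ww, hm]
          rw [e, sgn_comm m a b]
          rw [neg_smul]
    · simp
  · intro H r hr
    have HC : ∀ a c b d, Bef a c b d → _ := fun a c b d h => 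
      H.comm ⟨a, c⟩ (Finset.mem_univ _) ⟨b, d⟩ (Finset.mem_univ _) ((GI.lt_iff _ _).2 h)
    simp only [QP, PP, QD, Dat.f, Dat.g, Dat.kk] at HC
    rcases hr with ⟨a, b, hE, rfl⟩ | ⟨a, b, c, hab, hc, rfl⟩ | ⟨a, c, d, ha, hcd, rfl⟩ |
      ⟨a, b, c, d, hab, hcd, rfl⟩ | ⟨a, b, c, d, hab, hcd, rfl⟩ | ⟨a, c, d, ha, hcd, rfl⟩ |
      ⟨a, b, c, hab, hc, rfl⟩ <;>
    simp only [zgen, map_add, map_sub, map_mul, map_smul, FreeAlgebra.lift_ι_apply]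
    · exact H.sq ⟨a, b⟩ (Finset.mem_univ _) hE
    · have := HC b c a c (Or.inr ⟨rfl, hab⟩)
      simp only [hab.ne', lt_irrefl, if_false, and_false, zero_smul, add_zero, if_true, ww,
        hc.not_ge] at this
      rw [this, sgn_comm m a b, neg_smul, neg_add_cancel]
    · have := HC a c a d (Or.inl hcd)
      simp only [hcd.ne, lt_irrefl, if_false, false_and, zero_smul, add_zero, if_true, tt,
        ha.not_ge] at this
      have s2 := sgn_sq k c d
      refine mod_add (K := Kq) this ?_
      field_simp
      linear_combination -s2
    · have := HC a c b d (Or.inl hcd)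
      simp only [hcd.ne, hab.ne, hab.not_gt, if_false, false_and, zero_smul, add_zero] at this
      have s1 := sgn_sq m a b
      have s2 := sgn_sq k c d
      refine mod_add (K := Kq) this ?_
      linear_combination (-sgn k c d * sgn k c d) * s1 - s2
    · have := HC a c b d (Or.inl hcd)
      simp only [hcd, hcd.ne, hab.ne', hab, if_false, if_true, and_self] at this
      have s1 := sgn_sq m a b
      have s2 := sgn_sq k c d
      refine mod_sub3 (K := Kq) this ?_ ?_
      · linear_combination (-sgn k c d * sgn k c d) * s1 - s2
      · linear_combination sgn m a b * (qv⁻¹ - qv) * s2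
    · have := HC a c a d (Or.inl hcd)
      simp only [hcd.ne, lt_irrefl, if_false, false_and, zero_smul, add_zero, if_true, tt,
        ha] at this
      have s2 := sgn_sq k c d
      refine mod_sub (K := Kq) this ?_
      field_simp
      linear_combination s2
    · have := HC b c a c (Or.inr ⟨rfl, hab⟩)
      simp only [hab.ne', lt_irrefl, if_false, and_false, zero_smul, add_zero, if_true, ww,
        hc] at this
      rw [this, sgn_comm m a b, mul_neg, neg_neg, sub_self]


theorem card_even (m n k l : ℕ) [DecidablePred (QP m n k l).E] :
    (Finset.univ.filter (QP m n k l).E).card = m * k + n * l ∧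
    (Finset.univ.filter (fun i => ¬ (QP m n k l).E i)).card = m * l + n * k := by
  have e1 : ∀ p : Fin (m + n) × Fin (k + l) → Prop, [DecidablePred p] →
      [DecidablePred fun i : GI (Fin (m + n)) (Fin (k + l)) => p (i.row, i.col)] →
      (Finset.univ.filter (fun i : GI (Fin (m + n)) (Fin (k + l)) => p (i.row, i.col))).card =
      ∑ a : Fin (m + n), ∑ b : Fin (k + l), if p (a, b) then 1 else 0 := by
    intro p _ _
    rw [Finset.card_filter, ← Fintype.sum_prod_type' (f := fun a b => if p (a, b) then 1 else 0)]
    exact Fintype.sum_equiv (GI.equiv _ _) _ _ (fun i => by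
      by_cases hp : p (i.row, i.col) <;> simp [GI.equiv, hp])
  have hlt : ∀ (x : ℕ) (y : Fin x), ¬ x ≤ (y : ℕ) := fun x y => by omega
  constructor
  · have := e1 (fun p => m ≤ (p.1 : ℕ) ↔ k ≤ (p.2 : ℕ))
    refine Eq.trans (Eq.trans ?_ this) ?_
    · congr 1
      ext i
      simp [PP, QE0]
    · simp only [Fin.sum_univ_add, Fin.val_castAdd, Fin.val_natAdd]
      simp [hlt]
  · have := e1 (fun p => ¬ (m ≤ (p.1 : ℕ) ↔ k ≤ (p.2 : ℕ)))
    refine Eq.trans (Eq.trans ?_ this) ?_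
    · congr 1
      ext i
      simp [PP, QE0]
    · simp only [Fin.sum_univ_add, Fin.val_castAdd, Fin.val_natAdd]
      simp [hlt]

/-- generators -/
def qz (m n k l : ℕ) (p : Idx m n k l) : QExt m n k l := qmk m n k l (zgen m n k l p)

theorem qz_lift (m n k l : ℕ) : FreeAlgebra.lift Kq (qz m n k l) = qmk m n k l := by
  ext p
  simp [qz, zgen]

theorem qz_sat (m n k l : ℕ) : Sat (QP m n k l) Finset.univ (fun p => qz m n k l (p.row, p.col)) := by
  rw [← rel_iff]
  intro r hr
  have : qmk m n k l r = qmk m n k l 0 := RingQuot.mkAlgHom_rel Kq ⟨hr, rfl⟩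
  rw [map_zero] at this
  rw [← this]
  exact congrArg (fun f => f r) (qz_lift m n k l)

theorem qz_univ (m n k l : ℕ) : ∃ φ : QExt m n k l →ₐ[Kq] BA (QP m n k l) Finset.univ,
    ∀ i : GI (Fin (m + n)) (Fin (k + l)), φ (qz m n k l (i.row, i.col)) = bz (QP m n k l) Finset.univ i := by
  let z : Idx m n k l → BA (QP m n k l) Finset.univ := fun p => bz (QP m n k l) Finset.univ ⟨p.1, p.2⟩
  have h := (rel_iff m n k l z).2 (bz_sat _ _)
  refine ⟨RingQuot.liftAlgHom Kq ⟨FreeAlgebra.lift Kq z, ?_⟩, ?_⟩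
  · rintro x y ⟨hx, rfl⟩
    rw [map_zero]
    exact h x hx
  · intro i
    rw [qz, qmk, RingQuot.liftAlgHom_mkAlgHom_apply, zgen, FreeAlgebra.lift_ι_apply]

theorem qdeg_eq (m n k l N : ℕ) : qdeg m n k l N =
    Tm Kq Finset.univ (fun p : GI (Fin (m + n)) (Fin (k + l)) => qz m n k l (p.row, p.col)) ^ N := by
  rw [Tm, Submodule.span_pow, qdeg]
  congr 1
  ext x
  rw [Set.mem_pow]
  constructor
  · rintro ⟨f, rfl⟩
    exact ⟨fun i => ⟨qz m n k l (f i), ⟨⟨(f i).1, (f i).2⟩, by simp, rfl⟩⟩, rfl⟩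
  · rintro ⟨f, rfl⟩
    choose g hg using fun i => (f i).2
    refine ⟨fun i => ((g i).row, (g i).col), ?_⟩
    unfold qmonomial
    congr 2
    ext1 i
    exact (hg i).2.symm

end QE

/-- Flatness of `ℂ_q^{m|n} ⊗ ℂ_q^{k|l}` (Lemma 4.5 of the paper): the `K`-dimension of
`A_N` is `∑_{j=0}^{N} C(mk+nl, N−j)·C(ml+nk+j−1, j)`, the graded dimension of the
classical exterior superalgebra of `ℂ^{m|n} ⊗ ℂ^{k|l}` (with the `j = 0` term of the
second binomial coefficient equal to `1`, as given by truncated subtraction). -/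
theorem stmt12 (m n k l N : ℕ) (hmn : 1 ≤ m + n) (hkl : 1 ≤ k + l) :
    Module.rank Kq (qdeg m n k l N) =
      ((∑ j ∈ Finset.range (N + 1),
          Nat.choose (m * k + n * l) (N - j) * Nat.choose (m * l + n * k + j - 1) j : ℕ) :
        Cardinal) := by
  classical
  rw [QE.qdeg_eq, QE.rank_eq (QE.QP_good m n k l) (QE.qz_sat m n k l) (QE.qz_univ m n k l)]
  obtain ⟨h1, h2⟩ := QE.card_even m n k l
  exact QE.count _ _ _ _ h1 h2
end
end
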